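/- For every integer r ≥ 2, let 𝓒_3^{2r} denote the 2r-uniform expanded triangle. There exist constants N_0 and c > 0 such that for all integers n ≥ N_0 and all integers t with 0 ≤ t ≤ c·n, one has EX(n,(t+1)𝓒_3^{2r}) ⊆ K_t^{2r} ⋈ { B_{2r}^{odd}(n−t, m) : 0 ≤ m ≤ √(2r(n−t)) }. -/

import Mathlib

open Filter

namespace DensityCH

/-- An `r`-uniform hypergraph with vertices in `ℕ`:
a finite vertex set together with a set of `r`-element edges. -/
structure HGraph (r : ℕ) where
  verts : Finset ℕ
  edges : Finset (Finset ℕ)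
  edges_sub : ∀ e ∈ edges, e ⊆ verts
  edges_card : ∀ e ∈ edges, e.card = r

namespace HGraph

/-- Build an `r`-graph from a vertex set and a set of candidate edges,
keeping exactly the well-formed candidates. -/
def ofEdges (r : ℕ) (V : Finset ℕ) (E : Finset (Finset ℕ)) : HGraph r where
  verts := V
  edges := E.filter fun e => e ⊆ V ∧ e.card = r
  edges_sub := fun e he => ((Finset.mem_filter.mp he).2).1
  edges_card := fun e he => ((Finset.mem_filter.mp he).2).2

variable {r : ℕ}

/-- `H` contains a copy of `F`, i.e. a subgraph isomorphic to `F`. -/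
def IsCopyIn (F H : HGraph r) : Prop :=
  ∃ f : ℕ → ℕ, Set.InjOn f ↑F.verts ∧ (∀ v ∈ F.verts, f v ∈ H.verts) ∧
    ∀ e ∈ F.edges, e.image f ∈ H.edges

/-- The subgraph of `H` induced on `S`. -/
def induce (H : HGraph r) (S : Finset ℕ) : HGraph r :=
  ofEdges r (H.verts ∩ S) (H.edges.filter fun e => e ⊆ S)

/-- Delete a vertex from `H`. -/
def deleteVert (H : HGraph r) (v : ℕ) : HGraph r :=
  ofEdges r (H.verts.erase v) (H.edges.filter fun e => v ∉ e)

/-- The degree of a vertex. -/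
def deg (H : HGraph r) (v : ℕ) : ℕ := (H.edges.filter fun e => v ∈ e).card

/-- The maximum degree `Δ(H)`. -/
def maxDeg (H : HGraph r) : ℕ := H.verts.sup H.deg

/-- The minimum degree `δ(H)`. -/
def minDeg (H : HGraph r) : ℕ :=
  if h : H.verts.Nonempty then H.verts.inf' h H.deg else 0

/-- The average degree `d(H) = r·|E(H)|/|V(H)|`. -/
noncomputable def avgDeg (H : HGraph r) : ℝ :=
  (r : ℝ) * (H.edges.card : ℝ) / (H.verts.card : ℝ)

/-- `H` contains `k` pairwise vertex-disjoint copies of `F`, i.e. `ν(F,H) ≥ k`. -/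
def HasMatching (F H : HGraph r) (k : ℕ) : Prop :=
  ∃ S : Fin k → Finset ℕ,
    (∀ i, S i ⊆ H.verts ∧ (S i).card = F.verts.card) ∧
    (∀ i j, i ≠ j → Disjoint (S i) (S j)) ∧
    ∀ i, F.IsCopyIn (H.induce (S i))

/-- Isomorphism of hypergraphs. -/
def Iso (G H : HGraph r) : Prop :=
  ∃ f : ℕ → ℕ, Set.BijOn f ↑G.verts ↑H.verts ∧
    ∀ e ∈ Finset.powersetCard r G.verts, (e ∈ G.edges ↔ e.image f ∈ H.edges)

/-- The join `G ⋈ H`: all edges of `G`, all edges of `H`, and all `r`-sets meeting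
both vertex sets. -/
def join (G H : HGraph r) : HGraph r :=
  ofEdges r (G.verts ∪ H.verts)
    (G.edges ∪ H.edges ∪ ((Finset.powersetCard r (G.verts ∪ H.verts)).filter
      fun e => (e ∩ G.verts).Nonempty ∧ (e ∩ H.verts).Nonempty))

end HGraph

/-- The complete `r`-graph on a vertex set `S`. -/
def completeOn (r : ℕ) (S : Finset ℕ) : HGraph r :=
  HGraph.ofEdges r S (Finset.powersetCard r S)

/-- The `r`-graph on `V` with no edges. -/
def emptyOn (r : ℕ) (V : Finset ℕ) : HGraph r := HGraph.ofEdges r V ∅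

/-- The Turán number `ex(n,F)`. -/
noncomputable def exN (r n : ℕ) (F : HGraph r) : ℕ :=
  sSup {m | ∃ H : HGraph r, H.verts.card = n ∧ ¬ F.IsCopyIn H ∧ H.edges.card = m}

/-- `d(n,F) = r·ex(n,F)/n`. -/
noncomputable def dN (r n : ℕ) (F : HGraph r) : ℝ := (r : ℝ) * (exN r n F : ℝ) / (n : ℝ)

/-- `δ(n,F) = ex(n,F) − ex(n−1,F)` (as a real number). -/
noncomputable def deltaN (r n : ℕ) (F : HGraph r) : ℝ := (exN r n F : ℝ) - (exN r (n-1) F : ℝ)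

/-- `x` is the Turán density `π(F)`, i.e. the limit of `ex(n,F)/C(n,r)`. -/
def HasTuranDensity (r : ℕ) (F : HGraph r) (x : ℝ) : Prop :=
  Tendsto (fun n : ℕ => (exN r n F : ℝ) / (n.choose r : ℝ)) atTop (nhds x)

/-- `ex(n,(t+1)F)`: the maximum number of edges of an `n`-vertex `r`-graph with no
`t+1` pairwise vertex-disjoint copies of `F`. -/
noncomputable def exMatchN (r n t : ℕ) (F : HGraph r) : ℕ :=
  sSup {m | ∃ H : HGraph r, H.verts.card = n ∧ ¬ F.HasMatching H (t+1) ∧ H.edges.card = m}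

/-- `H ∈ EX(n,F)`. -/
def IsExtremalFree (r n : ℕ) (F H : HGraph r) : Prop :=
  H.verts.card = n ∧ ¬ F.IsCopyIn H ∧ H.edges.card = exN r n F

/-- `H ∈ EX(n,(t+1)F)`. -/
def IsExtremalMatchingFree (r n t : ℕ) (F H : HGraph r) : Prop :=
  H.verts.card = n ∧ ¬ F.HasMatching H (t+1) ∧ H.edges.card = exMatchN r n t F

/-- `F` is `(f1, f2)`-bounded at `n`. -/
def BoundedAt (r n : ℕ) (F : HGraph r) (f1 f2 : ℝ) : Prop :=
  ∀ H : HGraph r, H.verts.card = n → ¬ F.IsCopyIn H →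
    dN r n F - f1 ≤ H.avgDeg → (H.maxDeg : ℝ) ≤ dN r n F + f2

/-- `ex(·,F)` is `g`-smooth at `n`: `|δ(n,F) − d(n−1,F)| ≤ g(n)`. -/
def SmoothAt (r n : ℕ) (F : HGraph r) (g : ℝ) : Prop :=
  |deltaN r n F - dN r (n-1) F| ≤ g

/-- The collection `H 0, …, H t` (on a common vertex set) has a rainbow `F`-matching. -/
def HasRainbowMatching (r t : ℕ) (F : HGraph r) (H : Fin (t+1) → HGraph r) : Prop :=
  ∃ S : Fin (t+1) → Finset ℕ,
    (∀ i, S i ⊆ (H i).verts ∧ (S i).card = F.verts.card) ∧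
    (∀ i j, i ≠ j → Disjoint (S i) (S j)) ∧
    ∀ i, F.IsCopyIn ((H i).induce (S i))

/-!  Patterns -/

/-- An `r`-uniform pattern: a finite index set together with a collection of
`r`-multisets on it. -/
structure Pattern (r : ℕ) where
  idx : Finset ℕ
  mE : Finset (Multiset ℕ)
  card_eq : ∀ s ∈ mE, Multiset.card s = r
  mem_idx : ∀ s ∈ mE, ∀ i ∈ s, i ∈ idx

namespace Pattern

variable {r : ℕ}

/-- The pattern `P − i`. -/
def erase (P : Pattern r) (i : ℕ) : Pattern r where
  idx := P.idx.erase i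
  mE := P.mE.filter fun s => i ∉ s
  card_eq := fun s hs => P.card_eq s (Finset.mem_filter.mp hs).1
  mem_idx := by
    intro s hs j hj
    have h1 := Finset.mem_filter.mp hs
    refine Finset.mem_erase.mpr ⟨?_, P.mem_idx s h1.1 j hj⟩
    rintro rfl
    exact h1.2 hj

/-- `H` is a `P`-construction: a blowup of the pattern `P`. -/
def IsConstruction (P : Pattern r) (H : HGraph r) : Prop :=
  ∃ part : ℕ → ℕ, (∀ v ∈ H.verts, part v ∈ P.idx) ∧
    ∀ e : Finset ℕ, e ∈ H.edges ↔ (e ⊆ H.verts ∧ e.card = r ∧ Multiset.map part e.val ∈ P.mE)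

/-- `H` is a `P`-subconstruction: a subgraph of a `P`-construction. -/
def IsSubconstruction (P : Pattern r) (H : HGraph r) : Prop :=
  ∃ G : HGraph r, P.IsConstruction G ∧ H.verts ⊆ G.verts ∧ H.edges ⊆ G.edges

end Pattern

/-- `Λ(P,n)`: the maximum number of edges of an `n`-vertex `P`-construction. -/
noncomputable def patEx (r : ℕ) (P : Pattern r) (n : ℕ) : ℕ :=
  sSup {m | ∃ H : HGraph r, P.IsConstruction H ∧ H.verts.card = n ∧ H.edges.card = m}

/-- The Lagrangian `λ(P) = lim Λ(P,n)/C(n,r)`. -/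
noncomputable def patLagrangian (r : ℕ) (P : Pattern r) : ℝ :=
  limUnder atTop fun n : ℕ => (patEx r P n : ℝ) / (n.choose r : ℝ)

/-- The pattern `P` is minimal: `λ(P−i) < λ(P)` for all `i`. -/
def Pattern.Minimal {r : ℕ} (P : Pattern r) : Prop :=
  ∀ i ∈ P.idx, patLagrangian r (P.erase i) < patLagrangian r P

/-- `(F,P)` is a Turán pair. -/
def IsTuranPair (r : ℕ) (F : HGraph r) (P : Pattern r) : Prop :=
  (∀ H : HGraph r, P.IsConstruction H → ¬ F.IsCopyIn H) ∧
  (∀ H : HGraph r, ¬ F.IsCopyIn H → H.edges.card = exN r H.verts.card F →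
    P.IsConstruction H)

/-- `F` is edge-stable with respect to `P` (with Turán density `π`). -/
def EdgeStable (r : ℕ) (F : HGraph r) (P : Pattern r) (π : ℝ) : Prop :=
  ∀ δ : ℝ, 0 < δ → ∃ N₀ : ℕ, ∃ ζ : ℝ, 0 < ζ ∧
    ∀ H : HGraph r, N₀ ≤ H.verts.card → ¬ F.IsCopyIn H →
      (π - ζ) * (H.verts.card.choose r : ℝ) ≤ (H.edges.card : ℝ) →
      ∃ H' : HGraph r, H'.verts ⊆ H.verts ∧ H'.edges ⊆ H.edges ∧
        (π - δ) * (H.verts.card.choose r : ℝ) ≤ (H'.edges.card : ℝ) ∧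
        P.IsSubconstruction H'

/-- `F` is weakly vertex-extendable with respect to `P` (with Turán density `π`). -/
def WeaklyVertexExtendable (r : ℕ) (F : HGraph r) (P : Pattern r) (π : ℝ) : Prop :=
  ∀ δ : ℝ, 0 < δ → ∃ N₀ : ℕ, ∃ ζ : ℝ, 0 < ζ ∧
    ∀ H : HGraph r, N₀ ≤ H.verts.card → ¬ F.IsCopyIn H →
      (π - ζ) * (((H.verts.card - 1).choose (r-1) : ℕ) : ℝ) ≤ (H.minDeg : ℝ) →
      ∀ v ∈ H.verts, P.IsSubconstruction (H.deleteVert v) →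
        (H.deg v : ℝ) ≤ (π + δ) * (((H.verts.card - 1).choose (r-1) : ℕ) : ℝ)

/-- `F` is degree-stable with respect to `P` (with Turán density `π`). -/
def DegreeStable (r : ℕ) (F : HGraph r) (P : Pattern r) (π : ℝ) : Prop :=
  ∃ ζ : ℝ, 0 < ζ ∧ ∃ N₀ : ℕ,
    ∀ H : HGraph r, N₀ ≤ H.verts.card → ¬ F.IsCopyIn H →
      (π - ζ) * (((H.verts.card - 1).choose (r-1) : ℕ) : ℝ) ≤ (H.minDeg : ℝ) →
      P.IsSubconstruction H

/-!  Concrete constructions -/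

/-- The generalized Turán graph `T_r(·,ℓ)` on vertex set `V` (parts are residue
classes mod `ℓ`; on an interval these are balanced). -/
def turanOn (r ℓ : ℕ) (V : Finset ℕ) : HGraph r :=
  HGraph.ofEdges r V ((Finset.powersetCard r V).filter
    fun e => ∀ u ∈ e, ∀ v ∈ e, u % ℓ = v % ℓ → u = v)

/-- The `r`-graph on `V₁ ∪ V₂` whose edges are all `r`-sets meeting both parts. -/
def crossOn (r : ℕ) (V₁ V₂ : Finset ℕ) : HGraph r :=
  HGraph.ofEdges r (V₁ ∪ V₂) ((Finset.powersetCard r (V₁ ∪ V₂)).filter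
    fun e => (e ∩ V₁).Nonempty ∧ (e ∩ V₂).Nonempty)

/-- The `r`-graph on `V₁ ∪ V₂` whose edges are all `r`-sets meeting `V₁` in an odd
number of vertices. -/
def oddCross (r : ℕ) (V₁ V₂ : Finset ℕ) : HGraph r :=
  HGraph.ofEdges r (V₁ ∪ V₂) ((Finset.powersetCard r (V₁ ∪ V₂)).filter
    fun e => Odd (e ∩ V₁).card)

/-- The Fano plane. -/
def fano : HGraph 3 :=
  HGraph.ofEdges 3 (Finset.Icc 1 7)
    {({1,2,3} : Finset ℕ), {3,4,5}, {5,6,1}, {1,7,4}, {2,7,5}, {3,7,6}, {2,4,6}}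

/-- The generalized triangle `𝕋_r`, with edges `{1,…,r}`, `{1,…,r−1,r+1}` and
`{r,…,2r−1}`. -/
def genTri (r : ℕ) : HGraph r :=
  HGraph.ofEdges r (Finset.Icc 1 (2*r - 1))
    {Finset.Icc 1 r, Finset.Icc 1 (r-1) ∪ {r+1}, Finset.Icc r (2*r - 1)}

/-- `G` is a blowup of the `r`-graph `W` (viewing `W` as a pattern). -/
def IsBlowupOf {r : ℕ} (W G : HGraph r) : Prop :=
  ∃ part : ℕ → ℕ, (∀ v ∈ G.verts, part v ∈ W.verts) ∧
    ∀ e : Finset ℕ, e ∈ G.edges ↔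
      (e ⊆ G.verts ∧ e.card = r ∧ ∃ f ∈ W.edges, Multiset.map part e.val = f.val)

/-- The expansion `H^F` of an `r`-graph `F`: for every pair of vertices not covered
by an edge of `F`, add an edge consisting of this pair plus `r−2` new vertices,
these sets of new vertices being pairwise disjoint. -/
def HGraph.expansion {r : ℕ} (F : HGraph r) : HGraph r :=
  HGraph.ofEdges r
    (F.verts ∪ (((F.verts ×ˢ F.verts).filter fun p =>
        p.1 < p.2 ∧ ∀ e ∈ F.edges, ¬ (p.1 ∈ e ∧ p.2 ∈ e)).biUnion fun p =>
      (Finset.range (r-2)).image fun s =>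
        (F.verts.sup id + 1) + (p.1 * (F.verts.sup id + 1) + p.2) * r + s))
    (F.edges ∪ (((F.verts ×ˢ F.verts).filter fun p =>
        p.1 < p.2 ∧ ∀ e ∈ F.edges, ¬ (p.1 ∈ e ∧ p.2 ∈ e)).image fun p =>
      insert p.1 (insert p.2 ((Finset.range (r-2)).image fun s =>
        (F.verts.sup id + 1) + (p.1 * (F.verts.sup id + 1) + p.2) * r + s))))

/-- A `2`-graph is a tree on `k` vertices: `k` vertices, `k−1` edges, connected. -/
def IsTreeGraph (k : ℕ) (T : HGraph 2) : Prop :=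
  T.verts.card = k ∧ T.edges.card = k - 1 ∧
  ∀ S : Finset ℕ, S ⊆ T.verts → S.Nonempty → S ≠ T.verts →
    ∃ e ∈ T.edges, (e ∩ S).Nonempty ∧ (e \ S).Nonempty

/-- `T` satisfies the Erdős–Sós property for `k`: every graph with average degree
greater than `k−2` contains `T`. -/
def ErdosSos (k : ℕ) (T : HGraph 2) : Prop :=
  ∀ G : HGraph 2, ((k : ℝ) - 2) * (G.verts.card : ℝ) < 2 * (G.edges.card : ℝ) →
    T.IsCopyIn G

/-- The `(r−2)`-expansion `Exp(T)` of a `2`-graph `T`: enlarge every edge by one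
common fixed set of `r−2` new vertices. -/
def expTree (r : ℕ) (T : HGraph 2) : HGraph r :=
  HGraph.ofEdges r
    (T.verts ∪ ((Finset.range (r-2)).image fun s => T.verts.sup id + 1 + s))
    (T.edges.image fun e =>
      e ∪ ((Finset.range (r-2)).image fun s => T.verts.sup id + 1 + s))

/-- The chromatic number of a `2`-graph. -/
noncomputable def chrom (F : HGraph 2) : ℕ :=
  sInf {k | ∃ c : ℕ → ℕ, (∀ v ∈ F.verts, c v < k) ∧
    ∀ e ∈ F.edges, ∀ u ∈ e, ∀ v ∈ e, u ≠ v → c u ≠ c v}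

/-- A graph is edge-critical if deleting some edge lowers its chromatic number. -/
def EdgeCritical (F : HGraph 2) : Prop :=
  ∃ e ∈ F.edges, chrom (HGraph.ofEdges 2 F.verts (F.edges.erase e)) < chrom F

/-- `H` is semibipartite: the vertex set splits into `V₁ ∪ V₂` so that every edge
has exactly one vertex in `V₁`. -/
def Semibipartite (r : ℕ) (H : HGraph r) : Prop :=
  ∃ V₁ ⊆ H.verts, ∀ e ∈ H.edges, (e ∩ V₁).card = 1

/-- `H` is a `K_ℓ^r`-subconstruction, i.e. an `ℓ`-partite `r`-graph. -/
def IsKlSub (r ℓ : ℕ) (H : HGraph r) : Prop :=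
  ∃ f : ℕ → ℕ, (∀ v ∈ H.verts, f v < ℓ) ∧
    ∀ e ∈ H.edges, ∀ u ∈ e, ∀ v ∈ e, f u = f v → u = v

/-- The Lagrangian `λ(W)` of an `r`-graph `W`, viewing `W` as a pattern. -/
noncomputable def hgLagrangian (r : ℕ) (W : HGraph r) : ℝ :=
  limUnder atTop fun n : ℕ =>
    ((sSup {m | ∃ G : HGraph r, IsBlowupOf W G ∧ G.verts.card = n ∧ G.edges.card = m} : ℕ) : ℝ)
      / (n.choose r : ℝ)

/-- The `r`-graph `B(r,ℓ+1)`. -/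
def BGraph (r ℓ : ℕ) : HGraph r :=
  HGraph.ofEdges r (Finset.Icc 1 (ℓ+1))
    (insert (Finset.Icc 1 r)
      ((Finset.powersetCard r (Finset.Icc 2 (ℓ+1))).filter
        fun e => (e ∩ Finset.Icc 2 r).card ≤ 1))

/-- The `r`-uniform matching of size two, `M_2^r`. -/
def matching2 (r : ℕ) : HGraph r :=
  HGraph.ofEdges r (Finset.Icc 1 (2*r)) {Finset.Icc 1 r, Finset.Icc (r+1) (2*r)}

/-- The expanded triangle `𝓒_3^{2r}`. -/
def expandedTriangle (r : ℕ) : HGraph (2*r) :=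
  HGraph.ofEdges (2*r) (Finset.Icc 1 (3*r))
    {Finset.Icc 1 (2*r), Finset.Icc (r+1) (3*r), Finset.Icc 1 r ∪ Finset.Icc (2*r+1) (3*r)}

/-- The `4`-graph `𝔽_{4,3}`. -/
def F43 : HGraph 4 :=
  HGraph.ofEdges 4 (Finset.Icc 1 7)
    {({1,2,3,4} : Finset ℕ), {1,2,3,5}, {1,2,3,6}, {1,2,3,7}, {4,5,6,7}}

/-- The `3`-graph `𝔽_{3,2}`. -/
def F32 : HGraph 3 :=
  HGraph.ofEdges 3 (Finset.Icc 1 5)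
    {({1,2,3} : Finset ℕ), {1,2,4}, {1,2,5}, {3,4,5}}

/-- `H` contains pairwise vertex-disjoint copies of `F i`, `ts i` many of each. -/
def HasMixedMatching (r k : ℕ) (F : Fin k → HGraph r) (ts : Fin k → ℕ)
    (H : HGraph r) : Prop :=
  ∃ S : (i : Fin k) → Fin (ts i) → Finset ℕ,
    (∀ i j, S i j ⊆ H.verts ∧ (S i j).card = (F i).verts.card) ∧
    (∀ p q : Σ i : Fin k, Fin (ts i), p ≠ q → Disjoint (S p.1 p.2) (S q.1 q.2)) ∧
    ∀ i j, (F i).IsCopyIn (H.induce (S i j))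

/-- `ex(n, ⊔ᵢ tᵢ Fᵢ)`. -/
noncomputable def exMixedN (r k : ℕ) (F : Fin k → HGraph r) (ts : Fin k → ℕ)
    (n : ℕ) : ℕ :=
  sSup {m | ∃ H : HGraph r, H.verts.card = n ∧ ¬ HasMixedMatching r k F ts H ∧
    H.edges.card = m}

/-- `ex(n, {F₁,…,F_k})`. -/
noncomputable def exFamN (r k : ℕ) (F : Fin k → HGraph r) (n : ℕ) : ℕ :=
  sSup {m | ∃ H : HGraph r, H.verts.card = n ∧ (∀ i, ¬ (F i).IsCopyIn H) ∧
    H.edges.card = m}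


section

open Finset
open scoped Classical

/-! Averages over tuples -/

/-- All tuples with entries in `V`. -/
noncomputable def tup (V : Finset ℕ) (ι : Type) [Fintype ι] : Finset (ι → ℕ) :=
  Fintype.piFinset fun _ => V

/-- Average over tuples. -/
noncomputable def ex (V : Finset ℕ) {ι : Type} [Fintype ι] (F : (ι → ℕ) → ℝ) : ℝ :=
  (∑ x ∈ tup V ι, F x) / (V.card : ℝ) ^ (Fintype.card ι)

/-- Density of a property of tuples. -/
noncomputable def pr (V : Finset ℕ) {ι : Type} [Fintype ι] (P : (ι → ℕ) → Prop) : ℝ :=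
  ex V (fun x => if P x then (1 : ℝ) else 0)

/-- Range of a tuple. -/
def im {ι : Type} [Fintype ι] (x : ι → ℕ) : Finset ℕ := Finset.univ.image x

section
variable {V : Finset ℕ} {ι κ : Type} [Fintype ι] [Fintype κ]

lemma mem_tup {x : ι → ℕ} : x ∈ tup V ι ↔ ∀ i, x i ∈ V := by
  simp [tup]

lemma card_tup : ((tup V ι).card : ℝ) = (V.card : ℝ) ^ (Fintype.card ι) := by
  simp [tup]

lemma ex_add (F G : (ι → ℕ) → ℝ) : ex V (fun x => F x + G x) = ex V F + ex V G := by
  simp [ex, Finset.sum_add_distrib, add_div]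

lemma ex_sub (F G : (ι → ℕ) → ℝ) : ex V (fun x => F x - G x) = ex V F - ex V G := by
  simp [ex, Finset.sum_sub_distrib, sub_div]

lemma ex_mul_left (c : ℝ) (F : (ι → ℕ) → ℝ) : ex V (fun x => c * F x) = c * ex V F := by
  simp [ex, ← Finset.mul_sum, mul_div_assoc]

lemma ex_mul_right (c : ℝ) (F : (ι → ℕ) → ℝ) : ex V (fun x => F x * c) = ex V F * c := by
  simp_rw [mul_comm _ c]; exact ex_mul_left c F

lemma ex_mono {F G : (ι → ℕ) → ℝ} (h : ∀ x ∈ tup V ι, F x ≤ G x) : ex V F ≤ ex V G := by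
  unfold ex
  gcongr with x hx
  exact h x hx

lemma ex_congr {F G : (ι → ℕ) → ℝ} (h : ∀ x ∈ tup V ι, F x = G x) : ex V F = ex V G := by
  unfold ex
  rw [Finset.sum_congr rfl h]

lemma ex_const (hV : V.Nonempty) (c : ℝ) : ex V (fun _ : ι → ℕ => c) = c := by
  have : (V.card : ℝ) ≠ 0 := by exact_mod_cast hV.card_pos.ne'
  unfold ex
  rw [Finset.sum_const, nsmul_eq_mul, card_tup]
  field_simp

lemma ex_nonneg {F : (ι → ℕ) → ℝ} (h : ∀ x ∈ tup V ι, 0 ≤ F x) : 0 ≤ ex V F := by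
  unfold ex
  exact div_nonneg (Finset.sum_nonneg h) (by positivity)

lemma ex_sum (F : (ι ⊕ κ → ℕ) → ℝ) :
    ex V F = ex V (fun a : ι → ℕ => ex V (fun b : κ → ℕ => F (Sum.elim a b))) := by
  unfold ex
  rw [← Finset.sum_div, div_div, Fintype.card_sum, pow_add, mul_comm ((V.card : ℝ) ^ _),
    ← Finset.sum_product']
  congr 1
  refine Finset.sum_bij' (fun x _ => (x ∘ Sum.inl, x ∘ Sum.inr)) (fun p _ => Sum.elim p.1 p.2)
    ?_ ?_ ?_ ?_ ?_
  · intro x hx; simp [mem_tup] at hx ⊢; tauto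
  · rintro ⟨a, b⟩ hx; simp [mem_tup] at hx ⊢; tauto
  · intro x hx; simp
  · rintro ⟨a, b⟩ hx; simp
  · intro x hx; simp

lemma ex_equiv (e : κ ≃ ι) (F : (κ → ℕ) → ℝ) : ex V (fun x : ι → ℕ => F (x ∘ e)) = ex V F := by
  unfold ex
  rw [Fintype.card_congr e]
  congr 1
  refine Finset.sum_bij' (fun x _ => x ∘ e) (fun y _ => y ∘ e.symm) ?_ ?_ ?_ ?_ ?_
  · intro x hx; simp [mem_tup] at hx ⊢; intro i; apply hx
  · intro x hx; simp [mem_tup] at hx ⊢; intro i; apply hx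
  · intro x hx; ext; simp
  · intro x hx; ext; simp
  · intro x hx; rfl

lemma ex_comp (hV : V.Nonempty) (j : κ → ι) (hj : Function.Injective j) (F : (κ → ℕ) → ℝ) :
    ex V (fun x : ι → ℕ => F (x ∘ j)) = ex V F := by
  let e1 : κ ⊕ {i // i ∉ Set.range j} ≃ ι :=
    (Equiv.sumCongr (Equiv.ofInjective j hj) (Equiv.refl _)).trans (Equiv.Set.sumCompl (Set.range j))
  rw [← ex_equiv e1.symm, ex_sum]
  apply ex_congr
  intro a ha
  rw [ex_congr (G := fun _ => F a), ex_const hV]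
  intro b hb
  congr 1
  ext i
  have : e1.symm (j i) = Sum.inl i := by
    rw [Equiv.symm_apply_eq]; simp only [e1, Equiv.trans_apply, Equiv.sumCongr_apply, Sum.map_inl]
    exact (Equiv.Set.sumCompl_apply_inl (Set.range j) ⟨j i, i, rfl⟩).symm
  simp [this]

lemma exists_le_of_ex_le (hV : V.Nonempty) {F : (ι → ℕ) → ℝ} {c : ℝ} (h : ex V F ≤ c) :
    ∃ x ∈ tup V ι, F x ≤ c := by
  by_contra hcon
  push Not at hcon
  have hne : (tup V ι).Nonempty := by
    obtain ⟨v, hv⟩ := hV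
    exact ⟨fun _ => v, by simp [mem_tup, hv]⟩
  have hpos : (0 : ℝ) < (V.card : ℝ) ^ (Fintype.card ι) := by
    have : (0 : ℝ) < V.card := by exact_mod_cast hV.card_pos
    positivity
  unfold ex at h
  rw [div_le_iff₀ hpos, ← card_tup] at h
  have := Finset.sum_lt_sum_of_nonempty hne hcon
  rw [Finset.sum_const, nsmul_eq_mul, mul_comm] at this
  linarith

lemma pr_eq (P : (ι → ℕ) → Prop) :
    pr V P = (((tup V ι).filter P).card : ℝ) / (V.card : ℝ) ^ (Fintype.card ι) := by
  unfold pr ex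
  congr 1
  simp [Finset.sum_boole]

lemma card_eq_pr (hV : V.Nonempty) (P : (ι → ℕ) → Prop) :
    (((tup V ι).filter P).card : ℝ) = pr V P * (V.card : ℝ) ^ (Fintype.card ι) := by
  have : (V.card : ℝ) ≠ 0 := by exact_mod_cast hV.card_pos.ne'
  rw [pr_eq]; field_simp

lemma pr_nonneg (P : (ι → ℕ) → Prop) : 0 ≤ pr V P :=
  ex_nonneg (by intro x _; positivity)

lemma pr_mono {P Q : (ι → ℕ) → Prop} (h : ∀ x ∈ tup V ι, P x → Q x) : pr V P ≤ pr V Q := by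
  apply ex_mono
  intro x hx
  have := h x hx
  split_ifs <;> simp_all

lemma pr_congr {P Q : (ι → ℕ) → Prop} (h : ∀ x ∈ tup V ι, P x ↔ Q x) : pr V P = pr V Q :=
  le_antisymm (pr_mono fun x hx => (h x hx).1) (pr_mono fun x hx => (h x hx).2)

lemma pr_le_one (hV : V.Nonempty) (P : (ι → ℕ) → Prop) : pr V P ≤ 1 := by
  rw [← ex_const (ι := ι) hV 1]
  apply ex_mono
  intro x hx
  split_ifs <;> norm_num

lemma pr_or_le (P Q : (ι → ℕ) → Prop) : pr V (fun x => P x ∨ Q x) ≤ pr V P + pr V Q := by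
  unfold pr
  rw [← ex_add]
  apply ex_mono
  intro x hx
  by_cases h1 : P x <;> by_cases h2 : Q x <;> simp [h1, h2]

lemma pr_le_add {R P Q : (ι → ℕ) → Prop} (h : ∀ x ∈ tup V ι, R x → P x ∨ Q x) :
    pr V R ≤ pr V P + pr V Q :=
  (pr_mono h).trans (pr_or_le P Q)

lemma pr_not (hV : V.Nonempty) (P : (ι → ℕ) → Prop) : pr V (fun x => ¬ P x) = 1 - pr V P := by
  have h : pr V (fun x => ¬ P x) = ex V (fun _ : ι → ℕ => (1 : ℝ)) - pr V P := by
    unfold pr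
    rw [← ex_sub]
    apply ex_congr
    intro x hx
    by_cases h1 : P x <;> simp [h1]
  rw [h, ex_const hV]

lemma pr_exists_le {J : Type} (s : Finset J) (P : J → (ι → ℕ) → Prop) :
    pr V (fun x => ∃ j ∈ s, P j x) ≤ ∑ j ∈ s, pr V (P j) := by
  induction s using Finset.induction_on with
  | empty => simp [pr, ex]
  | insert a s ha ih =>
    rw [Finset.sum_insert ha]
    refine (pr_le_add (P := P a) (Q := fun x => ∃ j ∈ s, P j x) ?_).trans (by linarith)
    intro x _ h
    simpa using h

lemma pr_comp (hV : V.Nonempty) (j : κ → ι) (hj : Function.Injective j) (P : (κ → ℕ) → Prop) :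
    pr V (fun x : ι → ℕ => P (x ∘ j)) = pr V P :=
  ex_comp hV j hj (fun x => if P x then 1 else 0)

lemma pr_sum (P : (ι ⊕ κ → ℕ) → Prop) :
    pr V P = ex V (fun a : ι → ℕ => pr V (fun b : κ → ℕ => P (Sum.elim a b))) := by
  unfold pr; rw [ex_sum]

lemma pr_swap (hV : V.Nonempty) (P : (ι ⊕ κ → ℕ) → Prop) :
    pr V P = ex V (fun b : κ → ℕ => pr V (fun a : ι → ℕ => P (Sum.elim a b))) := by
  rw [← pr_comp hV (Sum.swap) (Equiv.sumComm ι κ).injective P, pr_sum]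
  apply ex_congr; intro a ha; apply pr_congr; intro b hb
  have : (Sum.elim a b ∘ Sum.swap) = Sum.elim b a := by ext x; cases x <;> rfl
  rw [this]

lemma pr_mem (hV : V.Nonempty) (i : ι) (W : Finset ℕ) :
    pr V (fun x : ι → ℕ => x i ∈ W) ≤ W.card / V.card := by
  have h := pr_comp hV (fun _ : Unit => i) (fun _ _ _ => rfl) (fun y : Unit → ℕ => y () ∈ W)
  simp only [Function.comp] at h
  rw [h, pr_eq]
  simp only [Fintype.card_unit, pow_one]
  gcongr
  refine Finset.card_le_card_of_injOn (fun y => y ()) ?_ ?_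
  · intro y hy; simp at hy; exact hy.2
  · intro y _ z _ h; ext u; exact h

lemma pr_exists_mem (hV : V.Nonempty) (W : Finset ℕ) :
    pr V (fun x : ι → ℕ => ∃ i, x i ∈ W) ≤ Fintype.card ι * (W.card / V.card) := by
  have := pr_exists_le (V := V) (Finset.univ : Finset ι) (fun i (x : ι → ℕ) => x i ∈ W)
  simp only [Finset.mem_univ, true_and] at this
  refine this.trans ?_
  refine (Finset.sum_le_sum (fun i _ => pr_mem hV i W)).trans ?_
  simp

lemma pr_eq_coord (hV : V.Nonempty) {i i' : ι} (h : i ≠ i') :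
    pr V (fun x : ι → ℕ => x i = x i') ≤ 1 / V.card := by
  have hj : Function.Injective (Sum.elim (fun _ : Unit => i) (fun _ : Unit => i')) := by
    rintro (a | a) (b | b) <;> simp [h, h.symm]
  have h := pr_comp hV _ hj (fun y : Unit ⊕ Unit → ℕ => y (Sum.inl ()) = y (Sum.inr ()))
  simp only [Function.comp, Sum.elim_inl, Sum.elim_inr] at h
  rw [h, pr_sum]
  refine (ex_mono (G := fun _ => 1 / (V.card : ℝ)) ?_).trans (ex_const hV _).le
  intro a ha
  have := pr_mem hV () ({a ()} : Finset ℕ)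
  simpa [eq_comm] using this

lemma pr_not_inj (hV : V.Nonempty) :
    pr V (fun x : ι → ℕ => ¬ Function.Injective x) ≤ (Fintype.card ι : ℝ) ^ 2 / V.card := by
  have := pr_exists_le (V := V) ((Finset.univ : Finset (ι × ι)).filter fun p => p.1 ≠ p.2)
    (fun p (x : ι → ℕ) => x p.1 = x p.2)
  refine (pr_mono ?_).trans (this.trans ?_)
  · intro x _ h
    simp only [Function.Injective] at h
    push Not at h
    obtain ⟨a, b, h1, h2⟩ := h
    exact ⟨(a, b), by simp [h2], h1⟩
  · refine (Finset.sum_le_sum (g := fun _ => 1 / (V.card : ℝ)) ?_).trans ?_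
    · intro p hp
      exact pr_eq_coord hV (by simpa using hp)
    · rw [Finset.sum_const, nsmul_eq_mul]
      have h1 : ((Finset.univ : Finset (ι × ι)).filter fun p => p.1 ≠ p.2).card ≤
          Fintype.card ι ^ 2 := by
        refine (Finset.card_filter_le _ _).trans ?_
        rw [Finset.card_univ, Fintype.card_prod, sq]
      have h2 : (((Finset.univ : Finset (ι × ι)).filter fun p => p.1 ≠ p.2).card : ℝ) ≤
          (Fintype.card ι : ℝ) ^ 2 := by exact_mod_cast h1
      rw [mul_one_div]
      gcongr

/-! Ranges of tuples and set systems -/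

lemma mem_im {x : ι → ℕ} {a : ℕ} : a ∈ im x ↔ ∃ i, x i = a := by simp [im]

lemma im_subset {x : ι → ℕ} : im x ⊆ V ↔ x ∈ tup V ι := by
  simp [mem_tup, im, Finset.subset_iff]

lemma card_im_le (x : ι → ℕ) : (im x).card ≤ Fintype.card ι := by
  unfold im
  exact Finset.card_image_le

lemma inj_of_card_im {x : ι → ℕ} (h : Fintype.card ι ≤ (im x).card) : Function.Injective x := by
  have : (im x).card = (Finset.univ : Finset ι).card := le_antisymm (card_im_le x) h
  unfold im at this
  rw [Finset.card_image_iff] at this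
  simpa [Set.injOn_univ] using this

lemma card_im {x : ι → ℕ} (h : Function.Injective x) : (im x).card = Fintype.card ι := by
  unfold im
  rw [Finset.card_image_of_injective _ h, Finset.card_univ]

lemma im_elim (a : ι → ℕ) (b : κ → ℕ) : im (Sum.elim a b) = im a ∪ im b := by
  ext; simp [mem_im]

lemma im_equiv (e : κ ≃ ι) (x : ι → ℕ) : im (x ∘ e) = im x := by
  ext a; simp only [mem_im, Function.comp]
  exact ⟨fun ⟨i, h⟩ => ⟨e i, h⟩, fun ⟨i, h⟩ => ⟨e.symm i, by simpa using h⟩⟩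

lemma card_im_eq (e : Finset ℕ) (he : e.card = Fintype.card ι) (hV : e ⊆ V) :
    ((tup V ι).filter fun x => im x = e).card = (Fintype.card ι).factorial := by
  have h1 : Fintype.card ι = Fintype.card e := by simp [he]
  have e0 : ι ≃ e := Fintype.equivOfCardEq h1
  rw [← Fintype.card_equiv e0, ← Finset.card_univ]
  symm
  refine Finset.card_bij (fun f _ => fun i => (f i : ℕ)) ?_ ?_ ?_
  · intro f _
    simp only [Finset.mem_filter]
    have : im (fun i => (f i : ℕ)) = e := by
      ext a; simp only [mem_im]
      exact ⟨fun ⟨i, h⟩ => h ▸ (f i).2, fun h => ⟨f.symm ⟨a, h⟩, by simp⟩⟩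
    exact ⟨im_subset.1 (by rw [this]; exact hV), this⟩
  · intro f _ g _ h
    ext i
    exact congrFun h i
  · intro x hx
    simp only [Finset.mem_filter] at hx
    have hinj : Function.Injective x := inj_of_card_im (by rw [hx.2, he])
    have hm : ∀ i, x i ∈ e := fun i => hx.2 ▸ mem_im.2 ⟨i, rfl⟩
    refine ⟨Equiv.ofBijective (fun i => ⟨x i, hm i⟩) ⟨?_, ?_⟩, by simp, rfl⟩
    · intro i j h; exact hinj (by simpa using h)
    · rintro ⟨a, ha⟩
      rw [← hx.2, mem_im] at ha
      obtain ⟨i, hi⟩ := ha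
      exact ⟨i, by simp [hi]⟩

/-- Passing between tuples and sets. -/
lemma card_im_mem (E : Finset (Finset ℕ)) (hE : ∀ e ∈ E, e ⊆ V ∧ e.card = Fintype.card ι) :
    ((tup V ι).filter fun x => im x ∈ E).card = (Fintype.card ι).factorial * E.card := by
  rw [Finset.card_eq_sum_card_fiberwise (f := im) (t := E)]
  · rw [Finset.sum_congr rfl (g := fun _ => (Fintype.card ι).factorial)]
    · rw [Finset.sum_const, smul_eq_mul, mul_comm]
    · intro e he
      rw [← card_im_eq (ι := ι) e (hE e he).2 (hE e he).1]
      congr 1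
      ext x
      simp only [Finset.mem_filter]
      constructor
      · rintro ⟨⟨h1, h2⟩, h3⟩; exact ⟨h1, h3⟩
      · rintro ⟨h1, h3⟩; exact ⟨⟨h1, h3 ▸ he⟩, h3⟩
  · intro x hx
    simpa using (Finset.mem_filter.1 hx).2

lemma pr_im_mem (hV : V.Nonempty) (E : Finset (Finset ℕ))
    (hE : ∀ e ∈ E, e ⊆ V ∧ e.card = Fintype.card ι) :
    pr V (fun x : ι → ℕ => im x ∈ E) * (V.card : ℝ) ^ (Fintype.card ι) =
      (Fintype.card ι).factorial * E.card := by
  rw [← card_eq_pr hV]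
  have h := card_im_mem (V := V) (ι := ι) E hE
  have h2 : (((tup V ι).filter fun x => im x ∈ E).card : ℝ) =
      (Fintype.card ι).factorial * E.card := by exact_mod_cast h
  rw [← h2]
  congr!

end

end

section

open Finset
open scoped Classical

/-- A copy of the expanded triangle with vertex set `T`. -/
def Tri (r : ℕ) (E : Finset (Finset ℕ)) (T : Finset ℕ) : Prop :=
  ∃ A B C : Finset ℕ, A.card = r ∧ B.card = r ∧ C.card = r ∧ Disjoint A B ∧ Disjoint B C ∧
    Disjoint A C ∧ A ∪ B ∈ E ∧ B ∪ C ∈ E ∧ A ∪ C ∈ E ∧ T = A ∪ B ∪ C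

/-- Indicator of `E` with values in `ZMod 2`. -/
noncomputable def ind (E : Finset (Finset ℕ)) (e : Finset ℕ) : ZMod 2 := if e ∈ E then 1 else 0

section
variable {V : Finset ℕ} {ι κ : Type} [Fintype ι] [Fintype κ]

lemma edge_split {r : ℕ} {E : Finset (Finset ℕ)} (hE : ∀ e ∈ E, e.card = 2 * r)
    {A B : Finset ℕ} (hA : A.card ≤ r) (hB : B.card ≤ r) (h : A ∪ B ∈ E) :
    A.card = r ∧ B.card = r ∧ Disjoint A B := by
  have h1 := hE _ h
  have h2 := Finset.card_union_add_card_inter A B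
  refine ⟨by omega, by omega, ?_⟩
  rw [Finset.disjoint_iff_inter_eq_empty, ← Finset.card_eq_zero]
  omega

lemma tri_of {r : ℕ} {E : Finset (Finset ℕ)} (hE : ∀ e ∈ E, e.card = 2 * r)
    {A B C : Finset ℕ} (hA : A.card ≤ r) (hB : B.card ≤ r) (hC : C.card ≤ r)
    (hab : A ∪ B ∈ E) (hbc : B ∪ C ∈ E) (hac : A ∪ C ∈ E) : Tri r E (A ∪ B ∪ C) := by
  obtain ⟨h1, h2, h3⟩ := edge_split hE hA hB hab
  obtain ⟨h4, h5, h6⟩ := edge_split hE hB hC hbc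
  obtain ⟨h7, h8, h9⟩ := edge_split hE hA hC hac
  exact ⟨A, B, C, h1, h2, h5, h3, h6, h9, hab, hbc, hac, rfl⟩

lemma ex_ite (P : (ι → ℕ) → Prop) [DecidablePred P] :
    ex V (fun x => if P x then (1 : ℝ) else 0) = pr V P := by
  unfold pr; congr!

lemma pr_add_le_of_disj {P Q S : (ι → ℕ) → Prop} (h1 : ∀ x ∈ tup V ι, P x → S x ∧ ¬ Q x)
    (h2 : ∀ x ∈ tup V ι, Q x → S x) : pr V P + pr V Q ≤ pr V S := by
  unfold pr
  rw [← ex_add]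
  apply ex_mono
  intro x hx
  have a := h1 x hx
  have b := h2 x hx
  by_cases p : P x <;> by_cases q : Q x <;> by_cases s : S x <;> simp_all

lemma pr_and (P : (ι → ℕ) → Prop) (Q : (κ → ℕ) → Prop) :
    pr V (fun x : ι ⊕ κ → ℕ => P (x ∘ Sum.inl) ∧ Q (x ∘ Sum.inr)) = pr V P * pr V Q := by
  rw [pr_sum]
  simp only [Sum.elim_comp_inl, Sum.elim_comp_inr]
  rw [show pr V P * pr V Q = ex V (fun a => (if P a then 1 else 0) * pr V Q) by
    rw [ex_mul_right]; rfl]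
  apply ex_congr
  intro a _
  by_cases h : P a
  · simp [h]
  · simp [h, pr, ex]

lemma pr_inl (hV : V.Nonempty) (P : (ι → ℕ) → Prop) :
    pr V (fun x : ι ⊕ κ → ℕ => P (x ∘ Sum.inl)) = pr V P :=
  pr_comp hV Sum.inl Sum.inl_injective P

lemma pr_inr (hV : V.Nonempty) (P : (κ → ℕ) → Prop) :
    pr V (fun x : ι ⊕ κ → ℕ => P (x ∘ Sum.inr)) = pr V P :=
  pr_comp hV Sum.inr Sum.inr_injective P

variable {R : Type} [Fintype R]

/-- There is an edge with large degree sum. -/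
lemma exists_heavy_edge (hV : V.Nonempty) (E : Finset (Finset ℕ)) {γ : ℝ} (hγ : 0 < γ)
    (hM : 0 < pr V (fun x : R ⊕ R → ℕ => im x ∈ E)) :
    ∃ u v : R → ℕ, im u ∪ im v ∈ E ∧ 2 * pr V (fun x : R ⊕ R → ℕ => im x ∈ E) - γ ≤
      pr V (fun b : R → ℕ => im u ∪ im b ∈ E) + pr V (fun b : R → ℕ => im v ∪ im b ∈ E) := by
  set M := pr V (fun x : R ⊕ R → ℕ => im x ∈ E) with hMdef
  set p : (R → ℕ) → ℝ := fun a => pr V (fun b : R → ℕ => im a ∪ im b ∈ E) with hp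
  have hM1 : M = ex V p := by
    rw [hMdef, pr_sum]; simp only [im_elim, hp]
  by_contra hcon
  push Not at hcon
  -- the average of edge * (p u + p v - 2 M + γ)
  have key : ex V (fun x : R ⊕ R → ℕ => (if im x ∈ E then (1 : ℝ) else 0) *
      (p (x ∘ Sum.inl) + p (x ∘ Sum.inr) - (2 * M - γ))) ≤ 0 := by
    refine (ex_mono (G := fun _ => 0) ?_).trans (ex_const hV 0).le
    intro x _
    split_ifs with h
    · have hx : im (x ∘ Sum.inl) ∪ im (x ∘ Sum.inr) ∈ E := by
        rw [← im_elim]; simpa using h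
      have := hcon _ _ hx
      linarith
    · simp
  have e1 : ex V (fun x : R ⊕ R → ℕ => (if im x ∈ E then (1 : ℝ) else 0) * p (x ∘ Sum.inl)) =
      ex V (fun a => p a * p a) := by
    rw [ex_sum]
    apply ex_congr
    intro a _
    simp only [Sum.elim_comp_inl, im_elim]
    rw [ex_mul_right, ex_ite]
  have e2 : ex V (fun x : R ⊕ R → ℕ => (if im x ∈ E then (1 : ℝ) else 0) * p (x ∘ Sum.inr)) =
      ex V (fun a => p a * p a) := by
    rw [← e1, ← ex_comp hV Sum.swap (Equiv.sumComm R R).injective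
      (fun x : R ⊕ R → ℕ => (if im x ∈ E then (1 : ℝ) else 0) * p (x ∘ Sum.inl))]
    apply ex_congr
    intro x _
    have h1 : im (x ∘ Sum.swap) = im x := im_equiv (Equiv.sumComm R R) x
    have h2 : (x ∘ Sum.swap) ∘ Sum.inl = x ∘ Sum.inr := by ext; rfl
    rw [h1, h2]
  have e3 : ex V (fun x : R ⊕ R → ℕ => (if im x ∈ E then (1 : ℝ) else 0) *
      (p (x ∘ Sum.inl) + p (x ∘ Sum.inr) - (2 * M - γ))) =
      2 * ex V (fun a => p a * p a) - M * (2 * M - γ) := by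
    simp only [mul_sub, mul_add]
    rw [ex_sub, ex_add, e1, e2]
    simp only [← mul_sub]
    rw [ex_mul_right]
    have : ex V (fun x : R ⊕ R → ℕ => if im x ∈ E then (1 : ℝ) else 0) = M := ex_ite _
    rw [this]; ring
  have e4 : 0 ≤ ex V (fun a => (p a - M) * (p a - M)) := ex_nonneg (fun x _ => mul_self_nonneg _)
  have e5 : ex V (fun a => (p a - M) * (p a - M)) = ex V (fun a => p a * p a) - M * M := by
    have : ∀ a, (p a - M) * (p a - M) = p a * p a - (2 * M) * p a + M * M := by intro a; ring
    simp only [this]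
    rw [ex_add, ex_sub, ex_mul_left, ← hM1, ex_const hV]; ring
  rw [e3] at key
  nlinarith

/-- Degrees of the two ends of an edge in the triangle-free case. -/
lemma edge_disj {r : ℕ} {E : Finset (Finset ℕ)} (hR : Fintype.card R = r)
    (hE : ∀ e ∈ E, e.card = 2 * r) (hT : ∀ T, ¬ Tri r E T)
    {u v b : R → ℕ} (h : im u ∪ im v ∈ E) (h1 : im u ∪ im b ∈ E) : ¬ im v ∪ im b ∈ E := by
  intro h2
  have c := fun x : R → ℕ => hR ▸ card_im_le x
  exact hT _ (tri_of hE (c u) (c v) (c b) h h2 h1)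

/-- Mantel bound. -/
lemma mantel {r : ℕ} {E : Finset (Finset ℕ)} (hR : Fintype.card R = r) (hV : V.Nonempty)
    (hE : ∀ e ∈ E, e.card = 2 * r) (hT : ∀ T, ¬ Tri r E T) :
    pr V (fun x : R ⊕ R → ℕ => im x ∈ E) ≤ 1 / 2 := by
  by_contra hcon
  push Not at hcon
  set M := pr V (fun x : R ⊕ R → ℕ => im x ∈ E) with hM
  obtain ⟨u, v, huv, h⟩ := exists_heavy_edge (R := R) hV E (γ := (2 * M - 1) / 2) (by linarith)
    (by linarith)
  rw [← hM] at h
  have h2 : pr V (fun b : R → ℕ => im u ∪ im b ∈ E) ≤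
      pr V (fun b : R → ℕ => ¬ im v ∪ im b ∈ E) :=
    pr_mono fun b _ hb => edge_disj hR hE hT huv hb
  rw [pr_not hV] at h2
  linarith

/-- Mantel stability. -/
lemma mantel_stab {r : ℕ} {E : Finset (Finset ℕ)} (hR : Fintype.card R = r) (hV : V.Nonempty)
    (hE : ∀ e ∈ E, e.card = 2 * r) (hT : ∀ T, ¬ Tri r E T) {δ : ℝ} (hδ : 0 < δ) (hδ2 : δ < 1 / 2)
    (hM : 1 / 2 - δ ≤ pr V (fun x : R ⊕ R → ℕ => im x ∈ E)) :
    ∃ f : Finset ℕ → ZMod 2, pr V (fun x : R ⊕ R → ℕ =>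
      ind E (im x) ≠ f (im (x ∘ Sum.inl)) + f (im (x ∘ Sum.inr))) ≤ 13 * δ := by
  obtain ⟨u, v, huv, h⟩ := exists_heavy_edge (R := R) hV E hδ (by linarith)
  set X : (R → ℕ) → Prop := fun b => im u ∪ im b ∈ E with hX
  set Y : (R → ℕ) → Prop := fun b => im v ∪ im b ∈ E with hY
  set W : (R → ℕ) → Prop := fun b => ¬ X b ∧ ¬ Y b with hW
  have hXY : ∀ b, X b → ¬ Y b := fun b hb => edge_disj hR hE hT huv hb
  have hvu : im v ∪ im u ∈ E := by rwa [Finset.union_comm]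
  have c := fun x : R → ℕ => hR ▸ card_im_le x
  have hw : pr V W ≤ 3 * δ := by
    have h1 : pr V W + pr V Y ≤ pr V (fun b => ¬ X b) :=
      pr_add_le_of_disj (fun x _ h => h) (fun x _ h h' => hXY x h' h)
    rw [pr_not hV] at h1
    linarith
  have hx0 := pr_nonneg (V := V) X
  refine ⟨fun B => if im u ∪ B ∈ E then 1 else 0, ?_⟩
  have split : ∀ x : R ⊕ R → ℕ, im x = im (x ∘ Sum.inl) ∪ im (x ∘ Sum.inr) := by
    intro x; rw [← im_elim]; simp
  set P1 : (R ⊕ R → ℕ) → Prop := fun x => im x ∈ E ∧ (X (x ∘ Sum.inl) ↔ X (x ∘ Sum.inr)) with hP1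
  set P2 : (R ⊕ R → ℕ) → Prop := fun x => im x ∉ E ∧ ¬ (X (x ∘ Sum.inl) ↔ X (x ∘ Sum.inr)) with hP2
  set P3 : (R ⊕ R → ℕ) → Prop := fun x => im x ∈ E ∧ ¬ (X (x ∘ Sum.inl) ↔ X (x ∘ Sum.inr)) with hP3
  have a1 : pr V P1 ≤ 6 * δ := by
    have : pr V P1 ≤ pr V (fun x : R ⊕ R → ℕ => W (x ∘ Sum.inl)) +
        pr V (fun x : R ⊕ R → ℕ => W (x ∘ Sum.inr)) := by
      apply pr_le_add
      rintro x _ ⟨h1, h2⟩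
      rw [split] at h1
      by_contra hcon
      simp only [hW, not_or] at hcon
      by_cases hx : X (x ∘ Sum.inl)
      · have hx' := h2.1 hx
        exact edge_disj hR hE hT h1 (by rw [Finset.union_comm]; exact hx)
          (by rw [Finset.union_comm]; exact hx')
      · have hx' : ¬ X (x ∘ Sum.inr) := fun h => hx (h2.2 h)
        have y1 : Y (x ∘ Sum.inl) := by tauto
        have y2 : Y (x ∘ Sum.inr) := by tauto
        exact edge_disj hR hE hT h1 (by rw [Finset.union_comm]; exact y1)
          (by rw [Finset.union_comm]; exact y2)
    rw [pr_inl hV, pr_inr hV] at this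
    linarith
  have a2 : pr V P2 + pr V P3 ≤ 1 / 2 := by
    have h1 : pr V P2 + pr V P3 ≤ pr V (fun x : R ⊕ R → ℕ => ¬ (X (x ∘ Sum.inl) ↔ X (x ∘ Sum.inr))) :=
      pr_add_le_of_disj (fun x _ h => ⟨h.2, fun h' => h.1 h'.1⟩) (fun x _ h => h.2)
    have h2 : pr V (fun x : R ⊕ R → ℕ => ¬ (X (x ∘ Sum.inl) ↔ X (x ∘ Sum.inr))) ≤
        pr V (fun x : R ⊕ R → ℕ => X (x ∘ Sum.inl) ∧ ¬ X (x ∘ Sum.inr)) +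
        pr V (fun x : R ⊕ R → ℕ => ¬ X (x ∘ Sum.inl) ∧ X (x ∘ Sum.inr)) :=
      pr_le_add (fun x _ h => by tauto)
    rw [pr_and X (fun b => ¬ X b), pr_and (fun b => ¬ X b) X, pr_not hV X] at h2
    nlinarith [sq_nonneg (2 * pr V X - 1)]
  have a3 : 1 / 2 - δ ≤ pr V P1 + pr V P3 :=
    hM.trans (pr_le_add (fun x _ h => by simp only [hP1, hP3]; tauto))
  have a4 : pr V (fun x : R ⊕ R → ℕ => ind E (im x) ≠ (fun B => if im u ∪ B ∈ E then (1 : ZMod 2) else 0) (im (x ∘ Sum.inl)) +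
      (fun B => if im u ∪ B ∈ E then (1 : ZMod 2) else 0) (im (x ∘ Sum.inr))) ≤ pr V P1 + pr V P2 := by
    apply pr_le_add
    intro x _ h
    simp only [hP1, hP2, hX]
    simp only [ind] at h
    have e11 : (1 : ZMod 2) + 1 = 0 := by decide
    by_cases q1 : im x ∈ E <;> by_cases q2 : im u ∪ im (x ∘ Sum.inl) ∈ E <;>
      by_cases q3 : im u ∪ im (x ∘ Sum.inr) ∈ E <;> simp_all
  linarith

end

end

section

open Finset
open scoped Classical

section
variable {V : Finset ℕ}

lemma z2_aux {a b c : ZMod 2} (h : a + b = c) : a = c + b := by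
  revert a b c; decide

lemma im_snoc {Q : Type} [Fintype Q] (w : Q ⊕ Unit → ℕ) :
    im w = insert (w (Sum.inr ())) (im (w ∘ Sum.inl)) := by
  ext a; simp only [mem_im, Finset.mem_insert, Function.comp]
  constructor
  · rintro ⟨i | i, h⟩
    · exact Or.inr ⟨i, h⟩
    · exact Or.inl h.symm
  · rintro (h | ⟨i, h⟩)
    · exact ⟨Sum.inr (), h.symm⟩
    · exact ⟨Sum.inl i, h⟩

lemma im_succAbove {ρ : ℕ} (z : Fin (ρ + 1) → ℕ) (i : Fin (ρ + 1)) :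
    im z = insert (z i) (im (z ∘ i.succAbove)) := by
  ext a; simp only [mem_im, Finset.mem_insert, Function.comp]
  constructor
  · rintro ⟨k, h⟩
    by_cases hk : k = i
    · left; rw [← h, hk]
    · obtain ⟨q, rfl⟩ := Fin.exists_succAbove_eq hk
      exact Or.inr ⟨q, h⟩
  · rintro (h | ⟨k, h⟩)
    · exact ⟨i, h.symm⟩
    · exact ⟨_, h⟩

/-- The local structure of `f` : swapping one element. -/
lemma step3a {ρ : ℕ} (hV : V.Nonempty) (h f : Finset ℕ → ZMod 2) {δ : ℝ}
    (hA : pr V (fun x : Fin (ρ + 1) ⊕ Fin (ρ + 1) → ℕ =>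
      h (im x) ≠ f (im (x ∘ Sum.inl)) + f (im (x ∘ Sum.inr))) ≤ δ) :
    ∃ σ : ℕ → ZMod 2, pr V (fun z : Fin ρ ⊕ (Unit ⊕ Unit) → ℕ =>
      f (insert (z (Sum.inr (Sum.inl ()))) (im (z ∘ Sum.inl))) +
      f (insert (z (Sum.inr (Sum.inr ()))) (im (z ∘ Sum.inl))) ≠
      σ (z (Sum.inr (Sum.inl ()))) + σ (z (Sum.inr (Sum.inr ())))) ≤ 2 * δ := by
  let e0 : Fin (ρ + 1) ≃ Fin ρ ⊕ Unit := Fintype.equivOfCardEq (by simp)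
  -- transfer of hA along injections
  have tr : ∀ j : (Fin ρ ⊕ Unit) ⊕ (Fin ρ ⊕ Unit) ≃ Fin ρ ⊕ (Fin ρ ⊕ (Unit ⊕ Unit)),
      pr V (fun x : Fin ρ ⊕ (Fin ρ ⊕ (Unit ⊕ Unit)) → ℕ =>
        h (im x) ≠ f (im (x ∘ j ∘ Sum.inl)) + f (im (x ∘ j ∘ Sum.inr))) ≤ δ := by
    intro j
    refine le_trans (le_of_eq ?_) hA
    rw [← pr_comp hV ((Equiv.sumCongr e0 e0).trans j) (Equiv.injective _)]
    apply pr_congr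
    intro x _
    rw [im_equiv]
    have h1 : im ((x ∘ ((Equiv.sumCongr e0 e0).trans j)) ∘ Sum.inl) = im (x ∘ j ∘ Sum.inl) := by
      rw [← im_equiv e0 (x ∘ j ∘ Sum.inl)]; rfl
    have h2 : im ((x ∘ ((Equiv.sumCongr e0 e0).trans j)) ∘ Sum.inr) = im (x ∘ j ∘ Sum.inr) := by
      rw [← im_equiv e0 (x ∘ j ∘ Sum.inr)]; rfl
    rw [h1, h2]
  let j1 : (Fin ρ ⊕ Unit) ⊕ (Fin ρ ⊕ Unit) ≃ Fin ρ ⊕ (Fin ρ ⊕ (Unit ⊕ Unit)) :=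
    (Equiv.sumSumSumComm (Fin ρ) Unit (Fin ρ) Unit).trans (Equiv.sumAssoc _ _ _)
  let j2 : (Fin ρ ⊕ Unit) ⊕ (Fin ρ ⊕ Unit) ≃ Fin ρ ⊕ (Fin ρ ⊕ (Unit ⊕ Unit)) :=
    ((Equiv.sumSumSumComm (Fin ρ) Unit (Fin ρ) Unit).trans
      (Equiv.sumCongr (Equiv.refl _) (Equiv.sumComm _ _))).trans (Equiv.sumAssoc _ _ _)
  have key : pr V (fun x : Fin ρ ⊕ (Fin ρ ⊕ (Unit ⊕ Unit)) → ℕ =>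
      f (insert (x (Sum.inr (Sum.inr (Sum.inl ())))) (im (x ∘ Sum.inr ∘ Sum.inl))) +
      f (insert (x (Sum.inr (Sum.inr (Sum.inr ())))) (im (x ∘ Sum.inr ∘ Sum.inl))) ≠
      f (insert (x (Sum.inr (Sum.inr (Sum.inl ())))) (im (x ∘ Sum.inl))) +
      f (insert (x (Sum.inr (Sum.inr (Sum.inr ())))) (im (x ∘ Sum.inl)))) ≤ δ + δ := by
    refine (pr_le_add ?_).trans (add_le_add (tr j1) (tr j2))
    intro x _ hx
    by_contra hcon
    rw [not_or, not_not, not_not] at hcon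
    obtain ⟨c1, c2⟩ := hcon
    rw [im_snoc (x ∘ j1 ∘ Sum.inl), im_snoc (x ∘ j1 ∘ Sum.inr)] at c1
    rw [im_snoc (x ∘ j2 ∘ Sum.inl), im_snoc (x ∘ j2 ∘ Sum.inr)] at c2
    apply hx
    have c3 := c1.symm.trans c2
    have q1 : (x ∘ j1 ∘ Sum.inl) ∘ Sum.inl = x ∘ Sum.inl := rfl
    have q2 : (x ∘ j1 ∘ Sum.inr) ∘ Sum.inl = x ∘ Sum.inr ∘ Sum.inl := rfl
    have q3 : (x ∘ j2 ∘ Sum.inl) ∘ Sum.inl = x ∘ Sum.inl := rfl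
    have q4 : (x ∘ j2 ∘ Sum.inr) ∘ Sum.inl = x ∘ Sum.inr ∘ Sum.inl := rfl
    have q5 : (x ∘ j1 ∘ Sum.inl) (Sum.inr ()) = x (Sum.inr (Sum.inr (Sum.inl ()))) := rfl
    have q6 : (x ∘ j1 ∘ Sum.inr) (Sum.inr ()) = x (Sum.inr (Sum.inr (Sum.inr ()))) := rfl
    have q7 : (x ∘ j2 ∘ Sum.inl) (Sum.inr ()) = x (Sum.inr (Sum.inr (Sum.inr ()))) := rfl
    have q8 : (x ∘ j2 ∘ Sum.inr) (Sum.inr ()) = x (Sum.inr (Sum.inr (Sum.inl ()))) := rfl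
    rw [q1, q2, q3, q4, q5, q6, q7, q8] at c3
    have z : ∀ a b c d : ZMod 2, a + b = c + d → d + b = a + c := by decide
    exact z _ _ _ _ c3
  rw [pr_sum] at key
  obtain ⟨X0, _, hX0⟩ := exists_le_of_ex_le hV key
  refine ⟨fun x => f (insert x (im X0)), ?_⟩
  rw [two_mul]
  exact hX0

set_option maxHeartbeats 1000000 in
/-- `f` is (nearly) the parity function of `σ`, up to a constant. -/
lemma step3b {ρ : ℕ} (hV : V.Nonempty) (f : Finset ℕ → ZMod 2) (σ : ℕ → ZMod 2) {δ : ℝ}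
    (hA : pr V (fun z : Fin ρ ⊕ (Unit ⊕ Unit) → ℕ =>
      f (insert (z (Sum.inr (Sum.inl ()))) (im (z ∘ Sum.inl))) +
      f (insert (z (Sum.inr (Sum.inr ()))) (im (z ∘ Sum.inl))) ≠
      σ (z (Sum.inr (Sum.inl ()))) + σ (z (Sum.inr (Sum.inr ())))) ≤ δ) :
    ∃ c : ZMod 2, pr V (fun x : Fin (ρ + 1) → ℕ => f (im x) ≠ ∑ i, σ (x i) + c) ≤ (ρ + 1) * δ := by
  -- hybrid tuples
  let Z : (Fin (ρ + 1) ⊕ Fin (ρ + 1) → ℕ) → ℕ → Fin (ρ + 1) → ℕ :=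
    fun w m j => if j.val < m then w (Sum.inl j) else w (Sum.inr j)
  let B : Fin (ρ + 1) → (Fin (ρ + 1) ⊕ Fin (ρ + 1) → ℕ) → Prop := fun i w =>
    f (insert (w (Sum.inr i)) (im (Z w i.val ∘ i.succAbove))) +
    f (insert (w (Sum.inl i)) (im (Z w i.val ∘ i.succAbove))) ≠ σ (w (Sum.inr i)) + σ (w (Sum.inl i))
  have hB : ∀ i, pr V (B i) ≤ δ := by
    intro i
    refine le_trans (le_of_eq ?_) hA
    let j : Fin ρ ⊕ (Unit ⊕ Unit) → Fin (ρ + 1) ⊕ Fin (ρ + 1) :=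
      Sum.elim (fun q => if (i.succAbove q).val < i.val then Sum.inl (i.succAbove q)
        else Sum.inr (i.succAbove q)) (Sum.elim (fun _ => Sum.inr i) (fun _ => Sum.inl i))
    have hj : Function.Injective j := by
      have hne : ∀ q, i.succAbove q ≠ i := fun q => Fin.succAbove_ne i q
      rintro (a | a | a) (b | b | b) hab
      · simp only [j, Sum.elim_inl] at hab
        split_ifs at hab <;> simp_all
      · simp only [j, Sum.elim_inl, Sum.elim_inr] at hab
        split_ifs at hab <;> simp_all
      · simp only [j, Sum.elim_inl, Sum.elim_inr] at hab
        split_ifs at hab <;> simp_all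
      · simp only [j, Sum.elim_inl, Sum.elim_inr] at hab
        split_ifs at hab <;> simp_all [(hne _).symm]
      · rfl
      · simp [j] at hab
      · simp only [j, Sum.elim_inl, Sum.elim_inr] at hab
        split_ifs at hab <;> simp_all [(hne _).symm]
      · simp [j] at hab
      · rfl
    rw [← pr_comp hV j hj]
    apply pr_congr
    intro w _
    have h1 : (w ∘ j) ∘ Sum.inl = Z w i.val ∘ i.succAbove := by
      ext q
      simp only [Function.comp, j, Z, Sum.elim_inl]
      split_ifs <;> rfl
    rw [h1]
    rfl
  have hall : pr V (fun w => ∃ i ∈ (Finset.univ : Finset (Fin (ρ + 1))), B i w) ≤ (ρ + 1) * δ := by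
    refine (pr_exists_le _ _).trans ((Finset.sum_le_sum fun i _ => hB i).trans ?_)
    simp
  have key : ∀ w : Fin (ρ + 1) ⊕ Fin (ρ + 1) → ℕ, (¬ ∃ i ∈ (Finset.univ : Finset (Fin (ρ + 1))), B i w) →
      f (im (w ∘ Sum.inr)) = ∑ i, σ (w (Sum.inr i)) + (∑ i, σ (w (Sum.inl i)) + f (im (w ∘ Sum.inl))) := by
    intro w hw
    simp only [Finset.mem_univ, true_and, not_exists, B, not_not] at hw
    have ind : ∀ m : ℕ, m ≤ ρ + 1 → f (im (Z w m)) = f (im (w ∘ Sum.inr)) +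
        ∑ i ∈ (Finset.univ : Finset (Fin (ρ + 1))).filter (fun i => i.val < m),
          (σ (w (Sum.inr i)) + σ (w (Sum.inl i))) := by
      intro m
      induction m with
      | zero =>
        intro _
        have : Z w 0 = w ∘ Sum.inr := by ext q; simp [Z]
        simp [this]
      | succ m ih =>
        intro hm
        have ih' := ih (by omega)
        set i : Fin (ρ + 1) := ⟨m, by omega⟩ with hi
        have hs : (Finset.univ : Finset (Fin (ρ + 1))).filter (fun i => i.val < m + 1) =
            insert i ((Finset.univ : Finset (Fin (ρ + 1))).filter (fun i => i.val < m)) := by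
          ext k; simp [hi, Fin.ext_iff]; omega
        rw [hs, Finset.sum_insert (by simp [hi])]
        have e1 : im (Z w m) = insert (w (Sum.inr i)) (im (Z w m ∘ i.succAbove)) := by
          rw [im_succAbove (Z w m) i]; simp [Z, hi]
        have e2 : im (Z w (m + 1)) = insert (w (Sum.inl i)) (im (Z w m ∘ i.succAbove)) := by
          rw [im_succAbove (Z w (m + 1)) i]
          have : Z w (m + 1) ∘ i.succAbove = Z w m ∘ i.succAbove := by
            ext q
            have hne : (i.succAbove q).val ≠ m := by
              have := Fin.succAbove_ne i q
              intro h; apply this; ext; simpa [hi] using h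
            simp only [Function.comp, Z]
            have : (i.succAbove q).val < m + 1 ↔ (i.succAbove q).val < m := by omega
            simp only [this]
          rw [this]; simp [Z, hi]
        have hwi := hw i
        rw [show (i : ℕ) = m from rfl, ← e1, ← e2, ih'] at hwi
        have z : ∀ a b c d : ZMod 2, a + b + c = d → c = a + (d + b) := by decide
        exact z _ _ _ _ hwi
    have h1 := ind (ρ + 1) le_rfl
    have h2 : Z w (ρ + 1) = w ∘ Sum.inl := by
      ext q; simp only [Z, q.isLt, if_true, Function.comp]
    rw [h2, Finset.filter_true_of_mem (fun i _ => i.isLt), Finset.sum_add_distrib] at h1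
    have z : ∀ a b c d : ZMod 2, a = b + (c + d) → b = c + (d + a) := by decide
    exact z _ _ _ _ h1
  have h2 : pr V (fun w : Fin (ρ + 1) ⊕ Fin (ρ + 1) → ℕ => f (im (w ∘ Sum.inr)) ≠
      ∑ i, σ (w (Sum.inr i)) + (∑ i, σ (w (Sum.inl i)) + f (im (w ∘ Sum.inl)))) ≤ (ρ + 1) * δ := by
    refine (pr_mono ?_).trans hall
    intro w _ hw
    by_contra hcon
    exact hw (key w hcon)
  rw [pr_sum] at h2
  obtain ⟨y0, _, hy0⟩ := exists_le_of_ex_le hV h2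
  simp only [Sum.elim_comp_inl, Sum.elim_comp_inr, Sum.elim_inl, Sum.elim_inr] at hy0
  exact ⟨_, hy0⟩

/-- `h` is nearly the parity function of `σ`. -/
lemma step3 {ρ : ℕ} (hV : V.Nonempty) (h f : Finset ℕ → ZMod 2) {δ : ℝ}
    (hA : pr V (fun x : Fin (ρ + 1) ⊕ Fin (ρ + 1) → ℕ =>
      h (im x) ≠ f (im (x ∘ Sum.inl)) + f (im (x ∘ Sum.inr))) ≤ δ) :
    ∃ σ : ℕ → ZMod 2, pr V (fun x : Fin (ρ + 1) ⊕ Fin (ρ + 1) → ℕ =>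
      h (im x) ≠ ∑ i, σ (x i)) ≤ (4 * ρ + 5) * δ := by
  obtain ⟨σ, hσ⟩ := step3a hV h f hA
  obtain ⟨c, hc⟩ := step3b hV f σ hσ
  refine ⟨σ, ?_⟩
  have h1 := pr_inl (κ := Fin (ρ + 1)) hV (fun x : Fin (ρ + 1) → ℕ => f (im x) ≠ ∑ i, σ (x i) + c)
  have h2 := pr_inr (ι := Fin (ρ + 1)) hV (fun x : Fin (ρ + 1) → ℕ => f (im x) ≠ ∑ i, σ (x i) + c)
  have h3 : pr V (fun x : Fin (ρ + 1) ⊕ Fin (ρ + 1) → ℕ => h (im x) ≠ ∑ i, σ (x i)) ≤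
      pr V (fun x : Fin (ρ + 1) ⊕ Fin (ρ + 1) → ℕ =>
      h (im x) ≠ f (im (x ∘ Sum.inl)) + f (im (x ∘ Sum.inr))) +
      (pr V (fun x : Fin (ρ + 1) ⊕ Fin (ρ + 1) → ℕ =>
        f (im (x ∘ Sum.inl)) ≠ ∑ i, σ ((x ∘ Sum.inl) i) + c) +
      pr V (fun x : Fin (ρ + 1) ⊕ Fin (ρ + 1) → ℕ =>
        f (im (x ∘ Sum.inr)) ≠ ∑ i, σ ((x ∘ Sum.inr) i) + c)) := by
    refine (pr_le_add (Q := fun x => _ ∨ _) ?_).trans (add_le_add le_rfl (pr_or_le _ _))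
    intro x _ hx
    by_contra hcon
    simp only [not_or, not_not] at hcon
    obtain ⟨c1, c2, c3⟩ := hcon
    apply hx
    rw [c1, c2, c3, Fintype.sum_sum_type]
    have z : ∀ a b c : ZMod 2, a + c + (b + c) = a + b := by decide
    exact z _ _ _
  rw [h1, h2] at h3
  linarith

/-- The stability theorem. -/
lemma stability {ρ : ℕ} (hV : V.Nonempty) {E : Finset (Finset ℕ)}
    (hE : ∀ e ∈ E, e.card = 2 * (ρ + 1)) (hT : ∀ T, ¬ Tri (ρ + 1) E T) {δ : ℝ} (hδ : 0 < δ)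
    (hδ2 : δ < 1 / 2)
    (hM : 1 / 2 - δ ≤ pr V (fun x : Fin (ρ + 1) ⊕ Fin (ρ + 1) → ℕ => im x ∈ E)) :
    ∃ σ : ℕ → ZMod 2, pr V (fun x : Fin (ρ + 1) ⊕ Fin (ρ + 1) → ℕ =>
      ind E (im x) ≠ ∑ i, σ (x i)) ≤ (4 * ρ + 5) * (13 * δ) := by
  obtain ⟨f, hf⟩ := mantel_stab (R := Fin (ρ + 1)) (by simp) hV hE hT hδ hδ2 hM
  exact step3 hV _ f hf

end

end

section

open Finset
open scoped Classical

section
variable {V : Finset ℕ} {ι κ : Type} [Fintype ι] [Fintype κ]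

/-- sum of labels -/
def sg {ι : Type} [Fintype ι] (σ : ℕ → ZMod 2) (x : ι → ℕ) : ZMod 2 := ∑ i, σ (x i)

lemma sg_elim (σ : ℕ → ZMod 2) (a : ι → ℕ) (b : κ → ℕ) :
    sg σ (Sum.elim a b) = sg σ a + sg σ b := by
  simp [sg, Fintype.sum_sum_type]

lemma sg_split (σ : ℕ → ZMod 2) (x : ι ⊕ κ → ℕ) :
    sg σ x = sg σ (x ∘ Sum.inl) + sg σ (x ∘ Sum.inr) := by
  simp [sg, Fintype.sum_sum_type]

lemma sg_equiv (σ : ℕ → ZMod 2) (e : κ ≃ ι) (x : ι → ℕ) : sg σ (x ∘ e) = sg σ x := by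
  unfold sg
  exact Equiv.sum_comp e (fun i => σ (x i))

lemma im_split (x : ι ⊕ κ → ℕ) : im x = im (x ∘ Sum.inl) ∪ im (x ∘ Sum.inr) := by
  rw [← im_elim]; simp

lemma z2_cases (a : ZMod 2) : a = 0 ∨ a = 1 := by revert a; decide

lemma z2_ne {a b : ZMod 2} : a ≠ b ↔ a = b + 1 := by revert a b; decide

lemma ind_eq_one {E : Finset (Finset ℕ)} {e : Finset ℕ} : ind E e = 1 ↔ e ∈ E := by
  unfold ind; split_ifs <;> simp_all

lemma ind_eq_zero {E : Finset (Finset ℕ)} {e : Finset ℕ} : ind E e = 0 ↔ e ∉ E := by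
  unfold ind; split_ifs <;> simp_all

/-- class densities -/
lemma class_dens {R : Type} [Fintype R] (hV : V.Nonempty) {E : Finset (Finset ℕ)} (σ : ℕ → ZMod 2)
    {β : ℝ} (hβ : 0 ≤ β)
    (hdis : pr V (fun x : R ⊕ R → ℕ => ind E (im x) ≠ sg σ x) ≤ β ^ 2)
    (hden : 1 / 2 - β ^ 2 ≤ pr V (fun x : R ⊕ R → ℕ => im x ∈ E)) (i : ZMod 2) :
    pr V (fun C : R → ℕ => sg σ C = i) ≤ 1 / 2 + β := by
  set w0 := pr V (fun C : R → ℕ => sg σ C = 0) with h0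
  set w1 := pr V (fun C : R → ℕ => sg σ C = 1) with h1
  have hw : w0 = 1 - w1 := by
    rw [h0, h1, ← pr_not hV]; apply pr_congr; intro x _
    generalize sg σ x = a; revert a; decide
  have hM : pr V (fun x : R ⊕ R → ℕ => im x ∈ E) ≤ β ^ 2 +
      (w0 * w1 + w1 * w0) := by
    have : pr V (fun x : R ⊕ R → ℕ => im x ∈ E) ≤
      pr V (fun x : R ⊕ R → ℕ => ind E (im x) ≠ sg σ x) +
      pr V (fun x : R ⊕ R → ℕ => (sg σ (x ∘ Sum.inl) = 0 ∧ sg σ (x ∘ Sum.inr) = 1) ∨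
        (sg σ (x ∘ Sum.inl) = 1 ∧ sg σ (x ∘ Sum.inr) = 0)) := by
      apply pr_le_add
      intro x _ hx
      rw [ind_eq_one.2 hx, sg_split]
      generalize sg σ (x ∘ Sum.inl) = a
      generalize sg σ (x ∘ Sum.inr) = b
      revert a b; decide
    refine this.trans (add_le_add hdis ((pr_or_le _ _).trans ?_))
    rw [pr_and (fun a : R → ℕ => sg σ a = 0) (fun a : R → ℕ => sg σ a = 1),
      pr_and (fun a : R → ℕ => sg σ a = 1) (fun a : R → ℕ => sg σ a = 0)]
  have h3 : |2 * w1 - 1| ≤ 2 * β := by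
    apply abs_le_of_sq_le_sq _ (by linarith)
    rw [hw] at hM
    nlinarith
  rw [abs_le] at h3
  rcases z2_cases i with rfl | rfl
  · rw [← h0]; linarith
  · rw [← h1]; linarith

variable {Q : Type} [Fintype Q]

/-- Majority step. -/
lemma majority {R : Type} [Fintype R] (hV : V.Nonempty) {E : Finset (Finset ℕ)} (σ : ℕ → ZMod 2)
    {β : ℝ} (hβ : 0 < β) (hβ1 : β ≤ 1) (v : ℕ)
    (hdis : pr V (fun x : R ⊕ R → ℕ => ind E (im x) ≠ sg σ x) ≤ β ^ 2)
    (hden : 1 / 2 - β ^ 2 ≤ pr V (fun x : R ⊕ R → ℕ => im x ∈ E))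
    (hdeg : 1 / 2 - β ^ 2 ≤ pr V (fun x : Q ⊕ R → ℕ => insert v (im x) ∈ E))
    (hcop : pr V (fun x : Q ⊕ (R ⊕ R) → ℕ =>
      insert v (im (x ∘ Sum.inl) ∪ im (x ∘ Sum.inr ∘ Sum.inl)) ∈ E ∧
      insert v (im (x ∘ Sum.inl) ∪ im (x ∘ Sum.inr ∘ Sum.inr)) ∈ E ∧
      im (x ∘ Sum.inr) ∈ E) ≤ β ^ 2) :
    ∃ τ : (Q → ℕ) → ZMod 2, pr V (fun x : Q ⊕ R → ℕ =>
      ind E (insert v (im x)) ≠ sg σ (x ∘ Sum.inr) + τ (x ∘ Sum.inl)) ≤ 4 * β := by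
  set N : ZMod 2 → (Q → ℕ) → ℝ := fun i a =>
    pr V (fun C : R → ℕ => insert v (im a ∪ im C) ∈ E ∧ sg σ C = i) with hN
  have hN0 : ∀ i a, 0 ≤ N i a := fun i a => pr_nonneg _
  -- few pairs
  have hNN : ex V (fun a => N 0 a * N 1 a + N 1 a * N 0 a) ≤ 2 * β ^ 2 := by
    have h1 : ex V (fun a => N 0 a * N 1 a + N 1 a * N 0 a) ≤
        pr V (fun x : Q ⊕ (R ⊕ R) → ℕ =>
        insert v (im (x ∘ Sum.inl) ∪ im (x ∘ Sum.inr ∘ Sum.inl)) ∈ E ∧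
        insert v (im (x ∘ Sum.inl) ∪ im (x ∘ Sum.inr ∘ Sum.inr)) ∈ E ∧
        sg σ (x ∘ Sum.inr) = 1) := by
      rw [pr_sum]
      apply ex_mono
      intro a _
      simp only [hN]
      rw [← pr_and (fun C : R → ℕ => insert v (im a ∪ im C) ∈ E ∧ sg σ C = 0),
        ← pr_and (fun C : R → ℕ => insert v (im a ∪ im C) ∈ E ∧ sg σ C = 1)]
      apply pr_add_le_of_disj
      · rintro x _ ⟨⟨h1, h2⟩, h3, h4⟩
        refine ⟨⟨h1, h3, ?_⟩, ?_⟩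
        · simp only [Sum.elim_comp_inr]; rw [sg_split, h2, h4]; rfl
        · rintro ⟨⟨_, h6⟩, _⟩; rw [h2] at h6; exact absurd h6 (by decide)
      · rintro x _ ⟨⟨h1, h2⟩, h3, h4⟩
        refine ⟨h1, h3, ?_⟩
        simp only [Sum.elim_comp_inr]; rw [sg_split, h2, h4]; rfl
    refine h1.trans ((pr_le_add (P := fun x : Q ⊕ (R ⊕ R) → ℕ =>
      insert v (im (x ∘ Sum.inl) ∪ im (x ∘ Sum.inr ∘ Sum.inl)) ∈ E ∧
      insert v (im (x ∘ Sum.inl) ∪ im (x ∘ Sum.inr ∘ Sum.inr)) ∈ E ∧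
      im (x ∘ Sum.inr) ∈ E) (Q := fun x : Q ⊕ (R ⊕ R) → ℕ =>
        ind E (im (x ∘ Sum.inr)) ≠ sg σ (x ∘ Sum.inr)) ?_).trans ?_)
    · rintro x _ ⟨h1, h2, h3⟩
      by_cases h : im (x ∘ Sum.inr) ∈ E
      · exact Or.inl ⟨h1, h2, h⟩
      · right; rw [h3, ind_eq_zero.2 h]; decide
    · have := pr_inr (ι := Q) hV (fun x : R ⊕ R → ℕ => ind E (im x) ≠ sg σ x)
      rw [this]; linarith
  set m : (Q → ℕ) → ℝ := fun a => min (N 0 a) (N 1 a) with hm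
  have hmE : ex V m ≤ β := by
    have h1 : ex V m ≤ ex V (fun a => β / 2 + (1 / (4 * β)) * (N 0 a * N 1 a + N 1 a * N 0 a)) := by
      apply ex_mono
      intro a _
      have hm0 : 0 ≤ m a := le_min (hN0 _ _) (hN0 _ _)
      have h2 : m a * m a ≤ N 0 a * N 1 a :=
        mul_le_mul (min_le_left _ _) (min_le_right _ _) hm0 (hN0 _ _)
      have h3 : β / 2 + (1 / (4 * β)) * (N 0 a * N 1 a + N 1 a * N 0 a) =
          (β * β + N 0 a * N 1 a) / (2 * β) := by field_simp; ring
      rw [h3, le_div_iff₀ (by linarith)]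
      nlinarith [sq_nonneg (β - m a)]
    rw [ex_add, ex_mul_left, ex_const hV] at h1
    have h4 : 1 / (4 * β) * ex V (fun a => N 0 a * N 1 a + N 1 a * N 0 a) ≤
        1 / (4 * β) * (2 * β ^ 2) := by gcongr
    have h5 : 1 / (4 * β) * (2 * β ^ 2) = β / 2 := by field_simp; ring
    linarith
  set τ : (Q → ℕ) → ZMod 2 := fun a => if N 0 a ≤ N 1 a then 0 else 1 with hτ
  refine ⟨τ, ?_⟩
  set p : (Q → ℕ) → ℝ := fun a => pr V (fun C : R → ℕ => insert v (im a ∪ im C) ∈ E) with hp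
  have hpE : 1 / 2 - β ^ 2 ≤ ex V p := by
    rw [pr_sum] at hdeg
    simpa only [im_elim] using hdeg
  have hpN : ∀ a i, N i a + N (i + 1) a = p a := by
    intro a i
    apply le_antisymm
    · apply pr_add_le_of_disj
      · rintro x _ ⟨h1, h2⟩
        refine ⟨h1, ?_⟩
        rintro ⟨_, h3⟩; rw [h2] at h3
        have z : ∀ i : ZMod 2, i ≠ i + 1 := by decide
        exact z _ h3
      · rintro x _ ⟨h1, h2⟩; exact h1
    · apply pr_le_add
      intro x _ h1
      have : ∀ b : ZMod 2, b = i ∨ b = i + 1 := by revert i; decide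
      rcases this (sg σ x) with h | h
      · exact Or.inl ⟨h1, h⟩
      · exact Or.inr ⟨h1, h⟩
  have hmis : ∀ a, pr V (fun C : R → ℕ => ind E (insert v (im a ∪ im C)) ≠ sg σ C + τ a) ≤
      2 * m a + (1 / 2 + β) - p a := by
    intro a
    have hmin : N (τ a) a = m a := by
      simp only [hτ, hm]
      split_ifs with h
      · rw [min_eq_left h]
      · rw [min_eq_right (le_of_not_ge h)]
    have h1 : pr V (fun C : R → ℕ => ind E (insert v (im a ∪ im C)) ≠ sg σ C + τ a) ≤
        N (τ a) a + pr V (fun C : R → ℕ => insert v (im a ∪ im C) ∉ E ∧ sg σ C = τ a + 1) := by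
      apply pr_le_add
      intro C _ hC
      by_cases h : insert v (im a ∪ im C) ∈ E
      · left; refine ⟨h, ?_⟩
        rw [ind_eq_one.2 h] at hC
        revert hC; generalize sg σ C = x; generalize τ a = y; revert x y; decide
      · right; refine ⟨h, ?_⟩
        rw [ind_eq_zero.2 h] at hC
        revert hC; generalize sg σ C = x; generalize τ a = y; revert x y; decide
    have h2 : pr V (fun C : R → ℕ => insert v (im a ∪ im C) ∉ E ∧ sg σ C = τ a + 1) +
        N (τ a + 1) a ≤ pr V (fun C : R → ℕ => sg σ C = τ a + 1) :=
      pr_add_le_of_disj (fun x _ h => ⟨h.2, fun h' => h.1 h'.1⟩) (fun x _ h => h.2)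
    have h3 := class_dens hV σ hβ.le hdis hden (τ a + 1)
    have h4 := hpN a (τ a)
    linarith
  rw [pr_sum]
  simp only [im_elim, Sum.elim_comp_inl, Sum.elim_comp_inr]
  refine (ex_mono fun a _ => hmis a).trans ?_
  rw [ex_sub, ex_add, ex_mul_left, ex_const hV]
  nlinarith

/-- Lemma 4: the link of a typical vertex. -/
lemma vertex (hV : V.Nonempty) {E : Finset (Finset ℕ)} (σ : ℕ → ZMod 2)
    {β : ℝ} (hβ : 0 < β) (hβ1 : β ≤ 1) (v : ℕ)
    (hdis : pr V (fun x : (Q ⊕ Unit) ⊕ (Q ⊕ Unit) → ℕ => ind E (im x) ≠ sg σ x) ≤ β ^ 2)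
    (hden : 1 / 2 - β ^ 2 ≤ pr V (fun x : (Q ⊕ Unit) ⊕ (Q ⊕ Unit) → ℕ => im x ∈ E))
    (hdeg : 1 / 2 - β ^ 2 ≤ pr V (fun x : Q ⊕ (Q ⊕ Unit) → ℕ => insert v (im x) ∈ E))
    (hcop : pr V (fun x : Q ⊕ ((Q ⊕ Unit) ⊕ (Q ⊕ Unit)) → ℕ =>
      insert v (im (x ∘ Sum.inl) ∪ im (x ∘ Sum.inr ∘ Sum.inl)) ∈ E ∧
      insert v (im (x ∘ Sum.inl) ∪ im (x ∘ Sum.inr ∘ Sum.inr)) ∈ E ∧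
      im (x ∘ Sum.inr) ∈ E) ≤ β ^ 2) :
    ∃ c : ZMod 2, pr V (fun x : Q ⊕ (Q ⊕ Unit) → ℕ =>
      ind E (insert v (im x)) ≠ sg σ x + c) ≤ 12 * β := by
  obtain ⟨τ, hτ⟩ := majority hV σ hβ hβ1 v hdis hden hdeg hcop
  -- the swap
  let j : Q ⊕ (Q ⊕ Unit) ≃ Q ⊕ (Q ⊕ Unit) :=
    ((Equiv.sumAssoc _ _ _).symm.trans (Equiv.sumCongr (Equiv.sumComm Q Q) (Equiv.refl _))).trans
      (Equiv.sumAssoc _ _ _)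
  have hτ' := hτ
  rw [← pr_comp hV j j.injective] at hτ'
  have h8 : pr V (fun x : Q ⊕ (Q ⊕ Unit) → ℕ => τ (x ∘ Sum.inl) + sg σ (x ∘ Sum.inl) ≠
      τ (x ∘ Sum.inr ∘ Sum.inl) + sg σ (x ∘ Sum.inr ∘ Sum.inl)) ≤ 4 * β + 4 * β := by
    refine (pr_le_add ?_).trans (add_le_add hτ hτ')
    intro x _ hx
    by_contra hcon
    rw [not_or, not_not, not_not] at hcon
    obtain ⟨c1, c2⟩ := hcon
    rw [im_equiv] at c2
    have q1 : (x ∘ j) ∘ Sum.inl = x ∘ Sum.inr ∘ Sum.inl := rfl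
    rw [q1] at c2
    have c3 := c1.symm.trans c2
    rw [sg_split σ (x ∘ Sum.inr), sg_split σ ((x ∘ j) ∘ Sum.inr)] at c3
    have q2 : ((x ∘ j) ∘ Sum.inr) ∘ Sum.inl = x ∘ Sum.inl := rfl
    have q3 : ((x ∘ j) ∘ Sum.inr) ∘ Sum.inr = (x ∘ Sum.inr) ∘ Sum.inr := rfl
    have q4 : (x ∘ Sum.inr) ∘ Sum.inl = x ∘ Sum.inr ∘ Sum.inl := rfl
    rw [q2, q3, q4] at c3
    apply hx
    have z : ∀ a b c d e : ZMod 2, a + b + c = d + b + e → c + d = e + a := by decide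
    exact z _ _ _ _ _ c3
  have h9 := pr_comp hV (fun q : Q ⊕ Q => Sum.elim (fun a => (Sum.inr (Sum.inl a) : Q ⊕ (Q ⊕ Unit)))
      (fun a => Sum.inl a) q) (by rintro (a | a) (b | b) h <;> simp_all)
      (fun y : Q ⊕ Q → ℕ => τ (y ∘ Sum.inr) + sg σ (y ∘ Sum.inr) ≠
        τ (y ∘ Sum.inl) + sg σ (y ∘ Sum.inl))
  have h10 : pr V (fun y : Q ⊕ Q → ℕ => τ (y ∘ Sum.inr) + sg σ (y ∘ Sum.inr) ≠
        τ (y ∘ Sum.inl) + sg σ (y ∘ Sum.inl)) ≤ 8 * β := by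
    rw [← h9]
    refine le_trans (le_of_eq ?_) (h8.trans (by linarith))
    rfl
  rw [pr_sum] at h10
  obtain ⟨c0, _, hc0⟩ := exists_le_of_ex_le hV h10
  simp only [Sum.elim_comp_inl, Sum.elim_comp_inr] at hc0
  set c : ZMod 2 := τ c0 + sg σ c0
  refine ⟨c, ?_⟩
  have h11 := pr_inl (κ := Q ⊕ Unit) hV (fun y : Q → ℕ => τ y + sg σ y ≠ c)
  rw [← h11] at hc0
  have h12 : pr V (fun x : Q ⊕ (Q ⊕ Unit) → ℕ => ind E (insert v (im x)) ≠ sg σ x + c) ≤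
      4 * β + 8 * β := by
    refine (pr_le_add ?_).trans (add_le_add hτ hc0)
    intro x _ hx
    by_contra hcon
    rw [not_or, not_not, not_not] at hcon
    obtain ⟨c1, c2⟩ := hcon
    apply hx
    rw [c1, sg_split σ x, ← c2]
    have z : ∀ a b c : ZMod 2, b + c = a + b + (c + a) := by decide
    exact z _ _ _
  linarith

end

end

section

open Finset
open scoped Classical

section
variable {V : Finset ℕ}

/-- `j` disjoint triangles inside `X`. -/
def Mt (r : ℕ) (E : Finset (Finset ℕ)) : ℕ → Finset ℕ → Prop
  | 0, _ => True
  | j + 1, X => ∃ T ⊆ X, Tri r E T ∧ Mt r E j (X \ T)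

lemma Mt_mono {r : ℕ} {E : Finset (Finset ℕ)} {j : ℕ} {X Y : Finset ℕ} (h : X ⊆ Y)
    (hM : Mt r E j X) : Mt r E j Y := by
  induction j generalizing X Y with
  | zero => trivial
  | succ j ih =>
    obtain ⟨T, h1, h2, h3⟩ := hM
    exact ⟨T, h1.trans h, h2, ih (sdiff_subset_sdiff h le_rfl) h3⟩

lemma Mt_mono_E {r : ℕ} {E E' : Finset (Finset ℕ)} (hEE : E ⊆ E') {j : ℕ} {X : Finset ℕ}
    (hM : Mt r E j X) : Mt r E' j X := by
  induction j generalizing X with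
  | zero => trivial
  | succ j ih =>
    obtain ⟨T, h1, ⟨A, B, C, a1, a2, a3, a4, a5, a6, a7, a8, a9, a10⟩, h3⟩ := hM
    exact ⟨T, h1, ⟨A, B, C, a1, a2, a3, a4, a5, a6, hEE a7, hEE a8, hEE a9, a10⟩, ih h3⟩

lemma Tri_card {r : ℕ} {E : Finset (Finset ℕ)} {T : Finset ℕ} (h : Tri r E T) : T.card = 3 * r := by
  obtain ⟨A, B, C, h1, h2, h3, h4, h5, h6, _, _, _, rfl⟩ := h
  rw [card_union_of_disjoint (by rw [disjoint_union_left]; exact ⟨h6, h5⟩),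
    card_union_of_disjoint h4]
  omega

lemma Mt_small {r : ℕ} {E : Finset (Finset ℕ)} {j : ℕ} {X : Finset ℕ} (hM : Mt r E j X) :
    ∃ U ⊆ X, U.card ≤ 3 * r * j ∧ Mt r E j U := by
  induction j generalizing X with
  | zero => exact ⟨∅, by simp, by simp, trivial⟩
  | succ j ih =>
    obtain ⟨T, h1, h2, h3⟩ := hM
    obtain ⟨U, u1, u2, u3⟩ := ih h3
    refine ⟨T ∪ U, union_subset h1 (u1.trans sdiff_subset), ?_, T, subset_union_left, h2, ?_⟩
    · have := card_union_le T U
      have := Tri_card h2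
      rw [mul_add]; omega
    · refine Mt_mono ?_ u3
      intro a ha
      have := u1 ha
      simp only [Finset.mem_sdiff, mem_union] at this ⊢
      tauto

lemma maxmatch {r : ℕ} {E : Finset (Finset ℕ)} {t : ℕ} {X : Finset ℕ} (hM : ¬ Mt r E (t + 1) X) :
    ∃ U ⊆ X, U.card ≤ 3 * r * t ∧ ∀ T ⊆ X \ U, ¬ Tri r E T := by
  induction t generalizing X with
  | zero =>
    refine ⟨∅, by simp, by simp, ?_⟩
    intro T hT h
    exact hM ⟨T, by simpa using hT, h, trivial⟩
  | succ t ih =>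
    by_cases h : ∃ T ⊆ X, Tri r E T
    · obtain ⟨T, h1, h2⟩ := h
      have h3 : ¬ Mt r E (t + 1) (X \ T) := fun h3 => hM ⟨T, h1, h2, h3⟩
      obtain ⟨U, u1, u2, u3⟩ := ih h3
      refine ⟨T ∪ U, union_subset h1 (u1.trans sdiff_subset), ?_, ?_⟩
      · have := card_union_le T U
        have := Tri_card h2
        rw [mul_add]; omega
      · intro S hS; apply u3
        rwa [sdiff_sdiff_left]
    · push Not at h
      exact ⟨∅, by simp, by simp, fun T hT => h T (by simpa using hT)⟩

/-- Greedy extension of a matching through the vertices of `L`. -/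
lemma greedy {r : ℕ} (hr : 1 ≤ r) {E : Finset (Finset ℕ)} {t : ℕ} {L : Finset ℕ}
    (hL : ∀ v ∈ L, ∀ W : Finset ℕ, W.card ≤ 3 * r * (t + 1) → v ∉ W →
      ∃ T ⊆ V, Tri r E T ∧ v ∈ T ∧ Disjoint T W) {j : ℕ} (hj : j + L.card ≤ t + 1)
    (hM : Mt r E j (V \ L)) : Mt r E (j + L.card) V := by
  induction L using Finset.induction_on generalizing j with
  | empty => simpa using hM
  | insert v L hv ih =>
    rw [card_insert_of_notMem hv] at hj ⊢
    obtain ⟨U, u1, u2, u3⟩ := Mt_small hM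
    obtain ⟨T, t1, t2, t3, t4⟩ := hL v (mem_insert_self _ _) (U ∪ L) (by
      have := card_union_le U L
      have : L.card ≤ 3 * r * L.card := Nat.le_mul_of_pos_left _ (by omega)
      have : 3 * r * (j + L.card) ≤ 3 * r * (t + 1) := Nat.mul_le_mul_left _ (by omega)
      rw [mul_add] at this
      omega) (by
      intro h
      rcases mem_union.1 h with h | h
      · have := u1 h; simp at this
      · exact hv h)
    rw [disjoint_union_right] at t4
    have := ih (fun v hv => hL v (mem_insert_of_mem hv)) (j := j + 1) (by omega)
      ⟨T, by
        intro a ha; rw [Finset.mem_sdiff]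
        exact ⟨t1 ha, fun h => disjoint_left.1 t4.2 ha h⟩, t2, Mt_mono (by
        intro a ha
        have h1 := u1 ha
        simp only [Finset.mem_sdiff, mem_insert, not_or] at h1 ⊢
        exact ⟨⟨h1.1, h1.2.2⟩, fun h => disjoint_left.1 t4.1 h ha⟩) u3⟩
    convert this using 1
    omega

/-! odd families -/

/-- the odd family -/
noncomputable def oddF (k : ℕ) (V : Finset ℕ) (σ : ℕ → ZMod 2) : Finset (Finset ℕ) :=
  (powersetCard k V).filter fun e => ∑ i ∈ e, σ i = 1

lemma mem_oddF {k : ℕ} {σ : ℕ → ZMod 2} {e : Finset ℕ} :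
    e ∈ oddF k V σ ↔ e ⊆ V ∧ e.card = k ∧ ∑ i ∈ e, σ i = 1 := by
  simp [oddF, mem_powersetCard, and_assoc]

lemma oddF_free {r k : ℕ} {σ : ℕ → ZMod 2} (T : Finset ℕ) : ¬ Tri r (oddF k V σ) T := by
  rintro ⟨A, B, C, h1, h2, h3, h4, h5, h6, h7, h8, h9, rfl⟩
  have a1 := (mem_oddF.1 h7).2.2
  have a2 := (mem_oddF.1 h8).2.2
  have a3 := (mem_oddF.1 h9).2.2
  rw [sum_union h4] at a1
  rw [sum_union h5] at a2
  rw [sum_union h6] at a3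
  revert a1 a2 a3
  generalize ∑ i ∈ A, σ i = a; generalize ∑ i ∈ B, σ i = b; generalize ∑ i ∈ C, σ i = c
  revert a b c; decide

lemma oddF_card_le {k : ℕ} {σ : ℕ → ZMod 2} : (oddF k V σ).card ≤ V.card.choose k := by
  rw [← card_powersetCard]; exact card_filter_le _ _

lemma oddF_mantel {r : ℕ} (hr : 1 ≤ r) (σ : ℕ → ZMod 2) :
    ((2 * r).factorial : ℝ) * (oddF (2 * r) V σ).card ≤ (V.card : ℝ) ^ (2 * r) / 2 := by
  rcases V.eq_empty_or_nonempty with rfl | hV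
  · have h := oddF_card_le (V := ∅) (k := 2 * r) (σ := σ)
    rw [card_empty, Nat.choose_eq_zero_of_lt (by omega)] at h
    have : (oddF (2 * r) ∅ σ).card = 0 := by omega
    rw [this]; simp; positivity
  · have h := mantel (R := Fin r) (r := r) (by simp) hV (E := oddF (2 * r) V σ)
      (fun e he => (mem_oddF.1 he).2.1) oddF_free
    have h2 := pr_im_mem (ι := Fin r ⊕ Fin r) hV (oddF (2 * r) V σ) (fun e he => by
      have := mem_oddF.1 he
      exact ⟨this.1, by rw [this.2.1]; simp; omega⟩)
    have hc : Fintype.card (Fin r ⊕ Fin r) = 2 * r := by simp; omega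
    rw [hc] at h2
    rw [← h2]
    have : 0 < (V.card : ℝ) ^ (2 * r) := by
      have : (0 : ℝ) < V.card := by exact_mod_cast hV.card_pos
      positivity
    nlinarith

/-- The maximum size of an odd family. -/
noncomputable def bb (k n : ℕ) : ℕ :=
  sSup {m | ∃ (V : Finset ℕ) (σ : ℕ → ZMod 2), V.card = n ∧ (oddF k V σ).card = m}

lemma bb_bdd (k n : ℕ) :
    BddAbove {m | ∃ (V : Finset ℕ) (σ : ℕ → ZMod 2), V.card = n ∧ (oddF k V σ).card = m} := by
  refine ⟨n.choose k, ?_⟩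
  rintro m ⟨V, σ, rfl, rfl⟩
  exact oddF_card_le

lemma le_bb {k : ℕ} {σ : ℕ → ZMod 2} : (oddF k V σ).card ≤ bb k V.card :=
  le_csSup (bb_bdd _ _) ⟨V, σ, rfl, rfl⟩

lemma exists_bb (k n : ℕ) : ∃ (V : Finset ℕ) (σ : ℕ → ZMod 2), V.card = n ∧
    (oddF k V σ).card = bb k n :=
  Nat.sSup_mem (s := {m | ∃ (V : Finset ℕ) (σ : ℕ → ZMod 2), V.card = n ∧ (oddF k V σ).card = m})
    ⟨_, range n, fun _ => 0, by simp, rfl⟩ (bb_bdd k n)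

lemma bb_succ (K n : ℕ) : (bb (K + 1) n : ℝ) + (n.choose K : ℝ) / 2 ≤ bb (K + 1) (n + 1) := by
  obtain ⟨V, σ, hV, hσ⟩ := exists_bb (K + 1) n
  obtain ⟨v, hv⟩ := Infinite.exists_notMem_finset V
  set F : ZMod 2 → Finset (Finset ℕ) := fun c =>
    (powersetCard K V).filter fun e => ∑ i ∈ e, σ i = c with hF
  have hFc : (F 0).card + (F 1).card = n.choose K := by
    rw [← hV, ← card_powersetCard, ← card_filter_add_card_filter_not (s := powersetCard K V)
      (fun e => ∑ i ∈ e, σ i = 0)]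
    congr 2
    apply filter_congr
    intro e _
    generalize ∑ i ∈ e, σ i = a; revert a; decide
  have key : ∀ c, bb (K + 1) n + (F c).card ≤ bb (K + 1) (n + 1) := by
    intro c
    set σ' : ℕ → ZMod 2 := fun i => if i = v then 1 + c else σ i with hσ'
    have hs : ∀ e ⊆ V, ∑ i ∈ e, σ' i = ∑ i ∈ e, σ i := by
      intro e he
      apply sum_congr rfl
      intro i hi
      have : i ≠ v := fun h => hv (h ▸ he hi)
      simp [hσ', this]
    have h1 : oddF (K + 1) V σ ∪ (F c).image (insert v) ⊆ oddF (K + 1) (insert v V) σ' := by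
      intro e he
      rw [mem_union] at he
      rw [mem_oddF]
      rcases he with he | he
      · rw [mem_oddF] at he
        exact ⟨he.1.trans (subset_insert _ _), he.2.1, by rw [hs _ he.1]; exact he.2.2⟩
      · rw [mem_image] at he
        obtain ⟨f, hf, rfl⟩ := he
        simp only [hF, mem_filter, mem_powersetCard] at hf
        have hvf : v ∉ f := fun h => hv (hf.1.1 h)
        refine ⟨insert_subset_insert _ hf.1.1, by rw [card_insert_of_notMem hvf, hf.1.2], ?_⟩
        rw [sum_insert hvf, hs _ hf.1.1, hf.2]
        simp only [hσ', if_true]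
        have z : ∀ c : ZMod 2, 1 + c + c = 1 := by decide
        exact z c
    have h2 : (oddF (K + 1) V σ ∪ (F c).image (insert v)).card =
        (oddF (K + 1) V σ).card + (F c).card := by
      rw [card_union_of_disjoint, card_image_of_injOn]
      · intro f hf f' hf' h
        simp only [hF, coe_filter, mem_powersetCard, Set.mem_ofPred_eq] at hf hf'
        have hvf : v ∉ f := fun h => hv (hf.1.1 h)
        have hvf' : v ∉ f' := fun h => hv (hf'.1.1 h)
        rw [← erase_insert hvf, ← erase_insert hvf']
        exact congrArg (fun s => s.erase v) h
      · rw [disjoint_left]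
        intro e he he'
        rw [mem_oddF] at he
        rw [mem_image] at he'
        obtain ⟨f, _, rfl⟩ := he'
        exact hv (he.1 (mem_insert_self _ _))
    have h3 := (card_le_card h1).trans (le_bb (k := K + 1) (V := insert v V) (σ := σ'))
    rw [h2, hσ, card_insert_of_notMem hv, hV] at h3
    exact h3
  have k0 := key 0
  have k1 := key 1
  have k0' : (bb (K + 1) n : ℝ) + (F 0).card ≤ bb (K + 1) (n + 1) := by exact_mod_cast k0
  have k1' : (bb (K + 1) n : ℝ) + (F 1).card ≤ bb (K + 1) (n + 1) := by exact_mod_cast k1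
  have k2' : ((F 0).card : ℝ) + (F 1).card = n.choose K := by exact_mod_cast hFc
  linarith

lemma bb_half (K n : ℕ) : ((n.choose (K + 1) : ℕ) : ℝ) / 2 ≤ bb (K + 1) n := by
  induction n with
  | zero => simp
  | succ n ih =>
    have := bb_succ K n
    rw [Nat.choose_succ_succ]
    push_cast
    linarith

lemma bb_mantel {r : ℕ} (hr : 1 ≤ r) (n : ℕ) :
    ((2 * r).factorial : ℝ) * bb (2 * r) n ≤ (n : ℝ) ^ (2 * r) / 2 := by
  obtain ⟨V, σ, hV, hσ⟩ := exists_bb (2 * r) n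
  rw [← hσ, ← hV]
  exact oddF_mantel hr σ

/-- double counting of degrees -/
lemma sum_deg (k : ℕ) (E : Finset (Finset ℕ)) (hE : ∀ e ∈ E, e ⊆ V ∧ e.card = k) :
    ∑ v ∈ V, (E.filter fun e => v ∈ e).card = k * E.card := by
  simp only [card_filter]
  rw [sum_comm]
  rw [sum_congr rfl (g := fun _ => k)]
  · rw [sum_const, smul_eq_mul, mul_comm]
  · intro e he
    rw [← card_filter, ← (hE e he).2]
    congr 1
    ext a; simp only [mem_filter]
    exact ⟨fun h => h.2, fun h => ⟨(hE e he).1 h, h⟩⟩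

lemma bb_pred {r : ℕ} (hr : 1 ≤ r) (n : ℕ) :
    (bb (2 * r) (n + 1) : ℝ) ≤ bb (2 * r) n + ((n + 1 : ℕ) : ℝ) ^ (2 * r - 1) / (2 * (2 * r - 1).factorial) := by
  obtain ⟨V, σ, hV, hσ⟩ := exists_bb (2 * r) (n + 1)
  set E := oddF (2 * r) V σ with hE
  have hs := sum_deg (V := V) (2 * r) E (fun e he => ⟨(mem_oddF.1 he).1, (mem_oddF.1 he).2.1⟩)
  have hVn : V.Nonempty := by rw [← card_pos]; omega
  have hm := oddF_mantel (V := V) hr σ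
  set D : ℝ := ((n + 1 : ℕ) : ℝ) ^ (2 * r - 1) / (2 * (2 * r - 1).factorial) with hD
  have hex : ∃ v ∈ V, ((E.filter fun e => v ∈ e).card : ℝ) ≤ D := by
    by_contra hcon
    push Not at hcon
    have h1 := Finset.sum_lt_sum_of_nonempty hVn hcon
    rw [sum_const, nsmul_eq_mul, hV] at h1
    have h2 : ∑ v ∈ V, ((E.filter fun e => v ∈ e).card : ℝ) = ((2 * r : ℕ) : ℝ) * E.card := by
      exact_mod_cast hs
    rw [h2] at h1
    obtain ⟨K, hK⟩ : ∃ K, 2 * r = K + 1 := ⟨2 * r - 1, by omega⟩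
    rw [← hE, hV] at hm
    rw [hK] at hm h1
    have hD' : D = ((n + 1 : ℕ) : ℝ) ^ K / (2 * K.factorial) := by
      rw [hD, hK]; rfl
    rw [hD'] at h1
    have hf : (0 : ℝ) < K.factorial := by exact_mod_cast Nat.factorial_pos K
    rw [Nat.factorial_succ, pow_succ] at hm
    have h3 : ((n + 1 : ℕ) : ℝ) * (((n + 1 : ℕ) : ℝ) ^ K / (2 * K.factorial)) * K.factorial =
        ((n + 1 : ℕ) : ℝ) ^ K * ((n + 1 : ℕ) : ℝ) / 2 := by field_simp
    have h4 := mul_lt_mul_of_pos_right h1 hf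
    rw [h3] at h4
    push_cast at h4 hm
    linarith
  obtain ⟨v, hv, hvD⟩ := hex
  have h5 : (oddF (2 * r) (V.erase v) σ).card + (E.filter fun e => v ∈ e).card = E.card := by
    rw [← card_filter_add_card_filter_not (s := E) (fun e => v ∈ e), add_comm]
    congr 2
    ext e
    rw [mem_filter, hE, mem_oddF, mem_oddF, subset_erase]; tauto
  have h6 := le_bb (k := 2 * r) (V := V.erase v) (σ := σ)
  rw [card_erase_of_mem hv, hV, Nat.add_sub_cancel] at h6
  have h7 : ((oddF (2 * r) (V.erase v) σ).card : ℝ) + (E.filter fun e => v ∈ e).card = E.card := by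
    exact_mod_cast h5
  have h8 : ((oddF (2 * r) (V.erase v) σ).card : ℝ) ≤ bb (2 * r) n := by exact_mod_cast h6
  rw [← hσ]
  linarith

/-- The extremal number. -/
noncomputable def gg (k n t : ℕ) : ℝ := (n.choose k : ℝ) - ((n - t).choose k : ℝ) + bb k (n - t)

lemma gg_succ (K n t : ℕ) (h : t ≤ n) :
    gg (K + 1) n t + (n.choose K : ℝ) / 2 ≤ gg (K + 1) (n + 1) t := by
  unfold gg
  have h1 := bb_succ K (n - t)
  rw [show n + 1 - t = n - t + 1 by omega, Nat.choose_succ_succ, Nat.choose_succ_succ]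
  have h2 : (((n - t).choose K : ℕ) : ℝ) ≤ n.choose K := by
    exact_mod_cast Nat.choose_le_choose K (by omega)
  push_cast
  linarith

lemma gg_mono (K s n t : ℕ) (h : t ≤ s) (hsn : s ≤ n) :
    gg (K + 1) s t + ((n.choose (K + 1) : ℝ) - (s.choose (K + 1) : ℝ)) / 2 ≤ gg (K + 1) n t := by
  induction n, hsn using Nat.le_induction with
  | base => simp
  | succ n hn ih =>
    have := gg_succ K n t (by omega)
    have h2 : ((n + 1).choose (K + 1) : ℝ) = n.choose K + n.choose (K + 1) := by
      rw [Nat.choose_succ_succ]; push_cast; rfl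
    rw [h2]
    linarith

lemma gg_ge_half (K n t : ℕ) : (n.choose (K + 1) : ℝ) / 2 ≤ gg (K + 1) n t := by
  unfold gg
  have := bb_half K (n - t)
  have h2 : (((n - t).choose (K + 1) : ℕ) : ℝ) ≤ n.choose (K + 1) := by
    exact_mod_cast Nat.choose_le_choose _ (by omega)
  linarith

end

end

section

open Finset
open scoped Classical

section
variable {V : Finset ℕ} {ι κ : Type} [Fintype ι] [Fintype κ]

lemma exists_im (S : Finset ℕ) (h : S.card = Fintype.card ι) : ∃ d : ι → ℕ, im d = S := by
  have h1 := card_im_eq (ι := ι) (V := S) S h le_rfl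
  have h2 : 0 < ((tup S ι).filter fun x => im x = S).card := by
    rw [h1]; exact Nat.factorial_pos _
  obtain ⟨x, hx⟩ := card_pos.1 h2
  exact ⟨x, (mem_filter.1 hx).2⟩

/-- Markov -/
lemma markov (F : (ι → ℕ) → ℝ) (hF : ∀ x, 0 ≤ F x) {c : ℝ} (hc : 0 < c) :
    pr V (fun x => c ≤ F x) ≤ ex V F / c := by
  rw [le_div_iff₀ hc]
  unfold pr
  rw [← ex_mul_right]
  apply ex_mono
  intro x _
  split_ifs with h
  · simpa using h
  · simpa using hF x

/-- A family of half-size subsets meeting every complementary pair has two members with a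
one-element intersection. -/
lemma family_pair {r : ℕ} (hr : 1 ≤ r) {e : Finset ℕ} (he : e.card = 2 * r) (P : Finset ℕ → Prop)
    (hP : ∀ A ⊆ e, A.card = r → P A ∨ P (e \ A)) :
    ∃ D1 D2, D1 ⊆ e ∧ D2 ⊆ e ∧ D1.card = r ∧ D2.card = r ∧ P D1 ∧ P D2 ∧ (D1 ∩ D2).card = 1 := by
  by_contra hcon
  push Not at hcon
  obtain ⟨A, hA1, hA2⟩ := exists_subset_card_eq (s := e) (n := r) (by omega)
  have hD : ∃ D ⊆ e, D.card = r ∧ P D := by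
    rcases hP A hA1 hA2 with h | h
    · exact ⟨A, hA1, hA2, h⟩
    · exact ⟨e \ A, sdiff_subset, by rw [card_sdiff_of_subset hA1]; omega, h⟩
  obtain ⟨D, d1, d2, d3⟩ := hD
  have key : ∀ j, j ≤ r - 1 → ∃ F ⊆ e, F.card = r ∧ P F ∧ (D ∩ F).card = r - j := by
    intro j
    induction j with
    | zero => intro _; exact ⟨D, d1, d2, d3, by simp [d2]⟩
    | succ j ih =>
      intro hj
      obtain ⟨F, f1, f2, f3, f4⟩ := ih (by omega)
      obtain ⟨x, hx⟩ := card_pos.1 (show 0 < (D ∩ F).card by omega)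
      have hu : (D ∪ F).card < e.card := by
        have := card_union_add_card_inter D F
        omega
      obtain ⟨y, hy1, hy2⟩ := exists_mem_notMem_of_card_lt_card hu
      rw [mem_inter] at hx
      rw [mem_union, not_or] at hy2
      have hyF : y ∉ F.erase x := fun h => hy2.2 (mem_of_mem_erase h)
      set F' := insert y (F.erase x) with hF'
      have c1 : F'.card = r := by
        rw [hF', card_insert_of_notMem hyF, card_erase_of_mem hx.2]; omega
      have c2 : F' ⊆ e := insert_subset hy1 ((erase_subset _ _).trans f1)
      have c3 : (e \ F') ∩ F = {x} := by
        ext a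
        simp only [hF', mem_inter, Finset.mem_sdiff, mem_insert, mem_erase, mem_singleton]
        constructor
        · rintro ⟨⟨h1, h2⟩, h3⟩; by_contra h4; exact h2 (Or.inr ⟨h4, h3⟩)
        · rintro rfl
          refine ⟨⟨f1 hx.2, ?_⟩, hx.2⟩
          rintro (h | h)
          · exact hy2.2 (h ▸ hx.2)
          · exact h.1 rfl
      have c4 : P F' := by
        rcases hP F' c2 c1 with h | h
        · exact h
        · exfalso
          have hc : (e \ F').card = r := by rw [card_sdiff_of_subset c2]; omega
          exact hcon (e \ F') F sdiff_subset f1 hc f2 h f3 (by rw [c3]; simp)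
      have c5 : D ∩ F' = (D ∩ F).erase x := by
        ext a
        simp only [hF', mem_inter, mem_insert, mem_erase]
        constructor
        · rintro ⟨h1, rfl | h2⟩
          · exact absurd h1 hy2.1
          · exact ⟨h2.1, h1, h2.2⟩
        · rintro ⟨h1, h2, h3⟩; exact ⟨h2, Or.inr ⟨h1, h3⟩⟩
      refine ⟨F', c2, c1, c4, ?_⟩
      rw [c5, card_erase_of_mem (mem_inter.2 hx)]; omega
  obtain ⟨F, f1, f2, f3, f4⟩ := key (r - 1) le_rfl
  exact hcon D F d1 f1 d2 f2 d3 f3 (by omega)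

variable {Q : Type} [Fintype Q]

/-- Few bad edges compared to missing edges. -/
lemma bad_le {r : ℕ} (hQ : Fintype.card Q + 1 = r) (hV : V.Nonempty) {E M Bd : Finset (Finset ℕ)}
    {W : Finset ℕ} (hWV : W ⊆ V) {σ : ℕ → ZMod 2} {η : ℝ} (hη : 0 ≤ η)
    (hT : ∀ T ⊆ W, ¬ Tri r E T)
    (hM : ∀ e, e ∈ M ↔ e ⊆ W ∧ e.card = 2 * r ∧ ∑ i ∈ e, σ i = 1 ∧ e ∉ E)
    (hB : ∀ e ∈ Bd, e ⊆ W ∧ e.card = 2 * r ∧ ∑ i ∈ e, σ i = 0 ∧ e ∈ E)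
    (hb : ∀ p : ZMod 2, ∀ e : Finset ℕ, e.card = 2 * r → 1 / 3 ≤ pr V (fun B : Q ⊕ Unit → ℕ =>
      sg σ B = p ∧ Function.Injective B ∧ im B ⊆ W ∧ Disjoint (im B) e))
    (hd : ∀ v ∈ V, pr V (fun x : Q ⊕ (Q ⊕ Unit) → ℕ => insert v (im x) ∈ M) ≤ η) :
    (Bd.card : ℝ) ≤ 36 * η * ((2 * r).factorial * M.card) := by
  have hcard : Fintype.card ((Q ⊕ Unit) ⊕ (Q ⊕ Unit)) = 2 * r := by
    simp; omega
  have hcR : Fintype.card (Q ⊕ Unit) = r := by simp; omega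
  set m := pr V (fun x : (Q ⊕ Unit) ⊕ (Q ⊕ Unit) → ℕ => im x ∈ M) with hm
  have hmM := pr_im_mem (ι := (Q ⊕ Unit) ⊕ (Q ⊕ Unit)) hV M (fun e he => by
    have := (hM e).1 he
    exact ⟨this.1.trans hWV, by rw [this.2.1, hcard]⟩)
  rw [← hm, hcard] at hmM
  set c : Finset ℕ → ℝ := fun D => pr V (fun B : Q ⊕ Unit → ℕ => D ∪ im B ∈ M) with hc
  have hc0 : ∀ D, 0 ≤ c D := fun D => pr_nonneg _
  have h1 : pr V (fun d : Q ⊕ Unit → ℕ => 1 / 6 ≤ c (im d)) ≤ 6 * m := by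
    refine (markov (fun d => c (im d)) (fun d => hc0 _) (by norm_num)).trans ?_
    have : m = ex V (fun d : Q ⊕ Unit → ℕ => c (im d)) := by
      rw [hm, pr_sum]; simp only [im_elim, hc]
    rw [this]; apply le_of_eq; ring
  have h2 : ∀ v ∈ V, pr V (fun d : Q → ℕ => 1 / 6 ≤ c (insert v (im d))) ≤ 6 * η := by
    intro v hv
    refine (markov (fun d => c (insert v (im d))) (fun d => hc0 _) (by norm_num)).trans ?_
    have := hd v hv
    rw [pr_sum] at this
    simp only [im_elim, ← insert_union] at this
    have h3 : ex V (fun d : Q → ℕ => c (insert v (im d))) ≤ η := this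
    linarith
  set G : ((Q ⊕ Unit) ⊕ (Q ⊕ Unit) → ℕ) → Prop := fun x => 1 / 6 ≤ c (im (x ∘ Sum.inl)) ∧
    1 / 6 ≤ c (insert (x (Sum.inl (Sum.inr ()))) (im (x ∘ Sum.inr ∘ Sum.inl))) with hG
  have h3 : pr V G ≤ 36 * η * m := by
    rw [pr_sum]
    have : ∀ a ∈ tup V (Q ⊕ Unit), pr V (fun b : Q ⊕ Unit → ℕ => G (Sum.elim a b)) ≤
        (if 1 / 6 ≤ c (im a) then (1 : ℝ) else 0) * (6 * η) := by
      intro a ha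
      split_ifs with h
      · rw [one_mul]
        refine le_trans ?_ (h2 (a (Sum.inr ())) (mem_tup.1 ha _))
        rw [← pr_inl (κ := Unit) hV (fun d : Q → ℕ => 1 / 6 ≤ c (insert (a (Sum.inr ())) (im d)))]
        apply pr_mono
        rintro b _ ⟨_, hb⟩
        exact hb
      · rw [zero_mul]
        refine (pr_mono (Q := fun _ => False) ?_).trans (by simp [pr, ex])
        rintro b _ ⟨hb, _⟩
        apply h
        simpa using hb
    refine (ex_mono this).trans ?_
    rw [ex_mul_right, ex_ite]
    nlinarith
  -- every bad edge gives a tuple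
  have h4 : ∀ e ∈ Bd, ∃ x : (Q ⊕ Unit) ⊕ (Q ⊕ Unit) → ℕ, im x = e ∧ G x := by
    intro e he
    obtain ⟨e1, e2, e3, e4⟩ := hB e he
    have hP : ∀ A ⊆ e, A.card = r → 1 / 6 ≤ c A ∨ 1 / 6 ≤ c (e \ A) := by
      intro A hA1 hA2
      by_contra hcon
      rw [not_or, not_le, not_le] at hcon
      have hC : (e \ A).card = r := by rw [card_sdiff_of_subset hA1]; omega
      have hsum : ∑ i ∈ e \ A, σ i + ∑ i ∈ A, σ i = 0 := by rw [sum_sdiff hA1, e3]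
      have hlt : (1 : ℝ) / 3 ≤ c A + c (e \ A) := by
        refine (hb (∑ i ∈ A, σ i + 1) e e2).trans (pr_le_add ?_)
        rintro B _ ⟨b1, b2, b3, b4⟩
        have hBc : (im B).card = r := by rw [card_im b2, hcR]
        have hBs : ∑ i ∈ im B, σ i = ∑ i ∈ A, σ i + 1 := by
          rw [← b1, im, sum_image (fun x _ y _ h => b2 h)]; rfl
        have dA : Disjoint A (im B) := (b4.mono_right hA1).symm
        have dC : Disjoint (e \ A) (im B) := (b4.mono_right sdiff_subset).symm
        by_contra hno
        rw [not_or, hM, hM] at hno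
        have z : ∀ a c : ZMod 2, c + a = 0 → a + (a + 1) = 1 ∧ c + (a + 1) = 1 := by decide
        obtain ⟨z1, z2⟩ := z _ _ hsum
        have k1 : A ∪ im B ∈ E := by
          by_contra h
          exact hno.1 ⟨union_subset (hA1.trans e1) b3, by rw [card_union_of_disjoint dA]; omega,
            by rw [sum_union dA, hBs, z1], h⟩
        have k2 : (e \ A) ∪ im B ∈ E := by
          by_contra h
          exact hno.2 ⟨union_subset (sdiff_subset.trans e1) b3,
            by rw [card_union_of_disjoint dC]; omega, by rw [sum_union dC, hBs, z2], h⟩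
        refine hT (A ∪ im B ∪ (e \ A)) (union_subset (union_subset (hA1.trans e1) b3)
          (sdiff_subset.trans e1)) ⟨A, im B, e \ A, hA2, hBc, hC, dA, dC.symm, disjoint_sdiff, k1,
          by rwa [union_comm], by rwa [union_sdiff_of_subset hA1], rfl⟩
      linarith
    obtain ⟨D1, D2, a1, a2, a3, a4, a5, a6, a7⟩ := family_pair (by omega) e2 _ hP
    obtain ⟨v, hv⟩ := card_eq_one.1 a7
    have hv12 : v ∈ D1 ∧ v ∈ D2 := by rw [← mem_inter, hv]; simp
    have hcu : (D1 ∪ D2).card + 1 = e.card := by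
      have := card_union_add_card_inter D1 D2
      omega
    have hsub : D1 ∪ D2 ⊆ e := union_subset a1 a2
    obtain ⟨z, hz⟩ : ∃ z, e \ (D1 ∪ D2) = {z} := by
      rw [← card_eq_one, card_sdiff_of_subset hsub]; omega
    obtain ⟨d1, hd1⟩ := exists_im (ι := Q) (D1.erase v) (by rw [card_erase_of_mem hv12.1]; omega)
    obtain ⟨d2, hd2⟩ := exists_im (ι := Q) (D2.erase v) (by rw [card_erase_of_mem hv12.2]; omega)
    have i1 : im (Sum.elim d1 (fun _ : Unit => v)) = D1 := by
      rw [im_snoc]; simp [hd1, insert_erase hv12.1]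
    refine ⟨Sum.elim (Sum.elim d1 (fun _ => v)) (Sum.elim d2 (fun _ => z)), ?_, ?_, ?_⟩
    · rw [im_elim, i1, im_elim, hd2]
      have : im (fun _ : Unit => z) = {z} := by ext a; simp [mem_im, eq_comm]
      rw [this, ← hz, ← sdiff_union_of_subset hsub]
      ext a
      simp only [mem_union, mem_erase, Finset.mem_sdiff]
      by_cases h : a = v
      · subst h; simp [hv12]
      · tauto
    · rw [Sum.elim_comp_inl, i1]; exact a5
    · have : (Sum.elim (Sum.elim d1 (fun _ : Unit => v)) (Sum.elim d2 (fun _ : Unit => z))) ∘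
        Sum.inr ∘ Sum.inl = d2 := rfl
      rw [this, hd2]
      simp only [Sum.elim_inl, Sum.elim_inr]
      rw [insert_erase hv12.2]; exact a6
  choose! X hX using h4
  have h5 : Bd.card ≤ ((tup V ((Q ⊕ Unit) ⊕ (Q ⊕ Unit))).filter G).card := by
    refine card_le_card_of_injOn X ?_ ?_
    · intro e he
      rw [mem_coe, mem_filter]
      exact ⟨im_subset.1 (by rw [(hX e he).1]; exact (hB e he).1.trans hWV), (hX e he).2⟩
    · intro e he e' he' h
      rw [← (hX e he).1, ← (hX e' he').1, h]
  have h6 : (Bd.card : ℝ) ≤ pr V G * (V.card : ℝ) ^ (2 * r) := by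
    have := card_eq_pr hV G
    rw [hcard] at this
    rw [← this]
    have h5' : (Bd.card : ℝ) ≤ (((tup V ((Q ⊕ Unit) ⊕ (Q ⊕ Unit))).filter G).card : ℝ) := by
      exact_mod_cast h5
    refine h5'.trans (le_of_eq ?_)
    congr!
  rw [← hmM]
  have : 0 ≤ (V.card : ℝ) ^ (2 * r) := by positivity
  nlinarith [mul_le_mul_of_nonneg_right h3 this]

end

end

section

open Finset
open scoped Classical
section
variable {V : Finset ℕ} {ι κ : Type} [Fintype ι] [Fintype κ]

lemma pr_deg (hV : V.Nonempty) {k : ℕ} (hι : Fintype.card ι + 1 = k) (E : Finset (Finset ℕ))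
    (hE : ∀ e ∈ E, e ⊆ V ∧ e.card = k) (v : ℕ) :
    pr V (fun x : ι → ℕ => insert v (im x) ∈ E) * (V.card : ℝ) ^ (Fintype.card ι) =
      (Fintype.card ι).factorial * (E.filter fun e => v ∈ e).card := by
  have h := pr_im_mem (ι := ι) hV ((E.filter fun e => v ∈ e).image fun e => e.erase v) (by
    intro e he
    simp only [mem_image, mem_filter] at he
    obtain ⟨f, ⟨hf, hv⟩, rfl⟩ := he
    refine ⟨(erase_subset _ _).trans (hE f hf).1, ?_⟩
    rw [card_erase_of_mem hv, (hE f hf).2]; omega)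
  rw [card_image_of_injOn] at h
  · rw [← h]
    congr 1
    apply pr_congr
    intro x hx
    simp only [mem_image, mem_filter]
    constructor
    · intro h
      refine ⟨_, ⟨h, mem_insert_self _ _⟩, ?_⟩
      rw [erase_insert]
      intro hv
      rw [insert_eq_of_mem hv] at h
      have := (hE _ h).2
      have := card_im_le x
      omega
    · rintro ⟨f, ⟨hf, hv⟩, h⟩
      rw [← h, insert_erase hv]; exact hf
  · intro a ha b hb hab
    simp only [coe_filter, Set.mem_ofPred_eq] at ha hb
    rw [← insert_erase ha.2, ← insert_erase hb.2]
    simp only at hab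
    rw [hab]

lemma choose_ge (hV : V.Nonempty) (k : ℕ) :
    (1 - (k : ℝ) ^ 2 / V.card) * (V.card : ℝ) ^ k ≤ k.factorial * (V.card.choose k : ℝ) := by
  have h := pr_im_mem (ι := Fin k) hV (powersetCard k V) (by
    intro e he; rw [mem_powersetCard] at he; simpa using he)
  simp only [Fintype.card_fin, card_powersetCard] at h
  rw [← h]
  gcongr
  have h1 := pr_not hV (fun x : Fin k → ℕ => ¬ Function.Injective x)
  have h2 := pr_not_inj (ι := Fin k) hV
  simp only [Fintype.card_fin, not_not] at h1 h2
  have h3 : pr V (fun x : Fin k → ℕ => Function.Injective x) ≤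
      pr V (fun x : Fin k → ℕ => im x ∈ powersetCard k V) := by
    apply pr_mono
    intro x hx hi
    rw [mem_powersetCard]
    exact ⟨im_subset.2 hx, by rw [card_im hi]; simp⟩
  linarith

lemma choose_le (n k : ℕ) : (k.factorial : ℝ) * (n.choose k : ℝ) ≤ (n : ℝ) ^ k := by
  rw [← Nat.cast_mul, ← Nat.descFactorial_eq_factorial_mul_choose]
  exact_mod_cast Nat.descFactorial_le_pow n k

lemma choose_pred_ge (hV : V.Nonempty) (K : ℕ) :
    (1 - ((K + 1 : ℕ) : ℝ) ^ 2 / V.card) * (V.card : ℝ) ^ K ≤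
      K.factorial * ((V.card - 1).choose K : ℝ) := by
  have h := choose_ge hV (K + 1)
  have hp : 0 < V.card := hV.card_pos
  have hp' : (0 : ℝ) < V.card := by exact_mod_cast hp
  obtain ⟨n, hn⟩ : ∃ n, V.card = n + 1 := ⟨V.card - 1, by omega⟩
  rw [hn] at h hp' ⊢
  simp only [Nat.add_sub_cancel]
  have h2 : ((K + 1).factorial : ℝ) * ((n + 1).choose (K + 1) : ℝ) =
      ((n + 1 : ℕ) : ℝ) * (K.factorial * (n.choose K : ℝ)) := by
    have := Nat.add_one_mul_choose_eq n K
    rw [Nat.factorial_succ]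
    have h3 : ((n + 1 : ℕ) : ℝ) * (n.choose K : ℝ) = ((n + 1).choose (K + 1) : ℝ) * ((K + 1 : ℕ) : ℝ) := by
      exact_mod_cast this
    push_cast at h3 ⊢
    linear_combination (-(K.factorial : ℝ)) * h3
  rw [h2, pow_succ ((n + 1 : ℕ) : ℝ) K] at h
  refine le_of_mul_le_mul_left ?_ hp'
  linarith

lemma pr_dis_equiv (e : κ ≃ ι) (E : Finset (Finset ℕ)) (σ : ℕ → ZMod 2) :
    pr V (fun x : ι → ℕ => ind E (im x) ≠ sg σ x) =
      pr V (fun x : κ → ℕ => ind E (im x) ≠ sg σ x) := by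
  have := ex_equiv (V := V) e (fun x : κ → ℕ => if ind E (im x) ≠ sg σ x then (1 : ℝ) else 0)
  simp only [im_equiv, sg_equiv] at this
  rw [ex_ite, ex_ite] at this
  exact this

lemma pr_mem_equiv (e : κ ≃ ι) (E : Finset (Finset ℕ)) :
    pr V (fun x : ι → ℕ => im x ∈ E) = pr V (fun x : κ → ℕ => im x ∈ E) := by
  have := ex_equiv (V := V) e (fun x : κ → ℕ => if im x ∈ E then (1 : ℝ) else 0)
  simp only [im_equiv] at this
  rw [ex_ite, ex_ite] at this
  exact this

lemma tri_restrict {r : ℕ} {E0 E : Finset (Finset ℕ)} (h : E0 ⊆ E) {X T : Finset ℕ}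
    (hX : ∀ e ∈ E0, e ⊆ X) (hT : Tri r E0 T) : Tri r E T ∧ T ⊆ X := by
  obtain ⟨A, B, C, h1, h2, h3, h4, h5, h6, h7, h8, h9, rfl⟩ := hT
  refine ⟨⟨A, B, C, h1, h2, h3, h4, h5, h6, h h7, h h8, h h9, rfl⟩, ?_⟩
  exact union_subset (hX _ h7) (subset_union_right.trans (hX _ h8))

/-- Global stability for graphs with bounded matching number. -/
lemma global_stab {ρ : ℕ} (hV : V.Nonempty) {E : Finset (Finset ℕ)} {t : ℕ}
    (hE : ∀ e ∈ E, e ⊆ V ∧ e.card = 2 * (ρ + 1)) (hT : ¬ Mt (ρ + 1) E (t + 1) V) {δ : ℝ}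
    (hδ : 0 < δ) (hδ2 : δ < 1 / 2)
    (hn : 4 * ((ρ + 1 : ℕ) : ℝ) ^ 2 ≤ δ / 2 * V.card)
    (ht : 6 * ((ρ + 1 : ℕ) : ℝ) ^ 2 * t ≤ δ / 2 * V.card)
    (hc : (V.card.choose (2 * (ρ + 1)) : ℝ) / 2 ≤ E.card) :
    1 / 2 - δ ≤ pr V (fun x : Fin (ρ + 1) ⊕ Fin (ρ + 1) → ℕ => im x ∈ E) ∧
    ∃ σ : ℕ → ZMod 2, pr V (fun x : Fin (ρ + 1) ⊕ Fin (ρ + 1) → ℕ =>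
      ind E (im x) ≠ sg σ x) ≤ 118 * (ρ + 1) * δ := by
  obtain ⟨U, hUV, hUc, hU⟩ := maxmatch hT
  have hp' : (0 : ℝ) < V.card := by exact_mod_cast hV.card_pos
  have hcard : Fintype.card (Fin (ρ + 1) ⊕ Fin (ρ + 1)) = 2 * (ρ + 1) := by simp; ring
  have h1 : 1 / 2 - δ / 2 ≤ pr V (fun x : Fin (ρ + 1) ⊕ Fin (ρ + 1) → ℕ => im x ∈ E) := by
    have a1 := pr_im_mem (ι := Fin (ρ + 1) ⊕ Fin (ρ + 1)) hV E (by rw [hcard]; exact hE)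
    rw [hcard] at a1
    have a2 := choose_ge hV (2 * (ρ + 1))
    have a3 : ((2 * (ρ + 1) : ℕ) : ℝ) ^ 2 / V.card ≤ δ / 2 := by
      rw [div_le_iff₀ hp']; push_cast at hn ⊢; nlinarith
    have hpw : (0 : ℝ) < (V.card : ℝ) ^ (2 * (ρ + 1)) := by positivity
    have hf : (0 : ℝ) < ((2 * (ρ + 1)).factorial : ℝ) := by positivity
    refine le_of_mul_le_mul_right ?_ hpw
    rw [a1]
    have : (1 - δ / 2) * (V.card : ℝ) ^ (2 * (ρ + 1)) ≤
        (1 - ((2 * (ρ + 1) : ℕ) : ℝ) ^ 2 / V.card) * (V.card : ℝ) ^ (2 * (ρ + 1)) := by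
      gcongr
    nlinarith
  have h2 : pr V (fun x : Fin (ρ + 1) ⊕ Fin (ρ + 1) → ℕ => ∃ i, x i ∈ U) ≤ δ / 2 := by
    refine (pr_exists_mem hV U).trans ?_
    rw [hcard, mul_div_assoc', div_le_iff₀ hp']
    have : (U.card : ℝ) ≤ 3 * ((ρ + 1 : ℕ) : ℝ) * t := by exact_mod_cast hUc
    push_cast at *
    nlinarith
  set E0 := E.filter fun e => Disjoint e U with hE0
  have himd : ∀ x : Fin (ρ + 1) ⊕ Fin (ρ + 1) → ℕ, ¬ (∃ i, x i ∈ U) → (im x ∈ E ↔ im x ∈ E0) := by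
    intro x hx
    rw [hE0, mem_filter]
    refine ⟨fun h => ⟨h, ?_⟩, fun h => h.1⟩
    rw [disjoint_left]
    intro a ha haU
    obtain ⟨i, rfl⟩ := mem_im.1 ha
    exact hx ⟨i, haU⟩
  have h3 : 1 / 2 - δ ≤ pr V (fun x : Fin (ρ + 1) ⊕ Fin (ρ + 1) → ℕ => im x ∈ E0) := by
    have : pr V (fun x : Fin (ρ + 1) ⊕ Fin (ρ + 1) → ℕ => im x ∈ E) ≤
      pr V (fun x : Fin (ρ + 1) ⊕ Fin (ρ + 1) → ℕ => im x ∈ E0) +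
      pr V (fun x : Fin (ρ + 1) ⊕ Fin (ρ + 1) → ℕ => ∃ i, x i ∈ U) := by
      apply pr_le_add
      intro x _ hx
      by_cases h : ∃ i, x i ∈ U
      · exact Or.inr h
      · exact Or.inl ((himd x h).1 hx)
    linarith
  obtain ⟨σ, hσ⟩ := stability hV (E := E0) (fun e he => (hE e (mem_filter.1 he).1).2) (by
    intro T hTr
    have := tri_restrict (filter_subset _ _) (X := V \ U) (fun e he => by
      rw [mem_filter] at he
      exact subset_sdiff.2 ⟨(hE e he.1).1, he.2⟩) hTr
    exact hU T this.2 this.1) hδ hδ2 h3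
  refine ⟨by linarith, σ, ?_⟩
  have : pr V (fun x : Fin (ρ + 1) ⊕ Fin (ρ + 1) → ℕ => ind E (im x) ≠ sg σ x) ≤
      pr V (fun x : Fin (ρ + 1) ⊕ Fin (ρ + 1) → ℕ => ind E0 (im x) ≠ ∑ i, σ (x i)) +
      pr V (fun x : Fin (ρ + 1) ⊕ Fin (ρ + 1) → ℕ => ∃ i, x i ∈ U) := by
    apply pr_le_add
    intro x _ hx
    by_cases h : ∃ i, x i ∈ U
    · exact Or.inr h
    · left
      have : ind E0 (im x) = ind E (im x) := by
        unfold ind; simp only [himd x h]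
      rw [this]; exact hx
  have hρ : (0 : ℝ) ≤ ρ := by positivity
  nlinarith

end

end

section

open Finset
open scoped Classical
section
variable {V : Finset ℕ}

lemma im_unit (x : Unit → ℕ) : im x = {x ()} := by
  unfold im
  rw [Finset.univ_unique, image_singleton]

set_option maxHeartbeats 4000000 in
/-- Local structure around every vertex. -/
lemma local_struct {ρ : ℕ} (hV : V.Nonempty) {E : Finset (Finset ℕ)} {t : ℕ}
    (hE : ∀ e ∈ E, e ⊆ V ∧ e.card = 2 * (ρ + 1)) (hT : ¬ Mt (ρ + 1) E (t + 1) V)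
    {η β δ : ℝ} (hη : 0 < η) (hη1 : η ≤ 1) (hβ : β = η / (24 * (ρ + 1)))
    (hδ : δ = β ^ 2 / (200 * (ρ + 1)))
    (hn : 4 * ((ρ + 1 : ℕ) : ℝ) ^ 2 ≤ δ / 2 * V.card)
    (ht : 6 * ((ρ + 1 : ℕ) : ℝ) ^ 2 * t ≤ δ / 2 * V.card)
    (hc : (V.card.choose (2 * (ρ + 1)) : ℝ) / 2 ≤ E.card)
    (hdeg : ∀ v ∈ V, (1 / 2 - β ^ 2 / 2) * ((V.card - 1).choose (2 * ρ + 1) : ℝ) ≤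
      (E.filter fun e => v ∈ e).card) :
    ∃ L ⊆ V, ∃ σ : ℕ → ZMod 2,
      (∀ v ∈ V \ L, pr V (fun x : Fin ρ ⊕ (Fin ρ ⊕ Unit) → ℕ =>
        ind E (insert v (im x)) ≠ σ v + sg σ x) ≤ η) ∧
      (∀ p, 1 / 2 - η ≤ pr V (fun x : Fin ρ ⊕ Unit → ℕ => sg σ x = p)) ∧
      (∀ v ∈ L, ∀ W : Finset ℕ, W.card ≤ 3 * (ρ + 1) * (t + 1) → v ∉ W →
      ∃ T ⊆ V, Tri (ρ + 1) E T ∧ v ∈ T ∧ Disjoint T W) := by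
  have hp' : (0 : ℝ) < V.card := by exact_mod_cast hV.card_pos
  have hρ : (0 : ℝ) ≤ ρ := by positivity
  have hβ0 : 0 < β := by rw [hβ]; positivity
  have hβη : 24 * (ρ + 1) * β = η := by rw [hβ]; field_simp
  have hβ24 : β ≤ 1 / 24 := by nlinarith
  have hδ0 : 0 < δ := by rw [hδ]; positivity
  have hδβ : 200 * (ρ + 1) * δ = β ^ 2 := by rw [hδ]; field_simp
  have hββ : β ^ 2 ≤ β / 24 := by nlinarith
  have hδs : 200 * δ ≤ β ^ 2 := by nlinarith
  obtain ⟨hden, σ, hσ⟩ := global_stab hV hE hT hδ0 (by nlinarith) hn ht hc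
  have hcQ : Fintype.card (Fin ρ ⊕ (Fin ρ ⊕ Unit)) = 2 * ρ + 1 := by simp; ring
  have e1 : (Fin (ρ + 1) ⊕ Fin (ρ + 1)) ≃ ((Fin ρ ⊕ Unit) ⊕ (Fin ρ ⊕ Unit)) :=
    Fintype.equivOfCardEq (by simp)
  have e2 : ((Fin ρ ⊕ Unit) ⊕ (Fin ρ ⊕ Unit)) ≃ Unit ⊕ (Fin ρ ⊕ (Fin ρ ⊕ Unit)) :=
    Fintype.equivOfCardEq (by simp; ring)
  have hσ : pr V (fun x : Fin (ρ + 1) ⊕ Fin (ρ + 1) → ℕ => ind E (im x) ≠ sg σ x) ≤ β ^ 2 := by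
    nlinarith
  have hden : 1 / 2 - β ^ 2 ≤ pr V (fun x : Fin (ρ + 1) ⊕ Fin (ρ + 1) → ℕ => im x ∈ E) := by
    nlinarith
  rw [← pr_dis_equiv e1] at hσ
  rw [← pr_mem_equiv e1] at hden
  have hdeg' : ∀ v ∈ V, 1 / 2 - β ^ 2 ≤
      pr V (fun x : Fin ρ ⊕ (Fin ρ ⊕ Unit) → ℕ => insert v (im x) ∈ E) := by
    intro v hv
    have a1 := pr_deg (ι := Fin ρ ⊕ (Fin ρ ⊕ Unit)) hV (k := 2 * (ρ + 1)) (by rw [hcQ]; ring) E hE v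
    rw [hcQ] at a1
    have a2 := choose_pred_ge hV (2 * ρ + 1)
    have a3 : ((2 * ρ + 1 + 1 : ℕ) : ℝ) ^ 2 / V.card ≤ β ^ 2 / 2 := by
      rw [div_le_iff₀ hp']; push_cast at hn ⊢; nlinarith
    have hpw : (0 : ℝ) < (V.card : ℝ) ^ (2 * ρ + 1) := by positivity
    have hf : (0 : ℝ) < ((2 * ρ + 1).factorial : ℝ) := by positivity
    refine le_of_mul_le_mul_right ?_ hpw
    rw [a1]
    have a4 : (1 - β ^ 2 / 2) * (V.card : ℝ) ^ (2 * ρ + 1) ≤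
        (2 * ρ + 1).factorial * ((V.card - 1).choose (2 * ρ + 1) : ℝ) := by
      refine le_trans ?_ a2
      gcongr
    have a5 := mul_le_mul_of_nonneg_left (hdeg v hv) hf.le
    have a6 : (1 / 2 - β ^ 2 / 2) * ((1 - β ^ 2 / 2) * (V.card : ℝ) ^ (2 * ρ + 1)) ≤
      (1 / 2 - β ^ 2 / 2) * ((2 * ρ + 1).factorial * ((V.card - 1).choose (2 * ρ + 1) : ℝ)) := by
      gcongr
      nlinarith
    refine le_trans ?_ (a6.trans (by linarith))
    rw [← mul_assoc]
    gcongr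
    nlinarith [sq_nonneg (β ^ 2)]
  set cop : ℕ → ℝ := fun v => pr V (fun x : Fin ρ ⊕ ((Fin ρ ⊕ Unit) ⊕ (Fin ρ ⊕ Unit)) → ℕ =>
      insert v (im (x ∘ Sum.inl) ∪ im (x ∘ Sum.inr ∘ Sum.inl)) ∈ E ∧
      insert v (im (x ∘ Sum.inl) ∪ im (x ∘ Sum.inr ∘ Sum.inr)) ∈ E ∧
      im (x ∘ Sum.inr) ∈ E) with hcop
  have hvert : ∀ v, ∃ c, v ∈ V → cop v ≤ β ^ 2 → pr V (fun x : Fin ρ ⊕ (Fin ρ ⊕ Unit) → ℕ =>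
      ind E (insert v (im x)) ≠ sg σ x + c) ≤ 12 * β := by
    intro v
    by_cases h : v ∈ V ∧ cop v ≤ β ^ 2
    · obtain ⟨c, hc⟩ := vertex hV σ hβ0 (by linarith) v hσ hden (hdeg' v h.1) h.2
      exact ⟨c, fun _ _ => hc⟩
    · exact ⟨0, fun h1 h2 => absurd ⟨h1, h2⟩ h⟩
  choose c hc using hvert
  set L := V.filter fun v => β ^ 2 < cop v with hL
  set σ' : ℕ → ZMod 2 := fun v => if v ∈ V \ L then c v else σ v with hσ'
  have hVL : ∀ v, v ∈ V \ L ↔ v ∈ V ∧ cop v ≤ β ^ 2 := by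
    intro v
    simp only [hL, Finset.mem_sdiff, mem_filter, not_and, not_lt]
    tauto
  set Fl := V.filter fun v => σ' v ≠ σ v with hFl
  have hFlc : (Fl.card : ℝ) / V.card ≤ 2 * β ^ 2 := by
    rw [pr_dis_equiv e2.symm] at hσ
    rw [pr_sum] at hσ
    have m := markov (V := V) (ι := Unit) (fun a => pr V (fun b : Fin ρ ⊕ (Fin ρ ⊕ Unit) → ℕ =>
      ind E (im (Sum.elim a b)) ≠ sg σ (Sum.elim a b))) (fun _ => pr_nonneg _)
      (c := 1 / 2) (by norm_num)
    have m2 : pr V (fun x : Unit → ℕ => x () ∈ Fl) ≤ pr V (fun x : Unit → ℕ => 1 / 2 ≤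
        pr V (fun b : Fin ρ ⊕ (Fin ρ ⊕ Unit) → ℕ =>
        ind E (im (Sum.elim x b)) ≠ sg σ (Sum.elim x b))) := by
      apply pr_mono
      intro x hx hxF
      rw [hFl, mem_filter] at hxF
      obtain ⟨h1, h2⟩ := hxF
      have h3 : x () ∈ V \ L := by
        by_contra h3
        apply h2
        simp only [hσ', h3, if_false]
      have h4 : σ' (x ()) = c (x ()) := by simp only [hσ', h3, if_true]
      have h5 := hc (x ()) h1 ((hVL _).1 h3).2
      rw [h4] at h2
      have h6 := pr_not hV (fun b : Fin ρ ⊕ (Fin ρ ⊕ Unit) → ℕ =>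
        ind E (insert (x ()) (im b)) ≠ sg σ b + c (x ()))
      have h7 : pr V (fun b : Fin ρ ⊕ (Fin ρ ⊕ Unit) → ℕ =>
          ¬ (ind E (insert (x ()) (im b)) ≠ sg σ b + c (x ()))) ≤
          pr V (fun b : Fin ρ ⊕ (Fin ρ ⊕ Unit) → ℕ =>
          ind E (im (Sum.elim x b)) ≠ sg σ (Sum.elim x b)) := by
        apply pr_mono
        intro b _ hb
        rw [not_not] at hb
        have i1 : im (Sum.elim x b) = insert (x ()) (im b) := by
          rw [im_elim, im_unit]; rfl
        have i2 : sg σ (Sum.elim x b) = σ (x ()) + sg σ b := by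
          rw [sg_elim]; simp [sg]
        rw [i1, i2, hb]
        intro h
        apply h2
        rw [add_comm] at h
        exact add_right_cancel h
      linarith
    have m3 : pr V (fun x : Unit → ℕ => x () ∈ Fl) = (Fl.card : ℝ) / V.card := by
      have := pr_im_mem (ι := Unit) hV (Fl.image fun v => {v}) (by
        intro e he
        simp only [mem_image] at he
        obtain ⟨v, hv, rfl⟩ := he
        simp only [singleton_subset_iff, card_singleton, Fintype.card_unit, and_true]
        exact (mem_filter.1 hv).1)
      rw [card_image_of_injective _ singleton_injective] at this
      simp only [Fintype.card_unit, pow_one, Nat.factorial_one, Nat.cast_one, one_mul] at this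
      rw [eq_div_iff hp'.ne', ← this]
      congr 1
      apply pr_congr
      intro x _
      rw [im_unit]; simp
    rw [← m3]
    refine (m2.trans m).trans ?_
    rw [div_le_iff₀ (by norm_num)]
    linarith
  have hsg : ∀ (ι : Type) [Fintype ι] (x : ι → ℕ), x ∈ tup V ι → ¬ (∃ i, x i ∈ Fl) →
      sg σ' x = sg σ x := by
    intro ι _ x hx h
    unfold sg
    apply sum_congr rfl
    intro i _
    by_contra h2
    exact h ⟨i, mem_filter.2 ⟨mem_tup.1 hx i, h2⟩⟩
  refine ⟨L, filter_subset _ _, σ', ?_, ?_, ?_⟩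
  · intro v hv
    have h4 : σ' v = c v := by simp only [hσ', hv, if_true]
    have h5 := hc v ((hVL _).1 hv).1 ((hVL _).1 hv).2
    have h6 := pr_exists_mem (ι := Fin ρ ⊕ (Fin ρ ⊕ Unit)) hV Fl
    rw [hcQ] at h6
    refine (pr_le_add (P := fun x : Fin ρ ⊕ (Fin ρ ⊕ Unit) → ℕ =>
      ind E (insert v (im x)) ≠ sg σ x + c v) (Q := fun x => ∃ i, x i ∈ Fl) ?_).trans ?_
    · intro x hx h
      by_cases h7 : ∃ i, x i ∈ Fl
      · exact Or.inr h7
      · left; rw [h4, hsg _ _ hx h7, add_comm] at h; exact h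
    · have : ((2 * ρ + 1 : ℕ) : ℝ) * (Fl.card / V.card) ≤ ((2 * ρ + 1 : ℕ) : ℝ) * (2 * β ^ 2) := by
        gcongr
      push_cast at this h6
      nlinarith
  · intro p
    have h5 := class_dens hV σ hβ0.le hσ hden (p + 1)
    have h6 := pr_exists_mem (ι := Fin ρ ⊕ Unit) hV Fl
    have h7 := pr_not hV (fun x : Fin ρ ⊕ Unit → ℕ => sg σ' x = p)
    have h8 : pr V (fun x : Fin ρ ⊕ Unit → ℕ => ¬ sg σ' x = p) ≤
        pr V (fun x : Fin ρ ⊕ Unit → ℕ => sg σ x = p + 1) +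
        pr V (fun x : Fin ρ ⊕ Unit → ℕ => ∃ i, x i ∈ Fl) := by
      apply pr_le_add
      intro x hx h
      by_cases h9 : ∃ i, x i ∈ Fl
      · exact Or.inr h9
      · left; rw [hsg _ _ hx h9] at h; exact z2_ne.1 h
    have : ((ρ + 1 : ℕ) : ℝ) * (Fl.card / V.card) ≤ ((ρ + 1 : ℕ) : ℝ) * (2 * β ^ 2) := by
      gcongr
    simp only [Fintype.card_sum, Fintype.card_fin, Fintype.card_unit] at h6
    push_cast at this h6
    nlinarith
  · intro v hv W hW hvW
    rw [hL, mem_filter] at hv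
    obtain ⟨hvV, hv⟩ := hv
    by_contra hcon
    have h6 := pr_exists_mem (ι := Fin ρ ⊕ ((Fin ρ ⊕ Unit) ⊕ (Fin ρ ⊕ Unit))) hV W
    have h7 : cop v ≤ pr V (fun x : Fin ρ ⊕ ((Fin ρ ⊕ Unit) ⊕ (Fin ρ ⊕ Unit)) → ℕ =>
        ∃ i, x i ∈ W) := by
      apply pr_mono
      rintro x hx ⟨hab, hac, hbc⟩
      by_contra hW'
      apply hcon
      have := tri_of (r := ρ + 1) (fun e he => (hE e he).2) (A := insert v (im (x ∘ Sum.inl)))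
        (B := im (x ∘ Sum.inr ∘ Sum.inl)) (C := im (x ∘ Sum.inr ∘ Sum.inr))
        ((card_insert_le _ _).trans (by
          have := card_im_le (x ∘ Sum.inl); simp only [Fintype.card_fin] at this; omega))
        (by have := card_im_le (x ∘ Sum.inr ∘ Sum.inl); simpa using this)
        (by have := card_im_le (x ∘ Sum.inr ∘ Sum.inr); simpa using this)
        (by rw [insert_union]; exact hab) (by
          rw [im_split] at hbc; exact hbc) (by rw [insert_union]; exact hac)
      have hI : insert v (im (x ∘ Sum.inl)) ∪ im (x ∘ Sum.inr ∘ Sum.inl) ∪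
          im (x ∘ Sum.inr ∘ Sum.inr) = insert v (im x) := by
        rw [im_split x, im_split (x ∘ Sum.inr)]
        simp only [insert_union, union_assoc]
        rfl
      rw [hI] at this
      refine ⟨_, ?_, this, mem_insert_self _ _, ?_⟩
      · exact insert_subset hvV (im_subset.2 hx)
      · rw [disjoint_insert_left, disjoint_left]
        refine ⟨hvW, ?_⟩
        intro a ha haW
        obtain ⟨i, rfl⟩ := mem_im.1 ha
        exact hW' ⟨i, haW⟩
    have h8 : (Fintype.card (Fin ρ ⊕ ((Fin ρ ⊕ Unit) ⊕ (Fin ρ ⊕ Unit))) : ℝ) *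
        (W.card / V.card) ≤ β ^ 2 := by
      have hW2 : (W.card : ℝ) ≤ 3 * (ρ + 1) * (t + 1) := by exact_mod_cast hW
      simp only [Fintype.card_sum, Fintype.card_fin, Fintype.card_unit]
      push_cast at hn ht ⊢
      rw [mul_div_assoc', div_le_iff₀ hp']
      have h9 : (ρ + (ρ + 1 + (ρ + 1)) : ℝ) * W.card ≤ (3 * (ρ + 1)) * (3 * (ρ + 1) * (t + 1)) := by
        gcongr; linarith
      nlinarith
    linarith

end

end

section

open Finset
open scoped Classical
section
variable {V : Finset ℕ} {ι κ : Type} [Fintype ι] [Fintype κ]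

lemma gain_step {ρ a n t : ℕ} (h1 : a + 1 ≤ n) (h2 : n ≤ a + 1 + t)
    (hn : 1000 * (ρ + 1) ^ 2 ≤ n) (ht : 1000 * (ρ + 1) ^ 2 * t ≤ n) :
    (n : ℝ) ^ (2 * ρ + 1) / (8 * (2 * ρ + 1).factorial) ≤
      (((a + 1).choose (2 * (ρ + 1)) : ℝ) - a.choose (2 * (ρ + 1))) -
      ((bb (2 * (ρ + 1)) (a + 1) : ℝ) - bb (2 * (ρ + 1)) a) := by
  have b := bb_pred (r := ρ + 1) (by omega) a
  have e1 : 2 * (ρ + 1) - 1 = 2 * ρ + 1 := by omega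
  rw [e1] at b
  have e2 : ((a + 1).choose (2 * (ρ + 1)) : ℝ) = a.choose (2 * ρ + 1) + a.choose (2 * (ρ + 1)) := by
    have : 2 * (ρ + 1) = 2 * ρ + 1 + 1 := by ring
    rw [this, Nat.choose_succ_succ]; push_cast; ring
  have hc := choose_pred_ge (V := Finset.range (a + 1)) ⟨0, by simp⟩ (2 * ρ + 1)
  rw [card_range, Nat.add_sub_cancel] at hc
  have hn' : 1000 * ((ρ : ℝ) + 1) ^ 2 ≤ n := by exact_mod_cast hn
  have ht' : 1000 * ((ρ : ℝ) + 1) ^ 2 * t ≤ n := by exact_mod_cast ht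
  have hρ : (0 : ℝ) ≤ ρ := by positivity
  have htn : 1000 * (t : ℝ) ≤ n := by
    have h0 : (0 : ℝ) ≤ t := by positivity
    have h : (1 : ℝ) ≤ ((ρ : ℝ) + 1) ^ 2 := by nlinarith
    nlinarith [mul_le_mul_of_nonneg_right h h0]
  have h1' : (a : ℝ) + 1 ≤ n := by exact_mod_cast h1
  have h2' : (n : ℝ) ≤ a + 1 + t := by exact_mod_cast h2
  have hn0 : (0 : ℝ) < n := by nlinarith
  have hbern : (n : ℝ) ^ (2 * ρ + 1) / 2 ≤ ((a + 1 : ℕ) : ℝ) ^ (2 * ρ + 1) := by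
    have h3 := one_add_mul_le_pow (a := -(t / n : ℝ)) (by
      have : (t : ℝ) / n ≤ 1 := by rw [div_le_one hn0]; linarith
      linarith) (2 * ρ + 1)
    have h4 : (1 / 2 : ℝ) ≤ 1 + ((2 * ρ + 1 : ℕ) : ℝ) * -(t / n : ℝ) := by
      have : ((2 * ρ + 1 : ℕ) : ℝ) * (t / n : ℝ) ≤ 1 / 2 := by
        rw [mul_div_assoc', div_le_iff₀ hn0]
        push_cast
        have : (0 : ℝ) ≤ t := by positivity
        nlinarith
      linarith
    have h5 : (n : ℝ) ^ (2 * ρ + 1) * (1 / 2) ≤ (n : ℝ) ^ (2 * ρ + 1) * (1 + -(t / n : ℝ)) ^ (2 * ρ + 1) :=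
      by gcongr; linarith
    rw [← mul_pow] at h5
    have h6 : (n : ℝ) * (1 + -(t / n : ℝ)) = n - t := by field_simp; ring
    rw [h6] at h5
    have h7 : ((n : ℝ) - t) ^ (2 * ρ + 1) ≤ ((a + 1 : ℕ) : ℝ) ^ (2 * ρ + 1) := by
      apply pow_le_pow_left₀
      · linarith
      · push_cast; linarith
    linarith
  have hk : (3 / 4 : ℝ) ≤ 1 - ((2 * ρ + 1 + 1 : ℕ) : ℝ) ^ 2 / ((a + 1 : ℕ) : ℝ) := by
    have : ((2 * ρ + 1 + 1 : ℕ) : ℝ) ^ 2 / ((a + 1 : ℕ) : ℝ) ≤ 1 / 4 := by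
      rw [div_le_iff₀ (by positivity)]
      push_cast
      nlinarith
    linarith
  have hf : (0 : ℝ) < ((2 * ρ + 1).factorial : ℝ) := by positivity
  have hp : (0 : ℝ) ≤ ((a + 1 : ℕ) : ℝ) ^ (2 * ρ + 1) := by positivity
  have h8 : 3 / 4 * ((a + 1 : ℕ) : ℝ) ^ (2 * ρ + 1) ≤ (2 * ρ + 1).factorial * (a.choose (2 * ρ + 1) : ℝ) :=
    le_trans (by gcongr) hc
  have h9 : 3 / 4 * ((a + 1 : ℕ) : ℝ) ^ (2 * ρ + 1) / (2 * ρ + 1).factorial ≤ (a.choose (2 * ρ + 1) : ℝ) := by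
    rw [div_le_iff₀ hf]; linarith
  have h10 : (n : ℝ) ^ (2 * ρ + 1) / (8 * (2 * ρ + 1).factorial) ≤
      3 / 4 * ((a + 1 : ℕ) : ℝ) ^ (2 * ρ + 1) / (2 * ρ + 1).factorial -
      ((a + 1 : ℕ) : ℝ) ^ (2 * ρ + 1) / (2 * (2 * ρ + 1).factorial) := by
    have : 3 / 4 * ((a + 1 : ℕ) : ℝ) ^ (2 * ρ + 1) / (2 * ρ + 1).factorial -
      ((a + 1 : ℕ) : ℝ) ^ (2 * ρ + 1) / (2 * (2 * ρ + 1).factorial) =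
      (2 * ((a + 1 : ℕ) : ℝ) ^ (2 * ρ + 1)) / (8 * (2 * ρ + 1).factorial) := by
      field_simp; ring
    rw [this]
    gcongr
    linarith
  rw [e2]
  linarith

lemma gain {ρ s n t : ℕ} (h2 : n ≤ s + t)
    (hn : 1000 * (ρ + 1) ^ 2 ≤ n) (ht : 1000 * (ρ + 1) ^ 2 * t ≤ n) (m : ℕ) (hm : s + m ≤ n) :
    m * ((n : ℝ) ^ (2 * ρ + 1) / (8 * (2 * ρ + 1).factorial)) ≤
      (((s + m).choose (2 * (ρ + 1)) : ℝ) - s.choose (2 * (ρ + 1))) -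
      ((bb (2 * (ρ + 1)) (s + m) : ℝ) - bb (2 * (ρ + 1)) s) := by
  induction m with
  | zero => simp
  | succ m ih =>
    have a1 := ih (by omega)
    have a2 := gain_step (a := s + m) (n := n) (t := t) (by omega) (by omega) hn ht
    rw [← add_assoc]
    push_cast at a1 a2 ⊢
    linarith

lemma sum_insert_im {v : ℕ} {x : ι → ℕ} (h : (insert v (im x)).card = Fintype.card ι + 1)
    (σ : ℕ → ZMod 2) : ∑ i ∈ insert v (im x), σ i = σ v + sg σ x := by
  have h1 := card_im_le x
  have hv : v ∉ im x := by
    intro hv; rw [insert_eq_of_mem hv] at h; omega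
  rw [card_insert_of_notMem hv] at h
  rw [sum_insert hv]
  congr 1
  have hi := inj_of_card_im (x := x) (by omega)
  unfold im sg
  rw [sum_image (by intro a _ b _ h; exact hi h)]

lemma card_meet (L : Finset ℕ) (hL : L ⊆ V) (k : ℕ) :
    (((powersetCard k V).filter fun e => ¬ Disjoint e L).card : ℝ) =
      (V.card.choose k : ℝ) - ((V.card - L.card).choose k : ℝ) := by
  have h := card_filter_add_card_filter_not (s := powersetCard k V) (fun e => Disjoint e L)
  have h2 : (powersetCard k V).filter (fun e => Disjoint e L) = powersetCard k (V \ L) := by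
    ext e
    simp only [mem_filter, mem_powersetCard, subset_sdiff]
    tauto
  rw [h2, card_powersetCard, card_powersetCard, card_sdiff_of_subset hL] at h
  have h3 : (((V.card - L.card).choose k : ℕ) : ℝ) +
    (((powersetCard k V).filter fun e => ¬ Disjoint e L).card : ℝ) = (V.card.choose k : ℝ) := by
    rw [← h]; push_cast; congr!
  linarith

end

end

section

open Finset
open scoped Classical
section
variable {V : Finset ℕ}

/-- The structure that we want to prove. -/
def Good (k t : ℕ) (V : Finset ℕ) (E : Finset (Finset ℕ)) : Prop :=
  (E.card : ℝ) = gg k V.card t ∧ ∃ L ⊆ V, L.card = t ∧ ∃ σ : ℕ → ZMod 2,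
    (∀ e ⊆ V, e.card = k → (e ∈ E ↔ ¬ Disjoint e L ∨ ∑ i ∈ e, σ i = 1)) ∧
    (oddF k (V \ L) σ).card = bb k (V.card - t)

set_option maxHeartbeats 4000000 in
lemma post {ρ : ℕ} (hV : V.Nonempty) {E : Finset (Finset ℕ)} {t : ℕ}
    (hE : ∀ e ∈ E, e ⊆ V ∧ e.card = 2 * (ρ + 1)) (hT : ¬ Mt (ρ + 1) E (t + 1) V)
    (hn : 1000 * (ρ + 1) ^ 2 ≤ V.card) (ht : 1000 * (ρ + 1) ^ 2 * t ≤ V.card)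
    {η : ℝ} (hη : η = 1 / (72 * (2 * (ρ + 1)).factorial))
    {L : Finset ℕ} (hLV : L ⊆ V) {σ : ℕ → ZMod 2}
    (h1 : ∀ v ∈ V \ L, pr V (fun x : Fin ρ ⊕ (Fin ρ ⊕ Unit) → ℕ =>
        ind E (insert v (im x)) ≠ σ v + sg σ x) ≤ η)
    (h2 : ∀ p, 1 / 2 - η ≤ pr V (fun x : Fin ρ ⊕ Unit → ℕ => sg σ x = p))
    (h3 : ∀ v ∈ L, ∀ W : Finset ℕ, W.card ≤ 3 * (ρ + 1) * (t + 1) → v ∉ W →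
      ∃ T ⊆ V, Tri (ρ + 1) E T ∧ v ∈ T ∧ Disjoint T W)
    (hg : gg (2 * (ρ + 1)) V.card t ≤ E.card) : Good (2 * (ρ + 1)) t V E := by
  have hn0 : (0 : ℝ) < V.card := by exact_mod_cast hV.card_pos
  have hn' : 1000 * ((ρ : ℝ) + 1) ^ 2 ≤ V.card := by exact_mod_cast hn
  have ht' : 1000 * ((ρ : ℝ) + 1) ^ 2 * t ≤ V.card := by exact_mod_cast ht
  have hρ : (0 : ℝ) ≤ ρ := by positivity
  have hη0 : 0 < η := by rw [hη]; positivity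
  have hfac : 2 * ((ρ : ℝ) + 1) ≤ (2 * (ρ + 1)).factorial := by
    exact_mod_cast Nat.self_le_factorial _
  have hηf : 72 * (η * (2 * (ρ + 1)).factorial) = 1 := by
    rw [hη]; field_simp
  have hηρ : 144 * (η * (ρ + 1)) ≤ 1 := by nlinarith
  have hη12 : η ≤ 1 / 12 := by nlinarith
  -- the heavy set
  have hLt : L.card ≤ t := by
    by_contra hcon
    obtain ⟨L', hL', hc⟩ := exists_subset_card_eq (s := L) (n := t + 1) (by omega)
    apply hT
    have := greedy (V := V) (r := ρ + 1) (by omega) (L := L') (E := E) (t := t)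
      (fun v hv => h3 v (hL' hv)) (j := 0) (by omega) trivial
    rwa [hc, zero_add] at this
  obtain ⟨t', rfl⟩ := Nat.exists_eq_add_of_le hLt
  have hT' : ¬ Mt (ρ + 1) E (t' + 1) (V \ L) := by
    intro hM
    apply hT
    have := greedy (V := V) (r := ρ + 1) (by omega) (L := L) (E := E) (t := L.card + t')
      h3 (j := t' + 1) (by omega) hM
    rwa [show t' + 1 + L.card = L.card + t' + 1 by ring] at this
  obtain ⟨U, hUV, hUc, hU⟩ := maxmatch hT'
  set W := (V \ L) \ U with hW
  have hWVL : W ⊆ V \ L := sdiff_subset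
  have hWV : W ⊆ V := hWVL.trans sdiff_subset
  have hcQ : Fintype.card (Fin ρ ⊕ (Fin ρ ⊕ Unit)) = 2 * ρ + 1 := by simp; ring
  set M := (oddF (2 * (ρ + 1)) W σ).filter fun e => e ∉ E with hMdef
  set Bd := E.filter fun e => e ⊆ W ∧ ∑ i ∈ e, σ i = 0 with hBd
  have hbad : (Bd.card : ℝ) ≤ 36 * η * ((2 * (ρ + 1)).factorial * M.card) := by
    refine bad_le (Q := Fin ρ) (E := E) (by simp) hV hWV hη0.le hU (σ := σ) ?_ ?_ ?_ ?_
    · intro e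
      rw [hMdef, mem_filter, mem_oddF]; tauto
    · intro e he
      rw [hBd, mem_filter] at he
      exact ⟨he.2.1, (hE e he.1).2, he.2.2, he.1⟩
    · intro p e he
      have a1 := pr_not_inj (ι := Fin ρ ⊕ Unit) hV
      have a2 := pr_exists_mem (ι := Fin ρ ⊕ Unit) hV (L ∪ U ∪ e)
      have a3 : pr V (fun x : Fin ρ ⊕ Unit → ℕ => sg σ x = p) ≤
        pr V (fun B : Fin ρ ⊕ Unit → ℕ =>
          sg σ B = p ∧ Function.Injective B ∧ im B ⊆ W ∧ Disjoint (im B) e) +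
        pr V (fun B : Fin ρ ⊕ Unit → ℕ => ¬ Function.Injective B ∨ ∃ i, B i ∈ L ∪ U ∪ e) := by
        apply pr_le_add
        intro x hx hs
        by_cases hcc : ¬ Function.Injective x ∨ ∃ i, x i ∈ L ∪ U ∪ e
        · exact Or.inr hcc
        · left
          push Not at hcc
          refine ⟨hs, hcc.1, ?_, ?_⟩
          · intro a ha
            obtain ⟨i, rfl⟩ := mem_im.1 ha
            have := hcc.2 i
            simp only [mem_union, not_or] at this
            rw [hW, Finset.mem_sdiff, Finset.mem_sdiff]
            exact ⟨⟨mem_tup.1 hx i, this.1.1⟩, this.1.2⟩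
          · rw [disjoint_left]
            intro a ha hae
            obtain ⟨i, rfl⟩ := mem_im.1 ha
            exact hcc.2 i (mem_union_right _ hae)
      have a4 := pr_or_le (V := V) (fun B : Fin ρ ⊕ Unit → ℕ => ¬ Function.Injective B)
        (fun B => ∃ i, B i ∈ L ∪ U ∪ e)
      simp only [Fintype.card_sum, Fintype.card_fin, Fintype.card_unit] at a1 a2
      have a5 : ((ρ + 1 : ℕ) : ℝ) ^ 2 / V.card ≤ 1 / 1000 := by
        rw [div_le_iff₀ hn0]; push_cast; linarith
      have a6 : ((ρ + 1 : ℕ) : ℝ) * ((L ∪ U ∪ e).card / V.card) ≤ 1 / 100 := by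
        rw [mul_div_assoc', div_le_iff₀ hn0]
        have c1 : (L ∪ U ∪ e).card ≤ 3 * (ρ + 1) * (L.card + t') + 2 * (ρ + 1) := by
          have := card_union_le (L ∪ U) e
          have := card_union_le L U
          nlinarith
        have c2 : ((L ∪ U ∪ e).card : ℝ) ≤ 3 * (ρ + 1) * ((L.card + t' : ℕ) : ℝ) + 2 * (ρ + 1) := by
          exact_mod_cast c1
        push_cast at ht' c2 ⊢
        nlinarith
      have := h2 p
      linarith
    · intro v hv
      by_cases hvW : v ∈ W
      · refine le_trans (pr_mono ?_) (h1 v (hWVL hvW))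
        intro x hx hxM
        rw [hMdef, mem_filter, mem_oddF] at hxM
        rw [ind_eq_zero.2 hxM.2, ← sum_insert_im (by rw [hcQ, hxM.1.2.1]; ring), hxM.1.2.2]
        decide
      · refine le_trans (pr_mono (Q := fun _ => False) ?_) ?_
        · intro x hx hxM
          rw [hMdef, mem_filter, mem_oddF] at hxM
          exact hvW (hxM.1.1 (mem_insert_self _ _))
        · simp [pr, ex, hη0.le]
  have hbad2 : (Bd.card : ℝ) ≤ M.card / 2 := by
    have : 36 * η * ((2 * (ρ + 1)).factorial * (M.card : ℝ)) = M.card / 2 := by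
      linear_combination (M.card / 2 : ℝ) * hηf
    linarith
  -- edges at U
  set X : ℕ → Finset (Finset ℕ) := fun u =>
    (E.filter fun e => e ⊆ V \ L ∧ ∑ i ∈ e, σ i = 0).filter fun e => u ∈ e with hX
  have hXc : ∀ u ∈ U, ((X u).card : ℝ) ≤ η * ((V.card : ℝ) ^ (2 * ρ + 1) / (2 * ρ + 1).factorial) := by
    intro u hu
    have a1 := pr_deg (ι := Fin ρ ⊕ (Fin ρ ⊕ Unit)) hV (k := 2 * (ρ + 1)) (by rw [hcQ]; ring)
      (E.filter fun e => e ⊆ V \ L ∧ ∑ i ∈ e, σ i = 0) (fun e he => hE e (mem_filter.1 he).1) u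
    rw [hcQ] at a1
    have a2 : pr V (fun x : Fin ρ ⊕ (Fin ρ ⊕ Unit) → ℕ => insert u (im x) ∈
      (E.filter fun e => e ⊆ V \ L ∧ ∑ i ∈ e, σ i = 0)) ≤ η := by
      refine le_trans (pr_mono ?_) (h1 u (hUV hu))
      intro x hx hxM
      rw [mem_filter] at hxM
      rw [ind_eq_one.2 hxM.1, ← sum_insert_im (by rw [hcQ, (hE _ hxM.1).2]; ring), hxM.2.2]
      decide
    rw [mul_div_assoc', le_div_iff₀ (by positivity)]
    have a3 := mul_le_mul_of_nonneg_right a2 (show (0 : ℝ) ≤ (V.card : ℝ) ^ (2 * ρ + 1) by positivity)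
    rw [a1] at a3
    rw [mul_comm]
    exact a3
  have hXs : ((U.biUnion X).card : ℝ) ≤
      U.card * (η * ((V.card : ℝ) ^ (2 * ρ + 1) / (2 * ρ + 1).factorial)) := by
    have a1 : ((U.biUnion X).card : ℝ) ≤ ∑ u ∈ U, ((X u).card : ℝ) := by
      exact_mod_cast card_biUnion_le
    refine a1.trans ((sum_le_sum hXc).trans ?_)
    rw [sum_const, nsmul_eq_mul]
  set E1 := E.filter fun e => ¬ Disjoint e L with hE1
  set E2 := E.filter fun e => e ⊆ V \ L ∧ ∑ i ∈ e, σ i = 1 with hE2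
  have hcov : E ⊆ E1 ∪ E2 ∪ Bd ∪ U.biUnion X := by
    intro e he
    simp only [mem_union, mem_biUnion, hE1, hE2, hBd, hX, mem_filter]
    by_cases hd : Disjoint e L
    · have hs : e ⊆ V \ L := subset_sdiff.2 ⟨(hE e he).1, hd⟩
      rcases z2_cases (∑ i ∈ e, σ i) with hz | hz
      · by_cases hu : Disjoint e U
        · left; right
          exact ⟨he, subset_sdiff.2 ⟨hs, hu⟩, hz⟩
        · right
          rw [not_disjoint_iff] at hu
          obtain ⟨u, hue, huU⟩ := hu
          exact ⟨u, huU, ⟨he, hs, hz⟩, hue⟩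
      · left; left; right; exact ⟨he, hs, hz⟩
    · left; left; left; exact ⟨he, hd⟩
  have hcovc : (E.card : ℝ) ≤ E1.card + E2.card + Bd.card + (U.biUnion X).card := by
    have a1 := card_le_card hcov
    have a2 := card_union_le (E1 ∪ E2 ∪ Bd) (U.biUnion X)
    have a3 := card_union_le (E1 ∪ E2) Bd
    have a4 := card_union_le E1 E2
    exact_mod_cast (by omega : E.card ≤ E1.card + E2.card + Bd.card + (U.biUnion X).card)
  have hE1s : E1 ⊆ (powersetCard (2 * (ρ + 1)) V).filter fun e => ¬ Disjoint e L := by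
    intro e he
    rw [hE1, mem_filter] at he
    rw [mem_filter, mem_powersetCard]
    exact ⟨hE e he.1, he.2⟩
  have hmeet := card_meet L hLV (2 * (ρ + 1))
  have hE1c : (E1.card : ℝ) ≤ (V.card.choose (2 * (ρ + 1)) : ℝ) - ((V.card - L.card).choose (2 * (ρ + 1)) : ℝ) := by
    rw [← hmeet]
    exact_mod_cast card_le_card hE1s
  have hE2c : (E2.card : ℝ) + M.card ≤ (oddF (2 * (ρ + 1)) (V \ L) σ).card := by
    rw [← Nat.cast_add, ← card_union_of_disjoint]
    · have : E2 ∪ M ⊆ oddF (2 * (ρ + 1)) (V \ L) σ := by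
        apply union_subset
        · intro e he
          rw [hE2, mem_filter] at he
          rw [mem_oddF]
          exact ⟨he.2.1, (hE e he.1).2, he.2.2⟩
        · intro e he
          rw [hMdef, mem_filter, mem_oddF] at he
          rw [mem_oddF]
          exact ⟨he.1.1.trans hWVL, he.1.2⟩
      exact_mod_cast card_le_card this
    · rw [disjoint_left]
      intro e h1 h2
      exact (mem_filter.1 h2).2 (mem_filter.1 h1).1
  have hodd : ((oddF (2 * (ρ + 1)) (V \ L) σ).card : ℝ) ≤ bb (2 * (ρ + 1)) (V.card - L.card) := by
    rw [← card_sdiff_of_subset hLV]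
    exact_mod_cast le_bb
  have hM0 : (0 : ℝ) ≤ M.card := by positivity
  have hLc : L.card ≤ V.card := card_le_card hLV
  have htV : L.card + t' ≤ V.card := (Nat.le_mul_of_pos_left _ (by positivity)).trans ht
  rcases Nat.eq_zero_or_pos t' with rfl | htp
  · have hU0 : U = ∅ := by
      rw [← card_eq_zero]; omega
    rw [hU0] at hcovc
    simp only [biUnion_empty, card_empty, Nat.cast_zero, add_zero] at hcovc
    simp only [add_zero, gg] at hg
    have q1 : (M.card : ℝ) = 0 := by linarith
    have q2 : (Bd.card : ℝ) = 0 := by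
      have : (0 : ℝ) ≤ Bd.card := by positivity
      linarith
    have q3 : M = ∅ := card_eq_zero.1 (by exact_mod_cast q1)
    have q4 : Bd = ∅ := card_eq_zero.1 (by exact_mod_cast q2)
    have q5 : E1 = (powersetCard (2 * (ρ + 1)) V).filter fun e => ¬ Disjoint e L := by
      apply eq_of_subset_of_card_le hE1s
      have : (((powersetCard (2 * (ρ + 1)) V).filter fun e => ¬ Disjoint e L).card : ℝ) ≤ E1.card := by
        rw [hmeet]; linarith
      exact_mod_cast this
    have hWeq : W = V \ L := by rw [hW, hU0]; simp
    refine ⟨?_, L, hLV, rfl, σ, ?_, ?_⟩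
    · simp only [add_zero, gg]; linarith
    · intro e heV hek
      constructor
      · intro he
        by_contra hcon
        push Not at hcon
        have hz : ∑ i ∈ e, σ i = 0 := by
          rcases z2_cases (∑ i ∈ e, σ i) with hz | hz
          · exact hz
          · exact absurd hz hcon.2
        have : e ∈ Bd := by
          rw [hBd, mem_filter, hWeq]
          exact ⟨he, subset_sdiff.2 ⟨heV, hcon.1⟩, hz⟩
        rw [q4] at this
        simp at this
      · intro h
        by_cases hd : Disjoint e L
        · have hs : ∑ i ∈ e, σ i = 1 := by tauto
          by_contra hcon
          have : e ∈ M := by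
            rw [hMdef, mem_filter, mem_oddF, hWeq]
            exact ⟨⟨subset_sdiff.2 ⟨heV, hd⟩, hek, hs⟩, hcon⟩
          rw [q3] at this
          simp at this
        · have : e ∈ E1 := by
            rw [q5, mem_filter, mem_powersetCard]; exact ⟨⟨heV, hek⟩, hd⟩
          exact (mem_filter.1 this).1
    · have : ((oddF (2 * (ρ + 1)) (V \ L) σ).card : ℝ) = bb (2 * (ρ + 1)) (V.card - L.card) := by
        linarith
      rw [add_zero]
      exact_mod_cast this
  · exfalso
    have g := gain (ρ := ρ) (s := V.card - (L.card + t')) (n := V.card) (t := L.card + t')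
      (by omega) hn ht t' (by omega)
    rw [show V.card - (L.card + t') + t' = V.card - L.card by omega] at g
    unfold gg at hg
    have hUc' : (U.card : ℝ) ≤ 3 * (ρ + 1) * t' := by exact_mod_cast hUc
    have hPp : 0 < (V.card : ℝ) ^ (2 * ρ + 1) / (2 * ρ + 1).factorial := by positivity
    have e1 : (V.card : ℝ) ^ (2 * ρ + 1) / (8 * (2 * ρ + 1).factorial) =
      ((V.card : ℝ) ^ (2 * ρ + 1) / (2 * ρ + 1).factorial) / 8 := by field_simp
    rw [e1] at g
    set P := (V.card : ℝ) ^ (2 * ρ + 1) / (2 * ρ + 1).factorial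
    have htp' : (0 : ℝ) < t' := by exact_mod_cast htp
    have f1 : (U.card : ℝ) * (η * P) ≤ 3 * (ρ + 1) * t' * (η * P) := by
      gcongr
    have f2 : 3 * (ρ + 1) * t' * (η * P) ≤ t' * P / 48 := by
      have : 0 < t' * P := by positivity
      nlinarith
    have f3 : 0 < t' * P := by positivity
    linarith

end

end

section

open Finset
open scoped Classical
section
variable {V : Finset ℕ}

lemma main_prop (ρ : ℕ) : ∃ ε c : ℝ, ∃ N : ℕ, 0 < ε ∧ ε < 1 / 2 ∧ 0 < c ∧ c ≤ 1 ∧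
    ∀ (V : Finset ℕ) (E : Finset (Finset ℕ)) (t : ℕ), N ≤ V.card → (t : ℝ) ≤ c * V.card →
    (∀ e ∈ E, e ⊆ V ∧ e.card = 2 * (ρ + 1)) → ¬ Mt (ρ + 1) E (t + 1) V →
    (∀ v ∈ V, (1 / 2 - ε) * ((V.card - 1).choose (2 * ρ + 1) : ℝ) ≤
      (E.filter fun e => v ∈ e).card) →
    gg (2 * (ρ + 1)) V.card t ≤ E.card → Good (2 * (ρ + 1)) t V E := by
  have hρ : (0 : ℝ) ≤ ρ := by positivity
  obtain ⟨η, hη⟩ : ∃ η : ℝ, η = 1 / (72 * (2 * (ρ + 1)).factorial) := ⟨_, rfl⟩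
  have hη0 : 0 < η := by rw [hη]; positivity
  have hf1 : (1 : ℝ) ≤ ((2 * (ρ + 1)).factorial : ℝ) := by
    exact_mod_cast Nat.succ_le_of_lt (Nat.factorial_pos _)
  have hη1 : η ≤ 1 := by
    rw [hη, div_le_one (by positivity)]; linarith
  obtain ⟨β, hβ⟩ : ∃ β : ℝ, β = η / (24 * (ρ + 1)) := ⟨_, rfl⟩
  have hβ0 : 0 < β := by rw [hβ]; positivity
  have hβ1 : β ≤ 1 / 24 := by
    rw [hβ, div_le_iff₀ (by positivity)]; nlinarith
  obtain ⟨δ, hδ⟩ : ∃ δ : ℝ, δ = β ^ 2 / (200 * (ρ + 1)) := ⟨_, rfl⟩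
  have hδ0 : 0 < δ := by rw [hδ]; positivity
  have hδ1 : δ ≤ 1 / 1000 := by
    rw [hδ, div_le_iff₀ (by positivity)]; nlinarith
  obtain ⟨N, hN⟩ := exists_nat_ge (8 * ((ρ + 1 : ℕ) : ℝ) ^ 2 / δ)
  refine ⟨β ^ 2 / 2, δ / (12 * ((ρ + 1 : ℕ) : ℝ) ^ 2), N, by positivity, by nlinarith,
    by positivity, ?_, ?_⟩
  · rw [div_le_one (by positivity)]; push_cast; nlinarith
  intro V E t hNV ht hE hT hdeg hg
  have hNV' : (N : ℝ) ≤ V.card := by exact_mod_cast hNV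
  have h1 : 4 * ((ρ + 1 : ℕ) : ℝ) ^ 2 ≤ δ / 2 * V.card := by
    have := hN.trans hNV'
    rw [div_le_iff₀ hδ0] at this
    linarith
  have h2 : 6 * ((ρ + 1 : ℕ) : ℝ) ^ 2 * t ≤ δ / 2 * V.card := by
    rw [div_mul_eq_mul_div, le_div_iff₀ (by positivity)] at ht
    linarith
  have hp : (0 : ℝ) < V.card := by
    have : (0 : ℝ) < ((ρ + 1 : ℕ) : ℝ) ^ 2 := by positivity
    by_contra hcon
    have : (V.card : ℝ) = 0 := le_antisymm (not_lt.1 hcon) (by positivity)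
    rw [this] at h1
    linarith
  have hV : V.Nonempty := by rw [← card_pos]; exact_mod_cast hp
  have hc : (V.card.choose (2 * (ρ + 1)) : ℝ) / 2 ≤ E.card :=
    (gg_ge_half (2 * ρ + 1) V.card t).trans hg
  obtain ⟨L, hLV, σ, a1, a2, a3⟩ := local_struct hV hE hT hη0 hη1 hβ hδ h1 h2 hc hdeg
  have h3 : δ / 2 * V.card ≤ V.card / 2000 := by nlinarith
  have n1 : 1000 * ((ρ + 1 : ℕ) : ℝ) ^ 2 ≤ V.card := by linarith
  have n2 : 1000 * ((ρ + 1 : ℕ) : ℝ) ^ 2 * t ≤ V.card := by linarith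
  exact post hV hE hT (by exact_mod_cast n1) (by exact_mod_cast n2) hη hLV a1 a2 a3 hg

set_option maxHeartbeats 4000000 in
lemma core (ρ : ℕ) : ∃ c : ℝ, ∃ N : ℕ, 0 < c ∧ c ≤ 1 / 4 ∧
    ∀ (V : Finset ℕ) (E : Finset (Finset ℕ)) (t : ℕ), N ≤ V.card → (t : ℝ) ≤ c * V.card →
    (∀ e ∈ E, e ⊆ V ∧ e.card = 2 * (ρ + 1)) → ¬ Mt (ρ + 1) E (t + 1) V →
    gg (2 * (ρ + 1)) V.card t ≤ E.card → Good (2 * (ρ + 1)) t V E := by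
  obtain ⟨ε, c1, N1, hε, hε2, hc1, hc1', hmain⟩ := main_prop ρ
  obtain ⟨N2, hN2⟩ := exists_nat_ge (2 * ((N1 : ℝ) + 2 * (ρ + 1)) / ε + 8 * ((ρ : ℝ) + 1) ^ 2 + 1)
  refine ⟨c1 * (ε / 2), N2, by positivity, by nlinarith, ?_⟩
  intro V E t hNV ht hE hT hg
  have hNV' : (N2 : ℝ) ≤ V.card := by exact_mod_cast hNV
  have hq : 0 ≤ 2 * ((N1 : ℝ) + 2 * (ρ + 1)) / ε := by positivity
  have hp : (0 : ℝ) < V.card := by nlinarith [sq_nonneg ((ρ : ℝ) + 1)]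
  have hV : V.Nonempty := by rw [← card_pos]; exact_mod_cast hp
  set k := 2 * (ρ + 1) with hk
  set f : Finset ℕ → ℝ := fun S => ((E.filter fun e => e ⊆ S).card : ℝ) -
    (1 / 2 - ε) * (S.card.choose k : ℝ) with hf
  obtain ⟨S, hS, hmax⟩ := exists_max_image V.powerset f ⟨V, by simp⟩
  rw [mem_powerset] at hS
  have hEV : E.filter (fun e => e ⊆ V) = E := filter_true_of_mem fun e he => (hE e he).1
  have hfV : f V = E.card - (1 / 2 - ε) * (V.card.choose k : ℝ) := by
    simp only [hf, hEV]
  have hfS := hmax V (by simp)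
  have hgh := gg_ge_half (2 * ρ + 1) V.card t
  rw [show 2 * ρ + 1 + 1 = k by rw [hk]; ring] at hgh
  set ES := E.filter fun e => e ⊆ S with hES
  have hfSe : f S = ES.card - (1 / 2 - ε) * (S.card.choose k : ℝ) := rfl
  have hESc : (ES.card : ℝ) ≤ S.card.choose k := by
    have : ES ⊆ powersetCard k S := by
      intro e he
      rw [hES, mem_filter] at he
      rw [mem_powersetCard]; exact ⟨he.2, (hE e he.1).2⟩
    have := card_le_card this
    rw [card_powersetCard] at this
    exact_mod_cast this
  have hCS : ε * (V.card.choose k : ℝ) ≤ S.card.choose k := by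
    have : (0 : ℝ) ≤ S.card.choose k := by positivity
    nlinarith
  have hsn : ε / 2 * V.card ≤ S.card := by
    by_contra hcon
    push Not at hcon
    have a1 := choose_le S.card k
    have a2 := choose_ge hV k
    have a3 : ((k : ℕ) : ℝ) ^ 2 / V.card ≤ 1 / 2 := by
      rw [div_le_iff₀ hp, hk]; push_cast; nlinarith
    have hpw : (0 : ℝ) < (V.card : ℝ) ^ k := by positivity
    have a4 : (1 / 2) * (V.card : ℝ) ^ k ≤ k.factorial * (V.card.choose k : ℝ) :=
      le_trans (by gcongr; linarith) a2
    have hkf : (0 : ℝ) < k.factorial := by positivity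
    have a5 : ε / 2 * (V.card : ℝ) ^ k ≤ (S.card : ℝ) ^ k := by nlinarith
    have a6 : (S.card : ℝ) ^ k < (ε / 2 * V.card) ^ k :=
      pow_lt_pow_left₀ hcon (by positivity) (by omega)
    rw [mul_pow] at a6
    have a7 : (ε / 2) ^ k ≤ ε / 2 := pow_le_of_le_one (by positivity) (by linarith) (by omega)
    have a8 := mul_le_mul_of_nonneg_right a7 hpw.le
    linarith
  have hs1 : (N1 : ℝ) + 2 * (ρ + 1) ≤ S.card := by
    refine le_trans ?_ hsn
    have : 2 * ((N1 : ℝ) + 2 * (ρ + 1)) / ε ≤ V.card := by nlinarith [sq_nonneg ((ρ : ℝ) + 1)]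
    rw [div_le_iff₀ hε] at this
    linarith
  have hs2 : N1 + k ≤ S.card := by rw [hk]; exact_mod_cast hs1
  have hts : (t : ℝ) ≤ c1 * S.card := by
    refine ht.trans ?_
    rw [mul_assoc]
    gcongr
  have hts' : t ≤ S.card := by
    have : (t : ℝ) ≤ S.card := hts.trans (by nlinarith [show (0 : ℝ) ≤ S.card by positivity])
    exact_mod_cast this
  have hgm := gg_mono (2 * ρ + 1) S.card V.card t hts' (card_le_card hS)
  rw [show 2 * ρ + 1 + 1 = k by rw [hk]; ring] at hgm
  have hCSV : (S.card.choose k : ℝ) ≤ V.card.choose k := by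
    exact_mod_cast Nat.choose_le_choose k (card_le_card hS)
  have hbig : gg k S.card t + ε * ((V.card.choose k : ℝ) - S.card.choose k) ≤ ES.card := by
    nlinarith
  have hgood : Good k t S ES := by
    apply hmain S ES t (by omega) hts
    · intro e he
      rw [hES, mem_filter] at he
      exact ⟨he.2, (hE e he.1).2⟩
    · intro hM
      exact hT (Mt_mono hS (Mt_mono_E (filter_subset _ _) hM))
    · intro v hv
      have h1 := hmax (S.erase v) (by rw [mem_powerset]; exact (erase_subset _ _).trans hS)
      rw [hfSe] at h1
      simp only [hf, card_erase_of_mem hv] at h1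
      have h2 : (ES.card : ℝ) = ((E.filter fun e => e ⊆ S.erase v).card : ℝ) +
          ((ES.filter fun e => v ∈ e).card : ℝ) := by
        have h3 := card_filter_add_card_filter_not (s := ES) (fun e => v ∈ e)
        have h4 : (ES.filter fun e => v ∉ e) = E.filter fun e => e ⊆ S.erase v := by
          ext e
          simp only [hES, mem_filter, subset_erase]
          tauto
        rw [h4] at h3
        rw [← h3]; push_cast; ring
      have h5 : (S.card.choose k : ℝ) = (S.card - 1).choose (2 * ρ + 1) + (S.card - 1).choose k := by
        obtain ⟨s, hs⟩ : ∃ s, S.card = s + 1 := ⟨S.card - 1, by omega⟩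
        rw [hs, Nat.add_sub_cancel, show k = 2 * ρ + 1 + 1 by rw [hk]; ring, Nat.choose_succ_succ]
        push_cast; ring
      rw [h5] at h1
      linarith
    · nlinarith
  have hCeq : (V.card.choose k : ℝ) ≤ S.card.choose k := by
    have := hgood.1
    nlinarith
  have hSV : S = V := by
    apply eq_of_subset_of_card_le hS
    by_contra hcon
    push Not at hcon
    have h1 : (S.card + 1).choose k ≤ V.card.choose k := Nat.choose_le_choose k hcon
    have h2 : (S.card + 1).choose k = S.card.choose (2 * ρ + 1) + S.card.choose k := by
      rw [show k = 2 * ρ + 1 + 1 by rw [hk]; ring, Nat.choose_succ_succ]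
    have h3 : 0 < S.card.choose (2 * ρ + 1) := Nat.choose_pos (by omega)
    have h4 : V.card.choose k ≤ S.card.choose k := by exact_mod_cast hCeq
    omega
  have hEE : ES = E := by rw [hES, hSV, hEV]
  rw [hSV, hEE] at hgood
  exact hgood

end

end

section

open Finset
open scoped Classical

section

lemma exists_map {X A : Finset ℕ} (h : X.card = A.card) : ∃ f : ℕ → ℕ, X.image f = A := by
  let e := Finset.equivOfCardEq h
  refine ⟨fun x => if hx : x ∈ X then (e ⟨x, hx⟩ : ℕ) else 0, ?_⟩
  ext a
  simp only [mem_image]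
  constructor
  · rintro ⟨x, hx, rfl⟩
    simp only [hx, dif_pos]
    exact (e ⟨x, hx⟩).2
  · intro ha
    refine ⟨e.symm ⟨a, ha⟩, (e.symm ⟨a, ha⟩).2, ?_⟩
    simp

lemma glue3 {X Y Z A B C : Finset ℕ} (h1 : X.card = A.card) (h2 : Y.card = B.card)
    (h3 : Z.card = C.card) (hXY : Disjoint X Y) (hXZ : Disjoint X Z) (hYZ : Disjoint Y Z)
    (hAB : Disjoint A B) (hAC : Disjoint A C) (hBC : Disjoint B C) :
    ∃ f : ℕ → ℕ, X.image f = A ∧ Y.image f = B ∧ Z.image f = C ∧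
      Set.InjOn f ↑(X ∪ Y ∪ Z) := by
  obtain ⟨f1, e1⟩ := exists_map h1
  obtain ⟨f2, e2⟩ := exists_map h2
  obtain ⟨f3, e3⟩ := exists_map h3
  set f : ℕ → ℕ := fun x => if x ∈ X then f1 x else if x ∈ Y then f2 x else f3 x with hf
  have g1 : X.image f = A := by
    rw [← e1]; apply image_congr
    intro x hx
    have hx : x ∈ X := hx
    simp [hf, hx]
  have g2 : Y.image f = B := by
    rw [← e2]; apply image_congr
    intro x hx
    have hx : x ∈ Y := hx
    have hx' : x ∉ X := fun h => disjoint_left.1 hXY h hx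
    simp [hf, hx, hx']
  have g3 : Z.image f = C := by
    rw [← e3]; apply image_congr
    intro x hx
    have hx : x ∈ Z := hx
    have hx' : x ∉ X := fun h => disjoint_left.1 hXZ h hx
    have hx'' : x ∉ Y := fun h => disjoint_left.1 hYZ h hx
    simp [hf, hx', hx'']
  refine ⟨f, g1, g2, g3, ?_⟩
  rw [← Finset.card_image_iff, image_union, image_union, g1, g2, g3,
    card_union_of_disjoint (by rw [disjoint_union_left]; exact ⟨hAC, hBC⟩),
    card_union_of_disjoint hAB,
    card_union_of_disjoint (by rw [disjoint_union_left]; exact ⟨hXZ, hYZ⟩),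
    card_union_of_disjoint hXY]
  omega

lemma ET_verts (r : ℕ) : (expandedTriangle r).verts = Icc 1 (3 * r) := rfl

lemma ET_mem {r : ℕ} {e : Finset ℕ} : e ∈ (expandedTriangle r).edges ↔
    e = Icc 1 r ∪ Icc (r + 1) (2 * r) ∨ e = Icc (r + 1) (2 * r) ∪ Icc (2 * r + 1) (3 * r) ∨
      e = Icc 1 r ∪ Icc (2 * r + 1) (3 * r) := by
  have i1 : Icc 1 (2 * r) = Icc 1 r ∪ Icc (r + 1) (2 * r) := by
    ext x; simp only [mem_union, mem_Icc]; omega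
  have i2 : Icc (r + 1) (3 * r) = Icc (r + 1) (2 * r) ∪ Icc (2 * r + 1) (3 * r) := by
    ext x; simp only [mem_union, mem_Icc]; omega
  have c1 : (Icc 1 r ∪ Icc (2 * r + 1) (3 * r)).card = 2 * r := by
    rw [card_union_of_disjoint, Nat.card_Icc, Nat.card_Icc]
    · omega
    · rw [disjoint_left]; intro a; simp only [mem_Icc]; omega
  simp only [expandedTriangle, HGraph.ofEdges, mem_filter, mem_insert, mem_singleton]
  rw [← i1, ← i2]
  constructor
  · exact fun h => h.1
  · intro h
    refine ⟨h, ?_⟩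
    rcases h with rfl | rfl | rfl
    · refine ⟨?_, by rw [Nat.card_Icc]; omega⟩
      intro x; simp only [mem_Icc]; omega
    · refine ⟨?_, by rw [Nat.card_Icc]; omega⟩
      intro x; simp only [mem_Icc]; omega
    · refine ⟨?_, c1⟩
      intro x; simp only [mem_Icc, mem_union]; omega

lemma Icc3 (r : ℕ) : Icc 1 (3 * r) = Icc 1 r ∪ Icc (r + 1) (2 * r) ∪ Icc (2 * r + 1) (3 * r) := by
  ext x; simp only [mem_union, mem_Icc]; omega

lemma mem_induce {k : ℕ} {H : HGraph k} {S e : Finset ℕ} :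
    e ∈ (H.induce S).edges ↔ e ∈ H.edges ∧ e ⊆ S := by
  simp only [HGraph.induce, HGraph.ofEdges, mem_filter]
  constructor
  · exact fun h => h.1
  · exact fun h => ⟨h, subset_inter (H.edges_sub e h.1) h.2, H.edges_card e h.1⟩

lemma copy_of_tri {r : ℕ} {H : HGraph (2 * r)} {T : Finset ℕ} (hT : Tri r H.edges T) :
    (expandedTriangle r).IsCopyIn (H.induce T) := by
  obtain ⟨A, B, C, a1, a2, a3, a4, a5, a6, a7, a8, a9, rfl⟩ := hT
  obtain ⟨f, f1, f2, f3, f4⟩ := glue3 (X := Icc 1 r) (Y := Icc (r + 1) (2 * r))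
    (Z := Icc (2 * r + 1) (3 * r)) (A := A) (B := B) (C := C)
    (by rw [Nat.card_Icc]; omega) (by rw [Nat.card_Icc]; omega) (by rw [Nat.card_Icc]; omega)
    (by rw [disjoint_left]; intro a; simp only [mem_Icc]; omega)
    (by rw [disjoint_left]; intro a; simp only [mem_Icc]; omega)
    (by rw [disjoint_left]; intro a; simp only [mem_Icc]; omega) a4 a6 a5
  refine ⟨f, ?_, ?_, ?_⟩
  · rw [ET_verts, Icc3]; exact f4
  · intro v hv
    rw [ET_verts, Icc3] at hv
    have hv' := mem_image_of_mem f hv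
    rw [image_union, image_union, f1, f2, f3] at hv'
    have hs : A ∪ B ∪ C ⊆ H.verts := by
      have := H.edges_sub _ a7
      have := H.edges_sub _ a8
      have := H.edges_sub _ a9
      intro x hx
      grind
    exact mem_inter.2 ⟨hs hv', hv'⟩
  · intro e he
    rw [mem_induce]
    rcases ET_mem.1 he with rfl | rfl | rfl
    · rw [image_union, f1, f2]; refine ⟨by convert a7, ?_⟩
      intro x; simp only [mem_union]; tauto
    · rw [image_union, f2, f3]; refine ⟨by convert a8, ?_⟩
      intro x; simp only [mem_union]; tauto
    · rw [image_union, f1, f3]; refine ⟨by convert a9, ?_⟩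
      intro x; simp only [mem_union]; tauto

lemma tri_of_copy {r : ℕ} {H : HGraph (2 * r)} {S : Finset ℕ}
    (h : (expandedTriangle r).IsCopyIn (H.induce S)) : ∃ T ⊆ S, Tri r H.edges T := by
  obtain ⟨f, h1, h2, h3⟩ := h
  rw [ET_verts, Icc3] at h1
  have e1 := mem_induce.1 (h3 _ (ET_mem.2 (Or.inl rfl)))
  have e2 := mem_induce.1 (h3 _ (ET_mem.2 (Or.inr (Or.inl rfl))))
  have e3 := mem_induce.1 (h3 _ (ET_mem.2 (Or.inr (Or.inr rfl))))
  rw [image_union] at e1 e2 e3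
  have hd : ∀ X Y : Finset ℕ, X ⊆ Icc 1 r ∪ Icc (r + 1) (2 * r) ∪ Icc (2 * r + 1) (3 * r) →
      Y ⊆ Icc 1 r ∪ Icc (r + 1) (2 * r) ∪ Icc (2 * r + 1) (3 * r) → Disjoint X Y →
      Disjoint (X.image f) (Y.image f) := by
    intro X Y hX hY hXY
    rw [disjoint_left]
    intro a ha hb
    obtain ⟨x, hx, rfl⟩ := mem_image.1 ha
    obtain ⟨y, hy, hxy⟩ := mem_image.1 hb
    have := h1 (hY hy) (hX hx) hxy
    subst this
    exact disjoint_left.1 hXY hx hy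
  have sX : Icc 1 r ⊆ Icc 1 r ∪ Icc (r + 1) (2 * r) ∪ Icc (2 * r + 1) (3 * r) := by
    intro x; simp only [mem_union]; tauto
  have sY : Icc (r + 1) (2 * r) ⊆
      Icc 1 r ∪ Icc (r + 1) (2 * r) ∪ Icc (2 * r + 1) (3 * r) := by
    intro x; simp only [mem_union]; tauto
  have sZ : Icc (2 * r + 1) (3 * r) ⊆
      Icc 1 r ∪ Icc (r + 1) (2 * r) ∪ Icc (2 * r + 1) (3 * r) := by
    intro x; simp only [mem_union]; tauto
  have hc : ∀ X : Finset ℕ, X ⊆ Icc 1 r ∪ Icc (r + 1) (2 * r) ∪ Icc (2 * r + 1) (3 * r) →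
      (X.image f).card = X.card := fun X hX =>
    Finset.card_image_iff.2 (h1.mono (by exact_mod_cast hX))
  refine ⟨_, ?_, (Icc 1 r).image f, (Icc (r + 1) (2 * r)).image f,
    (Icc (2 * r + 1) (3 * r)).image f, ?_, ?_, ?_, ?_, ?_, ?_,
    by convert e1.1, by convert e2.1, by convert e3.1, rfl⟩
  · intro x hx
    simp only [mem_union] at hx
    rcases hx with (hx | hx) | hx
    · exact e1.2 (mem_union_left _ (by convert hx))
    · exact e1.2 (mem_union_right _ (by convert hx))
    · exact e2.2 (mem_union_right _ (by convert hx))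
  · rw [hc _ sX, Nat.card_Icc]; omega
  · rw [hc _ sY, Nat.card_Icc]; omega
  · rw [hc _ sZ, Nat.card_Icc]; omega
  · apply hd _ _ sX sY; rw [disjoint_left]; intro a; simp only [mem_Icc]; omega
  · apply hd _ _ sY sZ; rw [disjoint_left]; intro a; simp only [mem_Icc]; omega
  · apply hd _ _ sX sZ; rw [disjoint_left]; intro a; simp only [mem_Icc]; omega

lemma matching_of_Mt {r : ℕ} {E : Finset (Finset ℕ)} {j : ℕ} {X : Finset ℕ}
    (h : Mt r E j X) : ∃ S : Fin j → Finset ℕ, (∀ i, S i ⊆ X ∧ Tri r E (S i)) ∧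
      ∀ i i', i ≠ i' → Disjoint (S i) (S i') := by
  induction j generalizing X with
  | zero => exact ⟨fun _ => ∅, fun i => i.elim0, fun i => i.elim0⟩
  | succ j ih =>
    obtain ⟨T, h1, h2, h3⟩ := h
    obtain ⟨S, s1, s2⟩ := ih h3
    refine ⟨Fin.cons T S, ?_, ?_⟩
    · intro i
      refine Fin.cases ?_ (fun i => ?_) i
      · simpa using ⟨h1, h2⟩
      · simp only [Fin.cons_succ]
        exact ⟨(s1 i).1.trans sdiff_subset, (s1 i).2⟩
    · have hd : ∀ i, Disjoint T (S i) := fun i =>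
        (disjoint_sdiff (s := T) (t := X)).mono_right (s1 i).1
      intro i i'
      refine Fin.cases ?_ (fun i => ?_) i
      · refine Fin.cases ?_ (fun i' => ?_) i'
        · simp
        · intro _; simpa using hd i'
      · refine Fin.cases ?_ (fun i' => ?_) i'
        · intro _; simpa using (hd i).symm
        · intro hne
          simp only [Fin.cons_succ]
          exact s2 i i' (fun h => hne (by rw [h]))

lemma not_Mt {r t : ℕ} {H : HGraph (2 * r)} (h : ¬ (expandedTriangle r).HasMatching H (t + 1)) :
    ¬ Mt r H.edges (t + 1) H.verts := by
  intro hM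
  obtain ⟨S, s1, s2⟩ := matching_of_Mt hM
  refine h ⟨S, fun i => ⟨(s1 i).1, ?_⟩, s2, fun i => copy_of_tri (s1 i).2⟩
  rw [Tri_card (s1 i).2, ET_verts, Nat.card_Icc]; omega

lemma gg_le_ex (r n t : ℕ) (ht : t ≤ n) :
    gg (2 * r) n t ≤ exMatchN (2 * r) n t (expandedTriangle r) := by
  obtain ⟨V0, σ, hV0, hσ⟩ := exists_bb (2 * r) (n - t)
  obtain ⟨L, hL⟩ : ∃ L : Finset ℕ, L.card = t ∧ Disjoint L V0 := by
    obtain ⟨L, l1, l2⟩ := Infinite.exists_superset_card_eq V0 (V0.card + t) (by omega)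
    exact ⟨L \ V0, by rw [card_sdiff_of_subset l1]; omega, sdiff_disjoint⟩
  obtain ⟨hLt, hLV⟩ := hL
  set V := V0 ∪ L with hV
  have hVc : V.card = n := by
    rw [hV, card_union_of_disjoint hLV.symm]; omega
  set E := (powersetCard (2 * r) V).filter (fun e => ¬ Disjoint e L ∨ ∑ i ∈ e, σ i = 1) with hE
  let H : HGraph (2 * r) := ⟨V, E, fun e he => (mem_powersetCard.1 (mem_filter.1 he).1).1,
    fun e he => (mem_powersetCard.1 (mem_filter.1 he).1).2⟩
  have hno : ¬ (expandedTriangle r).HasMatching H (t + 1) := by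
    rintro ⟨S, s1, s2, s3⟩
    have hit : ∀ i, ∃ v ∈ L, v ∈ S i := by
      intro i
      obtain ⟨T, hTS, A, B, C, a1, a2, a3, a4, a5, a6, a7, a8, a9, hT⟩ := tri_of_copy (s3 i)
      by_contra hcon
      push Not at hcon
      have key : ∀ e ∈ E, e ⊆ T → e ∈ oddF (2 * r) V σ := by
        intro e he heT
        obtain ⟨he1, he2⟩ := mem_filter.1 he
        have hd : Disjoint e L := by
          rw [disjoint_left]; intro a ha haL
          exact hcon a haL (hTS (heT ha))
        rw [mem_oddF]
        exact ⟨(mem_powersetCard.1 he1).1, (mem_powersetCard.1 he1).2,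
          he2.resolve_left (by simpa using hd)⟩
      refine oddF_free (k := 2 * r) (V := V) (σ := σ) (r := r) T
        ⟨A, B, C, a1, a2, a3, a4, a5, a6, key _ a7 ?_, key _ a8 ?_, key _ a9 ?_, hT⟩ <;>
      · rw [hT]; intro x; simp only [mem_union]; tauto
    choose v hvL hvS using hit
    have hinj : Function.Injective v := by
      intro i j hij
      by_contra hne
      exact disjoint_left.1 (s2 i j hne) (hvS i) (hij ▸ hvS j)
    have := Finset.card_le_card_of_injOn (s := (univ : Finset (Fin (t + 1)))) (t := L) v
      (fun i _ => hvL i) hinj.injOn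
    simp only [card_univ, Fintype.card_fin] at this
    omega
  have hcard : (E.card : ℝ) = gg (2 * r) n t := by
    have h1 := card_meet (V := V) L subset_union_right (2 * r)
    have h2 : E.card = ((powersetCard (2 * r) V).filter (fun e => ¬ Disjoint e L)).card +
        (oddF (2 * r) V0 σ).card := by
      rw [← card_union_of_disjoint]
      · congr 1
        ext e
        simp only [hE, mem_union, mem_filter, mem_powersetCard, mem_oddF]
        constructor
        · rintro ⟨⟨b1, b2⟩, b3⟩
          by_cases hd : Disjoint e L
          · right
            refine ⟨?_, b2, b3.resolve_left (by simpa using hd)⟩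
            intro x hx
            rcases mem_union.1 (b1 hx) with h | h
            · exact h
            · exact absurd h (disjoint_left.1 hd hx)
          · exact Or.inl ⟨⟨b1, b2⟩, hd⟩
        · rintro (⟨b1, b2⟩ | ⟨b1, b2, b3⟩)
          · exact ⟨b1, Or.inl b2⟩
          · exact ⟨⟨b1.trans subset_union_left, b2⟩, Or.inr b3⟩
      · rw [disjoint_left]
        intro e he he'
        rw [mem_oddF] at he'
        exact (mem_filter.1 he).2 (hLV.symm.mono_left he'.1)
    rw [h2]
    push_cast
    rw [h1, hσ, hVc, hLt, gg]
  rw [← hcard]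
  have hle : E.card ≤ exMatchN (2 * r) n t (expandedTriangle r) := by
    refine le_csSup ⟨n.choose (2 * r), ?_⟩ ⟨H, hVc, hno, rfl⟩
    rintro m ⟨G, g1, -, rfl⟩
    rw [← g1, ← card_powersetCard]
    exact card_le_card fun e he => mem_powersetCard.2 ⟨G.edges_sub e he, G.edges_card e he⟩
  exact_mod_cast hle

end

end

section

open Finset
open scoped Classical

section

open Polynomial in
lemma kraw_deriv {V : Finset ℕ} {χ : ℕ → ℝ} (h : ∀ v ∈ V, χ v ^ 2 = 1) :
    (1 - X ^ 2) * derivative (∏ v ∈ V, (1 + C (χ v) * X)) =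
      (∏ v ∈ V, (1 + C (χ v) * X)) * (C (∑ v ∈ V, χ v) - C (V.card : ℝ) * X) := by
  induction V using Finset.induction_on with
  | empty => simp
  | insert a V ha ih =>
    have ih := ih (fun v hv => h v (mem_insert_of_mem hv))
    have hc : (C (χ a) : ℝ[X]) ^ 2 = 1 := by
      rw [← C_pow, h a (mem_insert_self _ _), C_1]
    rw [prod_insert ha, sum_insert ha, card_insert_of_notMem ha, derivative_mul]
    simp only [derivative_add, derivative_one, derivative_mul, derivative_C, derivative_X,
      C_add, Nat.cast_add, Nat.cast_one, C_1]
    linear_combination (1 + C (χ a) * X) * ih -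
      X * (∏ v ∈ V, (1 + C (χ v) * X)) * hc

/-- Signed count of the `j`-subsets. -/
noncomputable def kraw (V : Finset ℕ) (χ : ℕ → ℝ) (j : ℕ) : ℝ :=
  ∑ S ∈ powersetCard j V, ∏ v ∈ S, χ v

open Polynomial in
lemma kraw_coeff {V : Finset ℕ} {χ : ℕ → ℝ} (j : ℕ) :
    (∏ v ∈ V, (1 + C (χ v) * X)).coeff j = kraw V χ j := by
  rw [Finset.prod_one_add, finsetSum_coeff, kraw, powersetCard_eq_filter, sum_filter]
  refine sum_congr rfl fun S _ => ?_
  rw [prod_mul_distrib, prod_const, ← map_prod, coeff_C_mul, coeff_X_pow]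
  by_cases h : S.card = j
  · simp [h]
  · simp [h, Ne.symm h]

open Polynomial in
lemma kraw_rec {V : Finset ℕ} {χ : ℕ → ℝ} (h : ∀ v ∈ V, χ v ^ 2 = 1) (j : ℕ) :
    ((j : ℝ) + 2) * kraw V χ (j + 2) =
      (∑ v ∈ V, χ v) * kraw V χ (j + 1) - ((V.card : ℝ) - j) * kraw V χ j := by
  have h0 := congrArg (fun p : ℝ[X] => p.coeff (j + 1)) (kraw_deriv h)
  set P := ∏ v ∈ V, (1 + C (χ v) * X) with hP
  have e1 : (1 - X ^ 2) * derivative P = derivative P - derivative P * X * X := by ring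
  have e2 : P * (C (∑ v ∈ V, χ v) - C (V.card : ℝ) * X) =
      C (∑ v ∈ V, χ v) * P - C (V.card : ℝ) * (P * X) := by ring
  simp only [e1, e2, coeff_sub, coeff_C_mul, coeff_mul_X, coeff_derivative] at h0
  have e3 : (derivative P * X).coeff j = j * kraw V χ j := by
    cases j with
    | zero => simp
    | succ j =>
      rw [coeff_mul_X, coeff_derivative, hP, kraw_coeff]; push_cast; ring
  rw [e3, hP, kraw_coeff, kraw_coeff, kraw_coeff] at h0
  push_cast at h0
  linear_combination h0

lemma kraw_zero {V : Finset ℕ} {χ : ℕ → ℝ} : kraw V χ 0 = 1 := by simp [kraw]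

lemma kraw_one {V : Finset ℕ} {χ : ℕ → ℝ} : kraw V χ 1 = ∑ v ∈ V, χ v := by
  simp [kraw, powersetCard_one]

lemma kraw_pos {V : Finset ℕ} {χ : ℕ → ℝ} (h : ∀ v ∈ V, χ v ^ 2 = 1) {K : ℕ}
    (hs : 0 < ∑ v ∈ V, χ v) (hK : 4 * ((K : ℝ) - 1) * V.card ≤ (∑ v ∈ V, χ v) ^ 2) (j : ℕ)
    (hj : j + 1 ≤ K) : 0 < kraw V χ j ∧
      (∑ v ∈ V, χ v) * kraw V χ j ≤ 2 * ((j : ℝ) + 1) * kraw V χ (j + 1) := by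
  induction j with
  | zero =>
    rw [kraw_zero, zero_add, kraw_one]
    refine ⟨one_pos, ?_⟩
    push_cast; linarith
  | succ j ih =>
    obtain ⟨i1, i2⟩ := ih (by omega)
    have hrec := kraw_rec h j
    set s := ∑ v ∈ V, χ v
    have hj0 : (0 : ℝ) ≤ j := by positivity
    have hjK : (j : ℝ) + 2 ≤ K := by exact_mod_cast hj
    have p1 : 0 < kraw V χ (j + 1) := by
      by_contra hcon
      push Not at hcon
      have := mul_pos hs i1
      nlinarith
    refine ⟨p1, ?_⟩
    have hN : (0 : ℝ) ≤ V.card := by positivity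
    have b1 : 4 * ((j : ℝ) + 1) * V.card ≤ s ^ 2 := by nlinarith
    have b2 : ((V.card : ℝ) - j) * kraw V χ j ≤ V.card * kraw V χ j := by nlinarith
    have b3 : s * (V.card * kraw V χ j) ≤ s * (s * kraw V χ (j + 1) / 2) := by
      nlinarith [mul_le_mul_of_nonneg_left i2 hN, mul_le_mul_of_nonneg_right b1 p1.le]
    have b4 := le_of_mul_le_mul_left b3 hs
    push_cast
    rw [show j + 1 + 1 = j + 2 from rfl]
    nlinarith

/-- Counting odd edges. -/
lemma oddF_kraw {V : Finset ℕ} {σ : ℕ → ZMod 2} (r : ℕ) :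
    kraw V (fun v => if σ v = 1 then (1 : ℝ) else -1) (2 * r) =
      (V.card.choose (2 * r) : ℝ) - 2 * (oddF (2 * r) V σ).card := by
  have h1 : (oddF (2 * r) V σ).card =
      ∑ S ∈ powersetCard (2 * r) V, if ∑ i ∈ S, σ i = 1 then 1 else 0 := by
    rw [← card_filter]
    congr 1
  rw [h1, kraw, ← card_powersetCard, card_eq_sum_ones]
  push_cast
  rw [mul_sum, ← sum_sub_distrib]
  refine sum_congr rfl fun S hS => ?_
  have hS2 := (mem_powersetCard.1 hS).2
  have h2 : ∀ S : Finset ℕ, (∏ v ∈ S, if σ v = 1 then (1 : ℝ) else -1) =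
      (-1) ^ S.card * (if ∑ i ∈ S, σ i = 1 then -1 else 1) := by
    intro S
    induction S using Finset.induction_on with
    | empty => simp
    | insert a S ha ih =>
      rw [prod_insert ha, sum_insert ha, card_insert_of_notMem ha, ih, pow_succ]
      rcases z2_cases (σ a) with h | h <;>
      rcases z2_cases (∑ i ∈ S, σ i) with h' | h' <;>
      simp [h, h', show (1 : ZMod 2) + 1 = 0 from rfl]
  rw [h2, hS2, pow_mul]
  split_ifs <;> norm_num

lemma m_bound {r N m : ℕ} {W : Finset ℕ} {σ : ℕ → ZMod 2} (hr : 1 ≤ r) (hW : W.card = N)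
    (hb : (oddF (2 * r) W σ).card = bb (2 * r) N)
    (hm : (W.filter (fun v => σ v = 1)).card = N / 2 + m) :
    (m : ℝ) ≤ Real.sqrt ((2 * r : ℝ) * (N : ℝ)) := by
  apply Real.le_sqrt_of_sq_le
  set χ : ℕ → ℝ := fun v => if σ v = 1 then (1 : ℝ) else -1 with hχ
  have hχ2 : ∀ v ∈ W, χ v ^ 2 = 1 := by
    intro v _; simp only [hχ]; split_ifs <;> norm_num
  set a := (W.filter (fun v => σ v = 1)).card with ha
  have haN : a ≤ N := hW ▸ card_filter_le _ _
  have hs : ∑ v ∈ W, χ v = 2 * (a : ℝ) - N := by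
    have h1 : ∀ v ∈ W, χ v = 2 * (if σ v = 1 then (1 : ℝ) else 0) - 1 := by
      intro v _; simp only [hχ]; split_ifs <;> norm_num
    rw [sum_congr rfl h1, sum_sub_distrib, ← mul_sum, ha, card_filter]
    push_cast
    simp [hW]
  have hk := oddF_kraw (V := W) (σ := σ) r
  have hbb : ((N.choose (2 * r) : ℕ) : ℝ) / 2 ≤ bb (2 * r) N := by
    obtain ⟨K, hK⟩ : ∃ K, 2 * r = K + 1 := ⟨2 * r - 1, by omega⟩
    rw [hK]; exact bb_half K N
  rw [hb, hW] at hk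
  have hk0 : kraw W χ (2 * r) ≤ 0 := by rw [hk]; linarith
  have hm1 : 2 * m ≤ 2 * a - N + 1 := by omega
  rcases Nat.eq_zero_or_pos m with h0 | h0
  · subst h0; simp; positivity
  have hsn : N + 1 ≤ 2 * a := by omega
  have hspos : 0 < ∑ v ∈ W, χ v := by
    rw [hs]
    have : ((N + 1 : ℕ) : ℝ) ≤ ((2 * a : ℕ) : ℝ) := by exact_mod_cast hsn
    push_cast at this; linarith
  have hlt : (∑ v ∈ W, χ v) ^ 2 < 4 * (((2 * r : ℕ) : ℝ) - 1) * W.card := by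
    by_contra hcon
    push Not at hcon
    have := kraw_pos hχ2 hspos hcon (2 * r - 1) (by omega)
    obtain ⟨p1, p2⟩ := this
    rw [show 2 * r - 1 + 1 = 2 * r by omega] at p2
    have := mul_pos hspos p1
    have : (0 : ℝ) ≤ ((2 * r - 1 : ℕ) : ℝ) := by positivity
    nlinarith
  rw [hs, hW] at hlt
  -- integer version
  have hz : (2 * (a : ℤ) - N) ^ 2 < 4 * ((2 * r : ℤ) - 1) * N := by
    have : (((2 * (a : ℤ) - N) ^ 2 : ℤ) : ℝ) < ((4 * ((2 * r : ℤ) - 1) * N : ℤ) : ℝ) := by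
      push_cast; push_cast at hlt; exact hlt
    exact_mod_cast this
  have hm2 : 2 * (m : ℤ) ≤ 2 * a - N + 1 := by omega
  have haN' : 2 * (a : ℤ) - N ≤ N := by omega
  have hfin : (m : ℤ) ^ 2 ≤ 2 * r * N := by
    have hsq : (2 * (m : ℤ)) ^ 2 ≤ (2 * a - N + 1) ^ 2 := pow_le_pow_left₀ (by positivity) hm2 2
    nlinarith
  exact_mod_cast hfin

end

end

section

open Finset
open scoped Classical

section

lemma sum_flip {r : ℕ} {σ : ℕ → ZMod 2} {e : Finset ℕ} (he : e.card = 2 * r) :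
    ∑ i ∈ e, (σ i + 1) = ∑ i ∈ e, σ i := by
  rw [sum_add_distrib, sum_const, he]
  simp [show (2 : ZMod 2) = 0 from rfl]

lemma z2_sum_odd {σ : ℕ → ZMod 2} (e : Finset ℕ) :
    ∑ i ∈ e, σ i = 1 ↔ Odd (e.filter (fun v => σ v = 1)).card := by
  have h : ∑ i ∈ e, σ i = ((e.filter (fun v => σ v = 1)).card : ZMod 2) := by
    rw [card_filter]
    push_cast
    refine sum_congr rfl fun i _ => ?_
    rcases z2_cases (σ i) with h | h <;> simp [h]
  rw [h, ZMod.natCast_eq_one_iff_odd]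

lemma good_wlog {r t : ℕ} {V : Finset ℕ} {E : Finset (Finset ℕ)} (hG : Good (2 * r) t V E) :
    ∃ L ⊆ V, L.card = t ∧ ∃ σ : ℕ → ZMod 2,
    (∀ e ⊆ V, e.card = 2 * r → (e ∈ E ↔ ¬ Disjoint e L ∨ ∑ i ∈ e, σ i = 1)) ∧
    (oddF (2 * r) (V \ L) σ).card = bb (2 * r) (V.card - t) ∧
    ((V \ L).filter (fun v => ¬ σ v = 1)).card ≤ ((V \ L).filter (fun v => σ v = 1)).card := by
  obtain ⟨-, L, hLV, hL, σ, h1, h2⟩ := hG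
  refine ⟨L, hLV, hL, ?_⟩
  rcases le_total ((V \ L).filter (fun v => ¬ σ v = 1)).card
    ((V \ L).filter (fun v => σ v = 1)).card with h | h
  · exact ⟨σ, h1, h2, h⟩
  · refine ⟨fun v => σ v + 1, ?_, ?_, ?_⟩
    · intro e he hc
      rw [h1 e he hc, sum_flip hc]
    · rw [← h2]
      congr 1
      ext e
      rw [mem_oddF, mem_oddF]
      constructor
      · rintro ⟨a, b, c⟩; rw [sum_flip b] at c; exact ⟨a, b, c⟩
      · rintro ⟨a, b, c⟩; rw [← sum_flip b] at c; exact ⟨a, b, c⟩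
    · have hi : ∀ v, σ v + 1 = 1 ↔ ¬ σ v = 1 := by
        intro v; rcases z2_cases (σ v) with h | h <;> simp [h]
      simp only [hi, not_not]
      exact h

lemma mem_join {k t p n : ℕ} (htp : t ≤ p) (hpn : p ≤ n) {g : Finset ℕ} (hg : g ⊆ range n)
    (hc : g.card = k) (hk : 0 < k) : g ∈ ((completeOn k (range t)).join
      (oddCross k (Ico t p) (Ico p n))).edges ↔
      ¬ Disjoint g (range t) ∨ Odd (g ∩ Ico t p).card := by
  have hU : Ico t p ∪ Ico p n = Ico t n := by
    ext x; simp only [mem_union, mem_Ico]; omega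
  have hU2 : range t ∪ Ico t n = range n := by
    ext x; simp only [mem_union, mem_Ico, mem_range]; omega
  simp only [HGraph.join, completeOn, oddCross, HGraph.ofEdges, mem_filter, mem_union, hU, hU2,
    mem_powersetCard, hg, hc, and_true, true_and]
  rw [not_disjoint_iff_nonempty_inter]
  constructor
  · rintro ((h | h) | h)
    · left
      rw [inter_eq_left.2 h.1, ← card_pos]; omega
    · right; convert h.1.2
    · left; convert h.1
  · intro h
    by_cases hne : (g ∩ range t).Nonempty
    · by_cases hn2 : (g ∩ Ico t n).Nonempty
      · right; exact ⟨by convert hne, by convert hn2⟩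
      · left; left
        suffices hs : g ⊆ range t from ⟨hs, hs⟩
        intro x hx
        rw [not_nonempty_iff_eq_empty] at hn2
        have h1 := hg hx
        have h2 : x ∉ g ∩ Ico t n := by rw [hn2]; simp
        simp only [mem_inter, mem_Ico, mem_range, hx, true_and] at h1 h2 ⊢
        omega
    · left; right
      have hs : g ⊆ Ico t n := by
        intro x hx
        rw [not_nonempty_iff_eq_empty] at hne
        have h1 := hg hx
        have h2 : x ∉ g ∩ range t := by rw [hne]; simp
        simp only [mem_inter, mem_Ico, mem_range, hx, true_and] at h1 h2 ⊢
        omega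
      exact ⟨⟨hs, by convert h.resolve_left hne⟩, hs⟩

lemma final_iso {r n t : ℕ} (hr : 1 ≤ r) (ht : t ≤ n) (H : HGraph (2 * r))
    (hn : H.verts.card = n) (hG : Good (2 * r) t H.verts H.edges) :
    ∃ m : ℕ, (m : ℝ) ≤ Real.sqrt ((2 * r : ℝ) * ((n - t : ℕ) : ℝ)) ∧
      H.Iso ((completeOn (2*r) (Finset.range t)).join
        (oddCross (2*r) (Finset.Ico t (t + (n - t) / 2 + m))
          (Finset.Ico (t + (n - t) / 2 + m) n))) := by
  obtain ⟨L, hLV, hL, σ, h1, h2, h3⟩ := good_wlog hG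
  set V := H.verts with hV
  set V1 := (V \ L).filter (fun v => σ v = 1) with hV1
  set V2 := (V \ L).filter (fun v => ¬ σ v = 1) with hV2
  have hW : (V \ L).card = n - t := by rw [card_sdiff_of_subset hLV, hn, hL]
  have h12 : V1.card + V2.card = n - t := by
    rw [← hW]; exact card_filter_add_card_filter_not _
  obtain ⟨m, hm⟩ : ∃ m, V1.card = (n - t) / 2 + m := ⟨V1.card - (n - t) / 2, by omega⟩
  rw [hn] at h2
  refine ⟨m, m_bound hr hW h2 hm, ?_⟩
  set p := t + (n - t) / 2 + m with hp
  have htp : t ≤ p := by omega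
  have hpn : p ≤ n := by omega
  have dL1 : Disjoint L V1 := disjoint_sdiff.mono_right (filter_subset _ _)
  have dL2 : Disjoint L V2 := disjoint_sdiff.mono_right (filter_subset _ _)
  have d12 : Disjoint V1 V2 := disjoint_filter_filter_not _ _ _
  obtain ⟨f, f1, f2, f3, f4⟩ := glue3 (X := L) (Y := V1) (Z := V2) (A := range t)
    (B := Ico t p) (C := Ico p n) (by rw [hL, card_range]) (by rw [Nat.card_Ico]; omega)
    (by rw [Nat.card_Ico]; omega) dL1 dL2 d12
    (by rw [disjoint_left]; intro a; simp only [mem_range, mem_Ico]; omega)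
    (by rw [disjoint_left]; intro a; simp only [mem_range, mem_Ico]; omega)
    (by rw [disjoint_left]; intro a; simp only [mem_Ico]; omega)
  have hVU : L ∪ V1 ∪ V2 = V := by
    rw [union_assoc, hV1, hV2, filter_union_filter_not_eq, union_sdiff_of_subset hLV]
  rw [hVU] at f4
  have hVim : V.image f = range n := by
    rw [← hVU, image_union, image_union, f1, f2, f3]
    ext x; simp only [mem_union, mem_range, mem_Ico]; omega
  refine ⟨f, ?_, ?_⟩
  · have hv : ((completeOn (2*r) (Finset.range t)).join
        (oddCross (2*r) (Finset.Ico t p) (Finset.Ico p n))).verts = range n := by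
      ext x
      simp only [HGraph.join, completeOn, oddCross, HGraph.ofEdges, mem_union, mem_range, mem_Ico]
      omega
    rw [hv]
    refine ⟨?_, f4, ?_⟩
    · intro x hx
      have : f x ∈ V.image f := mem_image_of_mem f hx
      rw [hVim] at this; exact this
    · intro y hy
      have hy : y ∈ V.image f := by rw [hVim]; exact hy
      obtain ⟨x, hx, rfl⟩ := mem_image.1 hy
      exact ⟨x, hx, rfl⟩
  · intro e he
    obtain ⟨heV, hec⟩ := mem_powersetCard.1 he
    have hfinj : Set.InjOn f ↑e := f4.mono (by exact_mod_cast heV)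
    have hpull : ∀ A ⊆ V, ∀ x ∈ V, f x ∈ A.image f → x ∈ A := by
      intro A hA x hx hf
      obtain ⟨y, hy, hxy⟩ := mem_image.1 hf
      have := f4 (hA hy) hx hxy
      exact this ▸ hy
    have hV1V : V1 ⊆ V := (filter_subset _ _).trans sdiff_subset
    have hg : e.image f ⊆ range n := by rw [← hVim]; exact image_subset_image heV
    have hgc : (e.image f).card = 2 * r := by rw [card_image_of_injOn hfinj, hec]
    have hj := mem_join htp hpn hg hgc (by omega)
    have k1 : Disjoint (e.image f) (range t) ↔ Disjoint e L := by
      rw [disjoint_left, disjoint_left]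
      constructor
      · intro h a ha haL
        refine h (mem_image_of_mem f ha) ?_
        rw [← f1]; exact mem_image_of_mem f haL
      · intro h b hb hbt
        obtain ⟨a, ha, rfl⟩ := mem_image.1 hb
        rw [← f1] at hbt
        exact h ha (hpull L hLV a (heV ha) hbt)
    have k2 : (e.image f ∩ Ico t p).card = (e ∩ V1).card := by
      have : e.image f ∩ Ico t p = (e ∩ V1).image f := by
        ext b
        simp only [mem_inter, mem_image]
        constructor
        · rintro ⟨⟨a, ha, rfl⟩, hb⟩
          rw [← f2] at hb
          exact ⟨a, ⟨ha, hpull V1 hV1V a (heV ha) hb⟩, rfl⟩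
        · rintro ⟨a, ⟨ha, ha1⟩, rfl⟩
          refine ⟨⟨a, ha, rfl⟩, ?_⟩
          rw [← f2]; exact mem_image_of_mem f ha1
      rw [this, card_image_of_injOn]
      exact hfinj.mono (by intro x hx; exact (mem_inter.1 hx).1)
    rw [k1, k2] at hj
    rw [h1 e heV hec]
    have key : (¬ Disjoint e L ∨ ∑ i ∈ e, σ i = 1) ↔ (¬ Disjoint e L ∨ Odd (e ∩ V1).card) := by
      by_cases hd : Disjoint e L
      · have : e.filter (fun v => σ v = 1) = e ∩ V1 := by
          ext x
          simp only [hV1, mem_filter, mem_inter, Finset.mem_sdiff]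
          constructor
          · rintro ⟨a, b⟩; exact ⟨a, ⟨heV a, disjoint_left.1 hd a⟩, b⟩
          · rintro ⟨a, _, b⟩; exact ⟨a, b⟩
        rw [z2_sum_odd, this]
      · simp [hd]
    rw [key, ← hj]

lemma statement_aux (r : ℕ) (hr : 2 ≤ r) :
    ∃ N₀ : ℕ, ∃ c : ℝ, 0 < c ∧ ∀ n : ℕ, N₀ ≤ n → ∀ t : ℕ, (t : ℝ) ≤ c * n →
      ∀ H : HGraph (2*r), IsExtremalMatchingFree (2*r) n t (expandedTriangle r) H →
        ∃ m : ℕ, (m : ℝ) ≤ Real.sqrt ((2 * r : ℝ) * ((n - t : ℕ) : ℝ)) ∧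
          H.Iso ((completeOn (2*r) (Finset.range t)).join
            (oddCross (2*r) (Finset.Ico t (t + (n - t) / 2 + m))
              (Finset.Ico (t + (n - t) / 2 + m) n))) := by
  obtain ⟨ρ, rfl⟩ : ∃ ρ, r = ρ + 1 := ⟨r - 1, by omega⟩
  obtain ⟨c, N, hc, hc4, hcore⟩ := core ρ
  refine ⟨N, c, hc, ?_⟩
  intro n hn t ht H ⟨H1, H2, H3⟩
  have htn : t ≤ n := by
    have h0 : (0 : ℝ) ≤ n := by positivity
    have : (t : ℝ) ≤ n := by nlinarith
    exact_mod_cast this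
  refine final_iso (by omega) htn H H1 ?_
  refine hcore H.verts H.edges t (by omega) (by rw [H1]; exact ht)
    (fun e he => ⟨H.edges_sub e he, H.edges_card e he⟩) (not_Mt H2) ?_
  rw [H1, H3]
  exact gg_le_ex _ _ _ htn

end

end

/-- extremal constructions for the expanded triangle are contained
in joins of a clique with the graphs `B_{2r}^{odd}(n−t, m)`, `0 ≤ m ≤ √(2r(n−t))`. -/
theorem statement_14 (r : ℕ) (hr : 2 ≤ r) :
    ∃ N₀ : ℕ, ∃ c : ℝ, 0 < c ∧ ∀ n : ℕ, N₀ ≤ n → ∀ t : ℕ, (t : ℝ) ≤ c * n →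
      ∀ H : HGraph (2*r), IsExtremalMatchingFree (2*r) n t (expandedTriangle r) H →
        ∃ m : ℕ, (m : ℝ) ≤ Real.sqrt ((2 * r : ℝ) * ((n - t : ℕ) : ℝ)) ∧
          H.Iso ((completeOn (2*r) (Finset.range t)).join
            (oddCross (2*r) (Finset.Ico t (t + (n - t) / 2 + m))
              (Finset.Ico (t + (n - t) / 2 + m) n))) := by
  exact statement_aux r hr

end DensityCH
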